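/- arXiv:2006.07850 — 5 statements merged into one kernel-verified Lean document; each statement's English description precedes it below -/
import Mathlib

section
/- Let T be a weakly almost periodic operator on a complex Banach space X with σ(T) ∩ 𝕋 countable, where 𝕋 = {λ ∈ ℂ : |λ| = 1}. Then X decomposes as a direct sum X = Y ⊕ X₀ of two closed T-invariant subspaces, where Y is the closed linear span of the set of eigenvectors of T with unimodular eigenvalues, Y = clm{y ∈ X : T y = λ y for some λ with |λ| = 1}, and X₀ = {z ∈ X : ‖Tⁿ z‖ → 0}; i.e., Y ∩ X₀ = {0} and Y + X₀ = X. -/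
open Filter

theorem aux_growth {E : Type*} [NormedAddCommGroup E] [NormedSpace ℂ E]
    (F : ℂ → E) (ρ C : ℝ)
    (hd : ∀ z : ℂ, z ≠ 0 → ‖z‖ < ρ → DifferentiableAt ℂ F z)
    (hb : ∀ z : ℂ, z ≠ 0 → ‖z‖ < ρ → |z.im| * ‖F z‖ ≤ C) (z : ℂ) (hz0 : z ≠ 0)
    (hz : ‖z‖ < ρ / 2) : ‖z‖ * ‖F z‖ ≤ 4 * C := by
  have hzn : 0 < ‖z‖ := norm_pos_iff.2 hz0
  have hF := norm_nonneg (F z)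
  have hC : 0 ≤ C := le_trans (by positivity) (hb z hz0 (by linarith))
  have hzle := Complex.norm_le_abs_re_add_abs_im z
  have hre := Complex.abs_re_le_norm z
  by_cases h : |z.re| / 2 ≤ |z.im|
  · have h1 := hb z hz0 (by linarith)
    have : ‖z‖ ≤ 3 * |z.im| := by linarith
    nlinarith
  · push Not at h
    set a := z.re with ha
    set s := |a| * (3/4) with hs
    have him0 := abs_nonneg z.im
    have hapos : 0 < |a| := by linarith
    have hspos : 0 < s := by positivity
    have hin : ∀ w ∈ Metric.closedBall (a : ℂ) s, w ≠ 0 ∧ ‖w‖ < ρ := by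
      intro w hw
      rw [Metric.mem_closedBall, dist_eq_norm] at hw
      have e1 : ‖(a : ℂ)‖ = |a| := by simp
      constructor
      · rintro rfl
        simp at hw
        linarith
      · have : ‖w‖ ≤ ‖w - a‖ + ‖(a : ℂ)‖ := by simpa using norm_add_le (w - a) (a : ℂ)
        linarith
    have hzin : z ∈ Metric.ball (a : ℂ) s := by
      rw [Metric.mem_ball, dist_eq_norm]
      have : z - a = z.im * Complex.I := by
        apply Complex.ext <;> simp [ha]
      rw [this]; simp; linarith
    let G : ℂ → E := fun w => ((w - a)^2 - (s:ℂ)^2) • F w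
    have hG : DiffContOnCl ℂ G (Metric.ball (a : ℂ) s) := by
      apply DifferentiableOn.diffContOnCl
      intro w hw
      have hw' := hin w (Metric.closure_ball_subset_closedBall hw)
      have := hd w hw'.1 hw'.2
      apply DifferentiableAt.differentiableWithinAt
      fun_prop
    have key := Complex.norm_le_of_forall_mem_frontier_norm_le (C := 2 * s * C) Metric.isBounded_ball hG
      (by
        intro w hw
        rw [frontier_ball _ hspos.ne'] at hw
        have hw' := hin w (Metric.sphere_subset_closedBall hw)
        have hbw := hb w hw'.1 hw'.2
        have hws : ‖w - a‖ = s := by simpa [dist_eq_norm] using hw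
        have h2 : (w.re - a)^2 + w.im^2 = s^2 := by
          rw [← hws, ← Complex.normSq_eq_norm_sq, Complex.normSq_apply]; simp; ring
        have h3 : (w - a)^2 - (s:ℂ)^2 = (2 * w.im : ℝ) * Complex.I * (w - a) := by
          have h2' : ((s : ℂ))^2 = ((w.re - a)^2 + w.im^2 : ℝ) := by rw [h2]; push_cast; ring
          rw [h2']
          apply Complex.ext <;> simp [pow_two] <;> ring
        have h4 : ‖(w - a)^2 - (s:ℂ)^2‖ = 2 * |w.im| * s := by
          rw [h3, norm_mul, hws]; simp
        simp only [G]
        rw [norm_smul, h4]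
        nlinarith) (subset_closure hzin)
    have h5 : ‖(z - a)^2 - (s:ℂ)^2‖ = s^2 + z.im^2 := by
      have : (z - a)^2 - (s:ℂ)^2 = ((-(s^2 + z.im^2) : ℝ) : ℂ) := by
        apply Complex.ext <;> simp [pow_two, ha]
        ring
      rw [this, Complex.norm_real, Real.norm_eq_abs, abs_neg, abs_of_nonneg (by positivity)]
    simp only [G] at key
    rw [norm_smul, h5] at key
    have h6 : s * ‖F z‖ ≤ 2 * C := by
      have : s * (s * ‖F z‖) ≤ s * (2 * C) := by nlinarith [mul_nonneg (sq_nonneg z.im) hF]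
      exact le_of_mul_le_mul_left this hspos
    have h7 : ‖z‖ ≤ 2 * s := by linarith
    nlinarith

theorem aux_isolated {S : Set ℂ} (hc : IsClosed S) (hne : S.Nonempty) (hS : S.Countable) :
    ∃ l ∈ S, ∀ᶠ z in nhdsWithin l {l}ᶜ, z ∉ S := by
  by_contra hcon
  push Not at hcon
  have hp : Perfect S := by
    refine ⟨hc, ?_⟩
    intro l hl
    rw [accPt_iff_frequently_nhdsNE]
    exact hcon l hl
  obtain ⟨f, hf, -, hi⟩ := hp.exists_nat_bool_injection hne
  have : (Set.range f).Countable := hS.mono hf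
  have h2 : (Set.univ : Set (ℕ → Bool)).Countable :=
    (this.preimage_of_injOn hi.injOn).mono (by intro x _; exact Set.mem_range_self x)
  rw [← Cardinal.le_aleph0_iff_set_countable] at h2
  simp at h2
  exact absurd h2 (not_le.2 Cardinal.aleph0_lt_continuum)

theorem aux_circle_not_countable : ¬ ({z : ℂ | ‖z‖ = 1}).Countable := by
  intro h
  have h1 := h.image Complex.re
  have h2 : Set.Icc (-1 : ℝ) 1 ⊆ Complex.re '' {z : ℂ | ‖z‖ = 1} := by
    intro x hx
    refine ⟨⟨x, Real.sqrt (1 - x^2)⟩, ?_, rfl⟩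
    have : 0 ≤ 1 - x^2 := by nlinarith [hx.1, hx.2]
    simp only [Set.mem_ofPred_eq]
    rw [← sq_eq_sq₀ (norm_nonneg _) zero_le_one, ← Complex.normSq_eq_norm_sq, Complex.normSq_apply]
    simp only
    rw [Real.mul_self_sqrt this]; ring
  have h3 := h1.mono h2
  rw [← Cardinal.le_aleph0_iff_set_countable, Cardinal.mk_Icc_real (by norm_num)] at h3
  exact absurd h3 (not_le.2 Cardinal.aleph0_lt_continuum)

section iso
variable {E : Type*} [NormedAddCommGroup E] [NormedSpace ℂ E] [CompleteSpace E]

theorem aux_res_mul (V : E →L[ℂ] E) {z : ℂ} (hz : z ∈ resolventSet ℂ V) :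
    (algebraMap ℂ (E →L[ℂ] E) z - V) * resolvent V z = 1 :=
  Ring.mul_inverse_cancel _ hz

theorem aux_res_bound (V : E →L[ℂ] E) (hV : ∀ x, ‖V x‖ = ‖x‖) {z : ℂ} (hz : z ∈ resolventSet ℂ V) :
    |‖z‖ - 1| * ‖resolvent V z‖ ≤ 1 := by
  have hm := aux_res_mul V hz
  by_cases h0 : |‖z‖ - 1| = 0
  · rw [h0]; simp
  have hpos : 0 < |‖z‖ - 1| := lt_of_le_of_ne (abs_nonneg _) (Ne.symm h0)
  rw [← le_div_iff₀' hpos]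
  refine ContinuousLinearMap.opNorm_le_bound _ (by positivity) fun x => ?_
  have h1 : z • resolvent V z x - V (resolvent V z x) = x := by
    have := congrArg (fun A : E →L[ℂ] E => A x) hm
    simpa [Algebra.algebraMap_eq_smul_one] using this
  have h2 : |‖z‖ - 1| * ‖resolvent V z x‖ ≤ ‖x‖ := by
    have := abs_norm_sub_norm_le (z • resolvent V z x) (V (resolvent V z x))
    rw [h1, norm_smul, hV] at this
    have e : ‖z‖ * ‖resolvent V z x‖ - ‖resolvent V z x‖ = (‖z‖ - 1) * ‖resolvent V z x‖ := by ring
    rwa [e, abs_mul, abs_norm] at this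
  rw [div_mul_eq_mul_div, le_div_iff₀ hpos]
  linarith

theorem aux_res_lower (V : E →L[ℂ] E) {z l : ℂ} (hz : z ∈ resolventSet ℂ V) (hl : l ∈ spectrum ℂ V) :
    1 ≤ ‖z - l‖ * ‖resolvent V z‖ := by
  by_contra h
  push Not at h
  apply hl
  have hu : IsUnit (1 - (z - l) • resolvent V z) := by
    apply isUnit_one_sub_of_norm_lt_one
    rwa [norm_smul]
  have : algebraMap ℂ (E →L[ℂ] E) l - V
      = (algebraMap ℂ (E →L[ℂ] E) z - V) * (1 - (z - l) • resolvent V z) := by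
    rw [mul_sub, mul_smul_comm, aux_res_mul V hz]
    simp only [Algebra.algebraMap_eq_smul_one, sub_smul, mul_one]
    abel
  rw [spectrum.mem_resolventSet_iff, this]
  exact (spectrum.mem_resolventSet_iff.1 hz).mul hu

theorem aux_spec_circle [Nontrivial E] (V : E →L[ℂ] E) (hV : ∀ x, ‖V x‖ = ‖x‖)
    (hσ : (spectrum ℂ V ∩ {l : ℂ | ‖l‖ = 1}).Countable) {l : ℂ} (hl : l ∈ spectrum ℂ V) : ‖l‖ = 1 := by
  have hle : ‖l‖ ≤ 1 := (spectrum.norm_le_norm_of_mem hl).trans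
    (ContinuousLinearMap.opNorm_le_bound _ zero_le_one (by simp [hV]))
  refine le_antisymm hle ?_
  by_contra hlt
  push Not at hlt
  have hsub : Metric.ball (0 : ℂ) 1 ⊆ resolventSet ℂ V := by
    apply (convex_ball (0 : ℂ) 1).isPreconnected.subset_of_closure_inter_subset
      (spectrum.isOpen_resolventSet V)
    · have : ∃ m : ℂ, ‖m‖ = 1 ∧ m ∈ resolventSet ℂ V := by
        by_contra hcon
        push Not at hcon
        exact aux_circle_not_countable (hσ.mono (by intro m hm; exact ⟨hcon m hm, hm⟩))
      obtain ⟨m, hm1, hm2⟩ := this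
      have hcl : m ∈ closure (Metric.ball (0 : ℂ) 1) := by
        rw [closure_ball _ one_ne_zero]; simp [hm1]
      obtain ⟨w, hw, hw2⟩ := mem_closure_iff.1 hcl _ (spectrum.isOpen_resolventSet V) hm2
      exact ⟨w, hw2, hw⟩
    · rintro z ⟨hz1, hz2⟩
      by_contra hz
      have hz2' : ‖z‖ < 1 := by simpa using hz2
      obtain ⟨w, hw, hwd⟩ := Metric.mem_closure_iff.1 hz1 ((1 - ‖z‖) / 2) (by linarith)
      have h1 := aux_res_lower V hw hz
      have h2 := aux_res_bound V hV hw
      rw [dist_comm, dist_eq_norm] at hwd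
      have h3 : ‖w‖ ≤ ‖z‖ + ‖w - z‖ := by simpa using norm_add_le z (w - z)
      rw [abs_sub_comm, abs_of_pos (by linarith)] at h2
      have hr : 0 < ‖resolvent V w‖ := by
        rcases (norm_nonneg (resolvent V w)).eq_or_lt with h | h
        · rw [← h] at h1; linarith
        · exact h
      nlinarith [mul_pos (show 0 < 1 - ‖w‖ - ‖w - z‖ by linarith) hr]
  exact hl (hsub (by simpa using hlt))

theorem aux_eigen [Nontrivial E] (V : E →L[ℂ] E) (hV : ∀ x, ‖V x‖ = ‖x‖)
    (hσ : (spectrum ℂ V ∩ {l : ℂ | ‖l‖ = 1}).Countable) :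
    ∃ (l : ℂ) (ψ : E →L[ℂ] ℂ), ‖l‖ = 1 ∧ ψ ≠ 0 ∧ ∀ x, ψ (V x) = l * ψ x := by
  have hsub : spectrum ℂ V ⊆ {l : ℂ | ‖l‖ = 1} := fun l hl => aux_spec_circle V hV hσ hl
  rw [Set.inter_eq_left.2 hsub] at hσ
  obtain ⟨l, hl, hiso⟩ := aux_isolated (spectrum.isClosed V) (spectrum.nonempty V) hσ
  have hl1 : ‖l‖ = 1 := hsub hl
  have hl0 : l ≠ 0 := by rintro rfl; simp at hl1
  let φ : ℂ → ℂ := fun ζ => l * Complex.exp (Complex.I * ζ)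
  have hφd : Differentiable ℂ φ := by fun_prop
  have hφ0 : φ 0 = l := by simp [φ]
  have hφn : ∀ ζ, ‖φ ζ‖ = Real.exp (-ζ.im) := by
    intro ζ; simp [φ, hl1, Complex.norm_exp]
  let F : ℂ → (E →L[ℂ] E) := fun ζ => resolvent V (φ ζ)
  obtain ⟨δ, hδ, hδ'⟩ : ∃ δ > 0, ∀ z : ℂ, z ≠ l → ‖z - l‖ < δ → z ∈ resolventSet ℂ V := by
    rw [eventually_nhdsWithin_iff, Metric.eventually_nhds_iff] at hiso
    obtain ⟨δ, hδ, h⟩ := hiso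
    refine ⟨δ, hδ, fun z hz hd => ?_⟩
    have := h (y := z) (by rwa [dist_eq_norm]) hz
    simpa [spectrum] using this
  have hexp : ∀ ζ : ℂ, ‖ζ‖ ≤ 1 → ‖φ ζ - l‖ ≤ 2 * ‖ζ‖ := by
    intro ζ hζ
    have : φ ζ - l = l * (Complex.exp (Complex.I * ζ) - 1) := by simp [φ]; ring
    rw [this, norm_mul, hl1, one_mul]
    have := Complex.norm_exp_sub_one_le (x := Complex.I * ζ) (by simpa using hζ)
    simpa using this
  obtain ⟨ρ, hρ, hρ1, hρδ⟩ : ∃ ρ > 0, ρ ≤ 1 ∧ 2 * ρ ≤ δ :=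
    ⟨min 1 (δ/2), by positivity, min_le_left _ _, by linarith [min_le_right 1 (δ/2)]⟩
  have hφne : ∀ ζ : ℂ, ζ ≠ 0 → ‖ζ‖ < ρ → φ ζ ≠ l := by
    intro ζ h0 h1 h
    have : Complex.exp (Complex.I * ζ) = 1 := by
      simpa [φ, hl0] using h
    obtain ⟨n, hn⟩ := Complex.exp_eq_one_iff.1 this
    have hn' : ζ = n * (2 * Real.pi) := by
      have : Complex.I * ζ = Complex.I * (n * (2 * Real.pi)) := by rw [hn]; ring
      exact mul_left_cancel₀ Complex.I_ne_zero this
    have hn0 : n ≠ 0 := by rintro rfl; simp at hn'; exact h0 hn'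
    have h2 : ‖ζ‖ = |(n : ℝ)| * (2 * Real.pi) := by
      rw [hn']; simp [abs_of_pos Real.pi_pos]
    have h3 : (1 : ℝ) ≤ |(n : ℝ)| := by exact_mod_cast Int.one_le_abs hn0
    nlinarith [Real.pi_gt_three]
  have hres : ∀ ζ : ℂ, ζ ≠ 0 → ‖ζ‖ < ρ → φ ζ ∈ resolventSet ℂ V := fun ζ h0 h1 =>
    hδ' _ (hφne ζ h0 h1) (by linarith [hexp ζ (by linarith)])
  have hFd : ∀ ζ : ℂ, ζ ≠ 0 → ‖ζ‖ < ρ → DifferentiableAt ℂ F ζ := by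
    intro ζ h0 h1
    exact DifferentiableAt.comp (g := resolvent V) ζ
      (spectrum.hasDerivAt_resolvent_const_left (hres ζ h0 h1)).differentiableAt (hφd ζ)
  have hFb : ∀ ζ : ℂ, ζ ≠ 0 → ‖ζ‖ < ρ → |ζ.im| * ‖F ζ‖ ≤ 2 := by
    intro ζ h0 h1
    have hb := aux_res_bound V hV (hres ζ h0 h1)
    rw [hφn] at hb
    have him : |ζ.im| ≤ 1 := (Complex.abs_im_le_norm ζ).trans (by linarith)
    have h2 : |ζ.im| ≤ 2 * |Real.exp (-ζ.im) - 1| := by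
      have := Real.abs_exp_sub_one_sub_id_le (x := -ζ.im) (by simpa using him)
      rcases abs_cases ζ.im with ⟨h, h'⟩ | ⟨h, h'⟩ <;> rw [h] at him ⊢
      · have h5 : Real.exp (-ζ.im) ≤ 1 := by simpa using h'
        rw [abs_of_nonpos (by linarith)]
        have := (abs_le.1 this).2
        have := Real.exp_pos ζ.im
        have e := Real.add_one_le_exp ζ.im
        have : Real.exp (-ζ.im) * Real.exp ζ.im = 1 := by rw [← Real.exp_add]; simp
        nlinarith
      · have e := Real.add_one_le_exp (-ζ.im)
        rw [abs_of_nonneg (by linarith)]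
        linarith
    have : 0 ≤ ‖F ζ‖ := norm_nonneg _
    have : |Real.exp (-ζ.im) - 1| * ‖F ζ‖ ≤ 1 := hb
    nlinarith
  have hG : ∀ ζ : ℂ, ζ ≠ 0 → ‖ζ‖ < ρ / 2 → ‖ζ • F ζ‖ ≤ 8 := by
    intro ζ h0 h1
    rw [norm_smul]
    have := aux_growth F ρ 2 hFd hFb ζ h0 h1
    linarith
  have hnear : ∀ᶠ ζ : ℂ in nhdsWithin 0 {0}ᶜ, ζ ≠ 0 ∧ ‖ζ‖ < ρ / 2 := by
    rw [eventually_nhdsWithin_iff, Metric.eventually_nhds_iff]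
    exact ⟨ρ / 2, by linarith, fun y hy h0 => ⟨h0, by simpa using hy⟩⟩
  have hlim := Complex.tendsto_limUnder_of_differentiable_on_punctured_nhds_of_bounded_under
    (f := fun ζ => ζ • F ζ) (c := 0)
    (by
      filter_upwards [hnear] with ζ hζ
      exact differentiableAt_id.smul (hFd ζ hζ.1 (by linarith [hζ.2])))
    ⟨8, by
      rw [eventually_map]
      filter_upwards [hnear] with ζ hζ
      simpa using hG ζ hζ.1 hζ.2⟩
  set P := limUnder (nhdsWithin (0:ℂ) {0}ᶜ) (fun ζ => ζ • F ζ) with hP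
  have hPn : 1 / 2 ≤ ‖P‖ := by
    refine ge_of_tendsto hlim.norm ?_
    filter_upwards [hnear] with ζ hζ
    have h1 := aux_res_lower V (hres ζ hζ.1 (by linarith [hζ.2])) hl
    have h2 := hexp ζ (by linarith [hζ.2])
    have h3 : 0 ≤ ‖F ζ‖ := norm_nonneg _
    have h4 : 1 ≤ ‖φ ζ - l‖ * ‖F ζ‖ := h1
    rw [norm_smul]
    nlinarith
  have hcont : Tendsto (fun ζ => algebraMap ℂ (E →L[ℂ] E) (φ ζ) - V) (nhdsWithin 0 {0}ᶜ)
      (nhds (algebraMap ℂ (E →L[ℂ] E) l - V)) := by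
    have : Continuous (fun ζ => algebraMap ℂ (E →L[ℂ] E) (φ ζ) - V) := by
      simp only [Algebra.algebraMap_eq_smul_one]
      have := hφd.continuous
      fun_prop
    have h := this.tendsto 0
    simp only [hφ0] at h
    exact h.mono_left nhdsWithin_le_nhds
  have h0 : Tendsto (fun ζ : ℂ => ζ • (1 : E →L[ℂ] E)) (nhdsWithin 0 {0}ᶜ) (nhds 0) := by
    have : Continuous (fun ζ : ℂ => ζ • (1 : E →L[ℂ] E)) := by fun_prop
    have h := this.tendsto 0
    simp only [zero_smul] at h
    exact h.mono_left nhdsWithin_le_nhds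
  have hPz : P * (algebraMap ℂ (E →L[ℂ] E) l - V) = 0 := by
    refine tendsto_nhds_unique (hlim.mul hcont) (h0.congr' ?_)
    filter_upwards [hnear] with ζ hζ
    have : resolvent V (φ ζ) * (algebraMap ℂ (E →L[ℂ] E) (φ ζ) - V) = 1 :=
      Ring.inverse_mul_cancel _ (hres ζ hζ.1 (by linarith [hζ.2]))
    simp only [F]
    rw [smul_mul_assoc, this]
  have hP0 : P ≠ 0 := by
    intro h; rw [h, norm_zero] at hPn; linarith
  obtain ⟨x, hx⟩ : ∃ x, P x ≠ 0 := by
    by_contra hcon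
    push Not at hcon
    exact hP0 (ContinuousLinearMap.ext hcon)
  obtain ⟨g, -, hg⟩ := exists_dual_vector ℂ (P x) (by simpa using hx)
  refine ⟨l, g.comp P, hl1, ?_, ?_⟩
  · intro h
    have := congrArg (fun A : E →L[ℂ] ℂ => A x) h
    simp [hg] at this
    exact hx this
  · intro y
    have := congrArg (fun A : E →L[ℂ] E => A y) hPz
    simp [Algebra.algebraMap_eq_smul_one, sub_eq_zero] at this
    simp [← this]
end iso

universe u

theorem aux_completion {X : Type u} [AddCommGroup X] [Module ℂ X] (q : Seminorm ℂ X) :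
    ∃ (E : Type u) (_ : NormedAddCommGroup E) (_ : NormedSpace ℂ E) (_ : CompleteSpace E)
      (e : X →ₗ[ℂ] E), DenseRange e ∧ ∀ x, ‖e x‖ = q x := by
  let i1 : SeminormedAddCommGroup X := q.toAddGroupSeminorm.toSeminormedAddCommGroup
  let i2 : NormedSpace ℂ X :=
    { norm_smul_le := fun a b => le_of_eq (map_smul_eq_mul q a b) }
  refine ⟨UniformSpace.Completion X, inferInstance, inferInstance, inferInstance,
    (UniformSpace.Completion.toComplL (𝕜 := ℂ) (E := X)).toLinearMap, ?_, ?_⟩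
  · exact UniformSpace.Completion.denseRange_coe
  · intro x
    exact UniformSpace.Completion.norm_coe x

theorem aux_functional {X : Type*} [NormedAddCommGroup X] [NormedSpace ℂ X]
    (T : X →L[ℂ] X) (hσ : (spectrum ℂ T ∩ {lam : ℂ | ‖lam‖ = 1}).Countable)
    (q : Seminorm ℂ X) (hqT : ∀ x, q (T x) = q x)
    (hqA : ∀ A : X →L[ℂ] X, Commute A T → ∃ C, ∀ x, q (A x) ≤ C * q x)
    (x₀ : X) (hx₀ : q x₀ ≠ 0) :
    ∃ (l : ℂ) (ψ : X →ₗ[ℂ] ℂ) (C : ℝ), ‖l‖ = 1 ∧ (∀ x, ‖ψ x‖ ≤ C * q x) ∧ ψ ≠ 0 ∧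
      ∀ x, ψ (T x) = l * ψ x := by
  obtain ⟨E, _, _, _, e, hd, he⟩ := aux_completion q
  have : Nontrivial E := ⟨⟨e x₀, 0, fun h => hx₀ (by rw [← he, h, norm_zero])⟩⟩
  let H : (X →L[ℂ] X) → (E →L[ℂ] E) := fun A => (e ∘ₗ A.toLinearMap).extendOfNorm e
  have hH : ∀ A : X →L[ℂ] X, Commute A T → ∀ x, H A (e x) = e (A x) := by
    intro A hA x
    obtain ⟨C, hC⟩ := hqA A hA
    exact LinearMap.extendOfNorm_eq hd ⟨C, fun x => by simpa [he] using hC x⟩ x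
  have hext : ∀ A B : E →L[ℂ] E, (∀ x, A (e x) = B (e x)) → A = B := by
    intro A B h
    apply ContinuousLinearMap.coeFn_injective
    exact hd.equalizer A.continuous B.continuous (funext h)
  set V := H T with hVdef
  have hVe : ∀ x, V (e x) = e (T x) := hH T (Commute.refl T)
  have hV : ∀ x, ‖V x‖ = ‖x‖ := by
    intro x
    have c1 : Continuous fun x => ‖V x‖ := by fun_prop
    exact congrFun (hd.equalizer c1 continuous_norm (funext fun x => by simp [hVe, he, hqT])) x
  have hsp : spectrum ℂ V ⊆ spectrum ℂ T := by
    intro l hl hlT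
    apply hl
    rw [spectrum.mem_resolventSet_iff] at hlT ⊢
    obtain ⟨u, hu⟩ := hlT
    set R : X →L[ℂ] X := (↑u⁻¹ : X →L[ℂ] X) with hR
    have hc : Commute R T := by
      have h1 : Commute (u : X →L[ℂ] X) T := by
        rw [hu]
        exact Commute.sub_left (Algebra.commutes l T) (Commute.refl T)
      exact h1.units_inv_left
    have h1 : ∀ x, l • R x - T (R x) = x := by
      intro x
      have := congrArg (fun A : X →L[ℂ] X => A x) u.mul_inv
      rw [hu] at this
      simpa [Algebra.algebraMap_eq_smul_one] using this
    have h2 : ∀ x, T (R x) = R (T x) := fun x =>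
      congrArg (fun A : X →L[ℂ] X => A x) hc.eq.symm
    refine ⟨⟨algebraMap ℂ (E →L[ℂ] E) l - V, H R, ?_, ?_⟩, rfl⟩
    · apply hext
      intro x
      simp [Algebra.algebraMap_eq_smul_one, hH R hc, hVe]
      rw [← map_smul, ← map_sub, h1]
    · apply hext
      intro x
      simp [Algebra.algebraMap_eq_smul_one, hH R hc, hVe]
      rw [← map_smul, ← map_sub, ← h2, h1]
  obtain ⟨l, ψ, hl, hψ, hψV⟩ := aux_eigen V hV (hσ.mono (Set.inter_subset_inter_left _ hsp))
  refine ⟨l, ψ.toLinearMap ∘ₗ e, ‖ψ‖, hl, ?_, ?_, ?_⟩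
  · intro x
    rw [← he]; exact ψ.le_opNorm _
  · intro h
    apply hψ
    apply ContinuousLinearMap.coeFn_injective
    apply hd.equalizer ψ.continuous (0 : E →L[ℂ] ℂ).continuous
    funext x
    exact congrArg (fun A : X →ₗ[ℂ] ℂ => A x) h
  · intro x
    simp [← hVe, hψV]

open MeasureTheory in
theorem aux_measure {K : Type*} [TopologicalSpace K] [CompactSpace K] [T2Space K]
    [MeasurableSpace K] [BorelSpace K] (k : ℕ → K) :
    ∃ μ : ProbabilityMeasure K, ∀ g : K → ℂ, Continuous g →
      Tendsto (fun N : ℕ => ((N : ℂ) + 1)⁻¹ * ∑ n ∈ Finset.range (N + 1), g (k n))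
        (hyperfilter ℕ : Filter ℕ) (nhds (∫ x, g x ∂(μ : Measure K))) := by
  let ν : ℕ → ProbabilityMeasure K := fun N =>
    ⟨((N : ENNReal) + 1)⁻¹ • ∑ n ∈ Finset.range (N + 1), Measure.dirac (k n), ⟨by
      simp
      exact ENNReal.inv_mul_cancel (by simp) (by finiteness)⟩⟩
  let 𝓥 : Ultrafilter (ProbabilityMeasure K) := (hyperfilter ℕ).map ν
  have h : Tendsto ν (hyperfilter ℕ : Filter ℕ) (nhds 𝓥.lim) := 𝓥.le_nhds_lim
  rw [ProbabilityMeasure.tendsto_iff_forall_integral_rclike_tendsto ℂ] at h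
  refine ⟨𝓥.lim, fun g hg => ?_⟩
  have := h (BoundedContinuousFunction.mkOfCompact ⟨g, hg⟩)
  refine this.congr fun N => ?_
  simp only [ν, ProbabilityMeasure.coe_mk, BoundedContinuousFunction.mkOfCompact_apply,
    ContinuousMap.coe_mk]
  rw [integral_smul_measure, integral_finsetSum_measure]
  · simp [integral_dirac]
    left
    rw [ENNReal.toReal_add (by simp) (by simp)]
    simp
  · intro i _
    exact integrable_dirac (by finiteness)

theorem aux_far {X D : Type*} [NormedAddCommGroup X] [NormedSpace ℂ X] [CompleteSpace X]
    [NormedAddCommGroup D] [NormedSpace ℂ D] (ι : X →ₗᵢ[ℂ] D) (m : D)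
    (hcon : m ∉ Set.range ι) : ∃ d : ℝ, 0 < d ∧ ∀ y, d ≤ ‖m - ι y‖ := by
  have hcl : IsClosed (Set.range ι) := ι.isometry.isUniformInducing.isComplete_range.isClosed
  have hne : (Set.range ι).Nonempty := ⟨_, Set.mem_range_self 0⟩
  rw [← hcl.closure_eq, Metric.infDist_pos_iff_notMem_closure hne] at hcon
  refine ⟨_, hcon, fun y => ?_⟩
  rw [← dist_eq_norm]
  exact Metric.infDist_le_dist_of_mem (Set.mem_range_self (f := ι) y)

theorem aux_ext {D : Type*} [NormedAddCommGroup D] [NormedSpace ℂ D] (N : Submodule ℂ D)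
    (m : StrongDual ℂ D) : ∃ m' : StrongDual ℂ D, (∀ f ∈ N, m' f = m f) ∧
      ∀ r < ‖m'‖, ∃ f ∈ N, ‖f‖ ≤ 1 ∧ r < ‖m f‖ := by
  let g : StrongDual ℂ N := m.comp N.subtypeL
  obtain ⟨m', hm', hn⟩ := exists_extension_norm_eq N g
  refine ⟨m', fun f hf => hm' ⟨f, hf⟩, fun r hr => ?_⟩
  rw [hn] at hr
  obtain ⟨f, hf1, hf2⟩ := ContinuousLinearMap.exists_lt_apply_of_lt_opNorm g hr
  exact ⟨f, f.2, hf1.le, hf2⟩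

open MeasureTheory in
theorem aux_krein {X : Type*} [NormedAddCommGroup X] [NormedSpace ℂ X] [CompleteSpace X]
    {K : Type*} [TopologicalSpace K] [CompactSpace K]
    [MeasurableSpace K] [BorelSpace K] (μ : Measure K) [IsProbabilityMeasure μ]
    (J : K → X) (hJ : ∀ f : StrongDual ℂ X, Continuous (fun k => f (J k)))
    (C : ℝ) (hC : ∀ k, ‖J k‖ ≤ C) (u : ℕ → X)
    (hu : ∀ k, J k ∈ (Submodule.span ℂ (Set.range u)).topologicalClosure) :
    ∃ y : X, ∀ f : StrongDual ℂ X, f y = ∫ k, f (J k) ∂μ := by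
  have hint : ∀ f : StrongDual ℂ X, Integrable (fun k => f (J k)) μ := fun f =>
    (hJ f).integrable_of_hasCompactSupport (HasCompactSupport.of_compactSpace _)
  let m : StrongDual ℂ (StrongDual ℂ X) := LinearMap.mkContinuous
    { toFun := fun f => ∫ k, f (J k) ∂μ
      map_add' := fun f g => by
        simpa using integral_add (hint f) (hint g)
      map_smul' := fun c f => by
        simpa using integral_const_mul c (fun k => f (J k)) } C (by
      intro f
      have := norm_integral_le_of_norm_le_const (μ := μ) (f := fun k => f (J k)) (C := C * ‖f‖)
        (Eventually.of_forall fun k => (f.le_opNorm _).trans (by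
          rw [mul_comm]; gcongr; exact hC k))
      simpa using this)
  have hm : ∀ f, m f = ∫ k, f (J k) ∂μ := fun f => rfl
  let ι := NormedSpace.inclusionInDoubleDualLi ℂ (E := X)
  have hι : ∀ x f, ι x f = f x := fun x f => rfl
  suffices h : m ∈ Set.range ι by
    obtain ⟨y, hy⟩ := h
    exact ⟨y, fun f => by rw [← hm, ← hy, hι]⟩
  by_contra hcon
  obtain ⟨d, hd, hdist⟩ := aux_far ι m hcon
  have hstep : ∀ n : ℕ, ∃ f : StrongDual ℂ X, ‖f‖ ≤ 1 ∧ (∀ i < n, f (u i) = 0) ∧ d / 2 ≤ ‖m f‖ := by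
    intro n
    let N : Submodule ℂ (StrongDual ℂ X) := ⨅ i : Fin n, (ι (u i)).toLinearMap.ker
    obtain ⟨m', hm', hn⟩ := aux_ext N m
    have h1 : (m - m').toLinearMap ∈ Submodule.span ℂ (Set.range fun i : Fin n => (ι (u i)).toLinearMap) := by
      apply mem_span_of_iInf_ker_le_ker
      intro f hf
      have := hm' f hf
      simp [this]
    have h2 : ∃ y, m - m' = ι y := by
      have : (m - m').toLinearMap ∈ (LinearMap.range (ι.toLinearMap)).map
          (ContinuousLinearMap.coeLM ℂ : (StrongDual ℂ X →L[ℂ] ℂ) →ₗ[ℂ] _) := by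
        refine Submodule.span_le.2 ?_ h1
        rintro _ ⟨i, rfl⟩
        exact ⟨ι (u i), ⟨u i, rfl⟩, rfl⟩
      obtain ⟨_, ⟨y, rfl⟩, hy⟩ := this
      exact ⟨y, ContinuousLinearMap.coe_injective hy.symm⟩
    obtain ⟨y, hy⟩ := h2
    have h3 : d ≤ ‖m'‖ := by
      have h4 := hdist y
      have h5 : m - ι y = m' := by rw [← hy]; exact sub_sub_cancel m m'
      rw [h5] at h4
      exact h4
    obtain ⟨f, hfN, hf1, hf2⟩ := hn (d / 2) (by linarith)
    refine ⟨f, hf1, ?_, hf2.le⟩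
    intro i hi
    have := (Submodule.mem_iInf _).1 hfN ⟨i, hi⟩
    simpa [hι] using this
  choose f hf1 hf2 hf3 using hstep
  have hv0 : ∀ v ∈ Submodule.span ℂ (Set.range u), ∀ᶠ n in atTop, f n v = 0 := by
    intro v hv
    induction hv using Submodule.span_induction with
    | mem x hx =>
      obtain ⟨i, rfl⟩ := hx
      filter_upwards [eventually_gt_atTop i] with n hn using hf2 n i hn
    | zero => simp
    | add x y _ _ hx hy =>
      filter_upwards [hx, hy] with n h1 h2
      rw [map_add, h1, h2, add_zero]
    | smul c x _ hx =>
      filter_upwards [hx] with n h1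
      rw [map_smul, h1, smul_zero]
  have hpt : ∀ k, Tendsto (fun n => f n (J k)) atTop (nhds 0) := by
    intro k
    have hk := hu k
    rw [← SetLike.mem_coe, Submodule.topologicalClosure_coe, Metric.mem_closure_iff] at hk
    rw [Metric.tendsto_atTop]
    intro ε hε
    obtain ⟨v, hv, hvd⟩ := hk ε hε
    obtain ⟨n0, hn0⟩ := eventually_atTop.1 (hv0 v hv)
    refine ⟨n0, fun n hn => ?_⟩
    rw [dist_zero_right, ← sub_zero (f n (J k)), ← hn0 n hn, ← map_sub]
    calc _ ≤ ‖f n‖ * ‖J k - v‖ := (f n).le_opNorm _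
      _ ≤ 1 * ‖J k - v‖ := by gcongr; exact hf1 n
      _ < ε := by rw [one_mul, ← dist_eq_norm]; exact hvd
  have hlim : Tendsto (fun n => ∫ k, f n (J k) ∂μ) atTop (nhds (∫ k, (0 : ℂ) ∂μ)) := by
    refine tendsto_integral_of_dominated_convergence (fun _ => C) (fun n => (hint _).1)
      (integrable_const _) (fun n => Eventually.of_forall fun k => ?_) (Eventually.of_forall hpt)
    calc _ ≤ ‖f n‖ * ‖J k‖ := (f n).le_opNorm _
      _ ≤ 1 * C := by gcongr; exacts [hf1 n, hC k]
      _ = C := one_mul _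
  have := ge_of_tendsto hlim.norm (Eventually.of_forall hf3)
  simp at this
  linarith

theorem aux_weak_cont {X : Type*} [NormedAddCommGroup X] [NormedSpace ℂ X]
    (f : StrongDual ℂ X) : Continuous (fun z : WeakSpace ℂ X => f ((toWeakSpace ℂ X).symm z)) :=
  WeakBilin.eval_continuous (topDualPairing ℂ X).flip f

theorem aux_bounded {X : Type*} [NormedAddCommGroup X] [NormedSpace ℂ X] (u : ℕ → X)
    (h : IsCompact (closure (toWeakSpace ℂ X '' Set.range u))) : ∃ C, ∀ n, ‖u n‖ ≤ C := by
  let ι := NormedSpace.inclusionInDoubleDualLi ℂ (E := X)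
  have hb : ∃ C, ∀ n, ‖ι (u n)‖ ≤ C := by
    refine banach_steinhaus (fun f => ?_)
    obtain ⟨C, hC⟩ := h.exists_bound_of_continuousOn (aux_weak_cont f).continuousOn
    refine ⟨C, fun n => ?_⟩
    exact hC (toWeakSpace ℂ X (u n)) (subset_closure ⟨_, ⟨n, rfl⟩, rfl⟩)
  obtain ⟨C, hC⟩ := hb
  exact ⟨C, fun n => by rw [← ι.norm_map]; exact hC n⟩

theorem aux_powbdd {X : Type*} [NormedAddCommGroup X] [NormedSpace ℂ X] [CompleteSpace X]
    (T : X →L[ℂ] X)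
    (hwap : ∀ x : X, IsCompact (closure
      (toWeakSpace ℂ X '' Set.range (fun n : ℕ => (T ^ n) x)))) :
    ∃ M, ∀ n : ℕ, ‖T ^ n‖ ≤ M :=
  banach_steinhaus (fun x => aux_bounded _ (hwap x))

theorem aux_ergodic {X : Type*} [NormedAddCommGroup X] [NormedSpace ℂ X] [CompleteSpace X]
    (T : X →L[ℂ] X) (x : X)
    (hwap : IsCompact (closure (toWeakSpace ℂ X '' Set.range (fun n : ℕ => (T ^ n) x))))
    (l : ℂ) (hl : ‖l‖ = 1) (ψ : StrongDual ℂ X) (hψ : ∀ x, ψ (T x) = l * ψ x) :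
    ∃ y, T y = l • y ∧ ψ y = ψ x := by
  have hl0 : l ≠ 0 := by intro h; simp [h] at hl
  obtain ⟨C, hC⟩ := aux_bounded _ hwap
  set K₀ := closure (toWeakSpace ℂ X '' Set.range (fun n : ℕ => (T ^ n) x)) with hK₀
  have hKb : ∀ z ∈ K₀, ‖(toWeakSpace ℂ X).symm z‖ ≤ C := by
    intro z hz
    have h1 : z ∈ closure (toWeakSpace ℂ X '' (Metric.closedBall (0 : X) C)) := by
      refine closure_mono (Set.image_mono ?_) hz
      rintro _ ⟨n, rfl⟩
      simpa using hC n
    rw [← Convex.toWeakSpace_closure ℂ (convex_closedBall (0 : X) C),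
      Metric.isClosed_closedBall.closure_eq] at h1
    obtain ⟨w, hw, rfl⟩ := h1
    simpa using hw
  have hKs : ∀ z ∈ K₀, (toWeakSpace ℂ X).symm z ∈
      (Submodule.span ℂ (Set.range (fun n : ℕ => (T ^ n) x))).topologicalClosure := by
    intro z hz
    have h1 : z ∈ closure (toWeakSpace ℂ X ''
        (Submodule.span ℂ (Set.range (fun n : ℕ => (T ^ n) x)) : Set X)) :=
      closure_mono (Set.image_mono Submodule.subset_span) hz
    have hcv : Convex ℝ (Submodule.span ℂ (Set.range (fun n : ℕ => (T ^ n) x)) : Set X) :=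
      ((Submodule.span ℂ (Set.range (fun n : ℕ => (T ^ n) x))).restrictScalars ℝ).convex
    rw [← Convex.toWeakSpace_closure ℂ hcv] at h1
    obtain ⟨w, hw, rfl⟩ := h1
    rw [LinearEquiv.symm_apply_apply]
    exact hw
  have : CompactSpace K₀ := isCompact_iff_compactSpace.1 hwap
  have : CompactSpace (Metric.sphere (0 : ℂ) 1) := isCompact_iff_compactSpace.1 (isCompact_sphere 0 1)
  let K := (Metric.sphere (0 : ℂ) 1) × K₀
  let _ : MeasurableSpace K := borel K
  have : BorelSpace K := ⟨rfl⟩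
  let k : ℕ → K := fun n => (⟨(l⁻¹) ^ n, by simp [hl]⟩,
    ⟨toWeakSpace ℂ X ((T ^ n) x), subset_closure ⟨_, ⟨n, rfl⟩, rfl⟩⟩)
  let J : K → X := fun p => (p.1 : ℂ) • (toWeakSpace ℂ X).symm (p.2 : WeakSpace ℂ X)
  have hJ : ∀ f : StrongDual ℂ X, Continuous (fun k => f (J k)) := by
    intro f
    have : (fun k => f (J k)) = fun p : K => (p.1 : ℂ) * f ((toWeakSpace ℂ X).symm (p.2 : WeakSpace ℂ X)) := by
      funext p; simp [J]
    rw [this]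
    exact (continuous_subtype_val.comp continuous_fst).mul
      ((aux_weak_cont f).comp (continuous_subtype_val.comp continuous_snd))
  have hJk : ∀ n, J (k n) = (l⁻¹) ^ n • (T ^ n) x := fun n => by simp [J, k]
  obtain ⟨μ, hμ⟩ := aux_measure k
  obtain ⟨y, hy⟩ := aux_krein (μ : MeasureTheory.Measure K) J hJ C (by
      intro p
      have h1 := hKb _ p.2.2
      have h2 : ‖(p.1 : ℂ)‖ = 1 := by simp
      simp only [J, norm_smul, h2, one_mul]
      exact h1) (fun n : ℕ => (T ^ n) x) (fun p => Submodule.smul_mem _ _ (hKs _ p.2.2))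
  have hlim : ∀ f : StrongDual ℂ X, Tendsto (fun N : ℕ => ((N : ℂ) + 1)⁻¹ *
      ∑ n ∈ Finset.range (N + 1), f ((l⁻¹) ^ n • (T ^ n) x))
        (hyperfilter ℕ : Filter ℕ) (nhds (f y)) := by
    intro f
    rw [hy f]
    have := hμ _ (hJ f)
    simpa only [hJk] using this
  refine ⟨y, ?_, ?_⟩
  · have hS : l⁻¹ • T y = y := by
      rw [SeparatingDual.eq_iff_forall_dual_eq (R := ℂ)]
      intro f
      have h1 := hlim (f.comp (l⁻¹ • T))
      have h2 := hlim f
      have h3 := h1.sub h2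
      have h4 : Tendsto (fun N : ℕ => ((N : ℂ) + 1)⁻¹ * (f ((l⁻¹) ^ (N+1) • (T ^ (N+1)) x) - f x))
          (hyperfilter ℕ : Filter ℕ) (nhds 0) := by
        refine Tendsto.mono_left ?_ Nat.hyperfilter_le_atTop
        refine squeeze_zero_norm (a := fun N : ℕ => ((N : ℝ) + 1)⁻¹ * (‖f‖ * C + ‖f x‖)) ?_ ?_
        · intro N
          rw [norm_mul, norm_inv]
          have e : ‖(N : ℂ) + 1‖ = (N : ℝ) + 1 := by
            have := Complex.norm_natCast (N + 1)
            push_cast at this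
            exact this
          rw [e]
          gcongr
          refine (norm_sub_le _ _).trans ?_
          gcongr
          refine (f.le_opNorm _).trans ?_
          gcongr
          rw [norm_smul]
          simpa [hl] using hC (N + 1)
        · have := (tendsto_one_div_add_atTop_nhds_zero_nat (𝕜 := ℝ)).mul_const (‖f‖ * C + ‖f x‖)
          simpa using this
      have h5 := tendsto_nhds_unique h3 (h4.congr fun N => ?_)
      · simpa [sub_eq_zero] using h5
      · rw [← mul_sub, ← Finset.sum_sub_distrib]
        congr 1
        have := Finset.sum_range_sub (fun n => f ((l⁻¹) ^ n • (T ^ n) x)) (N + 1)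
        simp only [pow_zero, one_smul] at this
        rw [show f ((l⁻¹) ^ (N+1) • (T ^ (N+1)) x) - f x = _ from this.symm]
        refine Finset.sum_congr rfl fun n _ => ?_
        congr 1
        simp [pow_succ' T, pow_succ]
        ring
    rw [← hS, smul_smul, mul_inv_cancel₀ hl0, one_smul, hS]
  · have h1 : ∀ n : ℕ, ψ ((l⁻¹) ^ n • (T ^ n) x) = ψ x := by
      intro n
      have : ψ ((T ^ n) x) = l ^ n * ψ x := by
        induction n with
        | zero => simp
        | succ n ih => rw [pow_succ' T, mul_apply_eq_comp, hψ, ih]; ring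
      rw [map_smul, this, smul_eq_mul, ← mul_assoc, ← mul_pow, inv_mul_cancel₀ hl0]
      simp
    have h2 := hlim ψ
    simp only [h1] at h2
    refine tendsto_nhds_unique h2 (tendsto_const_nhds.congr fun N => ?_)
    have : (N : ℂ) + 1 ≠ 0 := Nat.cast_add_one_ne_zero N
    simp
    field_simp

theorem aux_rec : ∃ 𝓛 : Filter ℕ, 𝓛.NeBot ∧ 𝓛 ≤ atTop ∧
    ∀ l : ℂ, ‖l‖ = 1 → Tendsto (fun n => l ^ n) 𝓛 (nhds 1) := by
  let x : Circle → Circle := id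
  have h := mapClusterPt_one_atTop_pow x
  refine ⟨atTop ⊓ comap (fun n : ℕ => x ^ n) (nhds 1), ?_, inf_le_left, ?_⟩
  · rw [inf_comm, ← Filter.map_neBot_iff (fun n : ℕ => x ^ n), Filter.push_pull']
    exact h
  · intro l hl
    let c : Circle := ⟨l, by simp [Submonoid.unitSphere, hl]⟩
    have h1 : Tendsto (fun n : ℕ => x ^ n)
      (atTop ⊓ comap (fun n : ℕ => x ^ n) (nhds 1)) (nhds 1) :=
      tendsto_comap.mono_left inf_le_right
    have h2 := (continuous_subtype_val.tendsto _).comp ((tendsto_pi_nhds.1 h1) c)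
    exact h2

theorem aux_limsup_seminorm {X : Type*} [NormedAddCommGroup X] [NormedSpace ℂ X] (M : ℝ)
    (p : ℕ → Seminorm ℂ X) (hp : ∀ n x, p n x ≤ M * ‖x‖) :
    ∃ q : Seminorm ℂ X, ∀ x c, q x ≤ c ↔ ∀ ε > 0, ∀ᶠ n in atTop, p n x ≤ c + ε := by
  have key : ∀ x c, limsup (fun n => p n x) atTop ≤ c ↔
      ∀ ε > 0, ∀ᶠ n in atTop, p n x ≤ c + ε := by
    intro x c
    have hb : IsBoundedUnder (· ≤ ·) atTop (fun n => p n x) :=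
      isBoundedUnder_of ⟨M * ‖x‖, fun n => hp n x⟩
    have hc : IsCoboundedUnder (· ≤ ·) atTop (fun n => p n x) :=
      (isBoundedUnder_of ⟨0, fun n => apply_nonneg _ _⟩ :
        IsBoundedUnder (· ≥ ·) atTop (fun n => p n x)).isCoboundedUnder_le
    constructor
    · intro h ε hε
      have := eventually_lt_of_limsup_lt (f := atTop) (u := fun n => p n x) (b := c + ε)
        (by linarith) hb
      filter_upwards [this] with n hn using hn.le
    · intro h
      refine le_of_forall_pos_le_add fun ε hε => ?_
      exact limsup_le_of_le hc (h ε hε)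
  refine ⟨Seminorm.ofSMulLE (fun x => limsup (fun n => p n x) atTop) ?_ ?_ ?_, key⟩
  · simp
  · intro x y
    rw [key]
    intro ε hε
    filter_upwards [(key x _).1 le_rfl (ε / 2) (by linarith),
      (key y _).1 le_rfl (ε / 2) (by linarith)] with n h1 h2
    have := map_add_le_add (p n) x y
    linarith
  · intro r x
    rw [key]
    intro ε hε
    have h0 : 0 < ‖r‖ + 1 := by positivity
    filter_upwards [(key x _).1 le_rfl (ε / (‖r‖ + 1)) (by positivity)] with n h1
    rw [map_smul_eq_mul]
    calc _ ≤ ‖r‖ * (limsup (fun n => p n x) atTop + ε / (‖r‖ + 1)) := by gcongr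
      _ = ‖r‖ * limsup (fun n => p n x) atTop + ε * (‖r‖ / (‖r‖ + 1)) := by ring
      _ ≤ _ := by
        gcongr
        have : ‖r‖ / (‖r‖ + 1) ≤ 1 := by rw [div_le_one h0]; linarith
        nlinarith

section final
variable {X : Type*} [NormedAddCommGroup X] [NormedSpace ℂ X]

abbrev auxY (T : X →L[ℂ] X) : Submodule ℂ X :=
  (Submodule.span ℂ {y : X | ∃ lam : ℂ, ‖lam‖ = 1 ∧ T y = lam • y}).topologicalClosure

theorem auxY_inv (T A : X →L[ℂ] X) (h : Commute A T) : ∀ y ∈ auxY T, A y ∈ auxY T := by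
  have : auxY T ≤ (auxY T).comap A.toLinearMap := by
    refine Submodule.topologicalClosure_minimal _ ?_ ?_
    · refine Submodule.span_le.2 ?_
      rintro y ⟨l, hl, hy⟩
      refine Submodule.le_topologicalClosure _ (Submodule.subset_span ⟨l, hl, ?_⟩)
      have := DFunLike.congr_fun h.eq y
      simp only [mul_apply_eq_comp] at this
      rw [hy, map_smul] at this
      exact this.symm
    · exact (Submodule.isClosed_topologicalClosure _).preimage A.continuous
  exact fun y hy => this hy

theorem aux_eig_pow (T : X →L[ℂ] X) (l : ℂ) (y : X) (h : T y = l • y) (n : ℕ) :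
    (T ^ n) y = l ^ n • y := by
  induction n with
  | zero => simp
  | succ n ih => rw [pow_succ' T, mul_apply_eq_comp, ih, map_smul, h, smul_smul, pow_succ]

theorem auxY_rec (T : X →L[ℂ] X) (M : ℝ) (hM : ∀ n : ℕ, ‖T ^ n‖ ≤ M) (𝓛 : Filter ℕ)
    (h𝓛 : ∀ l : ℂ, ‖l‖ = 1 → Tendsto (fun n => l ^ n) 𝓛 (nhds 1)) :
    ∀ y ∈ auxY T, Tendsto (fun n => (T ^ n) y) 𝓛 (nhds y) := by
  have hM0 : 0 ≤ M := (norm_nonneg _).trans (hM 0)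
  have hs : ∀ y ∈ Submodule.span ℂ {y : X | ∃ lam : ℂ, ‖lam‖ = 1 ∧ T y = lam • y},
      Tendsto (fun n => (T ^ n) y) 𝓛 (nhds y) := by
    intro y hy
    induction hy using Submodule.span_induction with
    | mem y hy =>
      obtain ⟨l, hl, hy⟩ := hy
      have := (h𝓛 l hl).smul_const y
      rw [one_smul] at this
      exact this.congr fun n => (aux_eig_pow T l y hy n).symm
    | zero => simpa using tendsto_const_nhds
    | add x y _ _ hx hy => simpa only [map_add] using hx.add hy
    | smul c x _ hx => simpa only [map_smul] using hx.const_smul c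
  intro y hy
  rw [← SetLike.mem_coe, Submodule.topologicalClosure_coe, Metric.mem_closure_iff] at hy
  rw [Metric.tendsto_nhds]
  intro ε hε
  obtain ⟨v, hv, hvd⟩ := hy (ε / (M + 2)) (by positivity)
  have h1 := (Metric.tendsto_nhds.1 (hs v hv)) (ε / (M + 2)) (by positivity)
  filter_upwards [h1] with n hn
  rw [dist_eq_norm] at hn hvd ⊢
  have e : (T ^ n) y - y = (T ^ n) (y - v) + ((T ^ n) v - v) - (y - v) := by
    rw [map_sub]; abel
  have h2 : ‖(T ^ n) (y - v)‖ ≤ M * ‖y - v‖ := (T ^ n).le_of_opNorm_le (hM n) _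
  have h3 : ‖(T ^ n) y - y‖ ≤ M * ‖y - v‖ + ‖(T ^ n) v - v‖ + ‖y - v‖ := by
    rw [e]
    refine (norm_sub_le _ _).trans ?_
    gcongr
    refine (norm_add_le _ _).trans ?_
    gcongr
  have h4 : M * ‖y - v‖ ≤ M * (ε / (M + 2)) := by gcongr
  have h5 : (M + 2) * (ε / (M + 2)) = ε := by field_simp
  nlinarith

theorem aux_quot (Y : Submodule ℂ X) (A : X →L[ℂ] X) (hA : ∀ y ∈ Y, A y ∈ Y) (z : X) :
    ‖Y.mkQ (A z)‖ ≤ ‖A‖ * ‖Y.mkQ z‖ := by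
  refine le_of_forall_pos_le_add fun ε hε => ?_
  obtain ⟨m, hm, hm2⟩ := Submodule.Quotient.norm_mk_lt (Y.mkQ z) (ε := ε / (‖A‖ + 1)) (by positivity)
  have h1 : Y.mkQ (A z) = Submodule.Quotient.mk (A m) := by
    rw [Submodule.mkQ_apply, Submodule.Quotient.eq, ← map_sub]
    refine hA _ ?_
    rw [← Submodule.Quotient.eq, hm]
    rfl
  rw [h1]
  calc _ ≤ ‖A m‖ := Submodule.Quotient.norm_mk_le _ _
    _ ≤ ‖A‖ * ‖m‖ := A.le_opNorm m
    _ ≤ ‖A‖ * (‖Y.mkQ z‖ + ε / (‖A‖ + 1)) := by gcongr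
    _ = ‖A‖ * ‖Y.mkQ z‖ + ε * (‖A‖ / (‖A‖ + 1)) := by ring
    _ ≤ _ := by
      gcongr
      have : ‖A‖ / (‖A‖ + 1) ≤ 1 := by rw [div_le_one (by positivity)]; linarith
      nlinarith

theorem aux_seminorm (T : X →L[ℂ] X) (M : ℝ) (hM : ∀ n : ℕ, ‖T ^ n‖ ≤ M) :
    ∃ q : Seminorm ℂ X, (∀ x, q (T x) = q x) ∧
      (∀ A : X →L[ℂ] X, Commute A T → ∃ C, ∀ x, q (A x) ≤ C * q x) ∧
      (∀ x, q x ≤ M * ‖x‖) ∧ (∀ y ∈ auxY T, q y = 0) ∧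
      ∀ x, q x = 0 → ∀ ε > 0, ∃ n, ‖(auxY T).mkQ ((T ^ n) x)‖ < ε := by
  let Y := auxY T
  have hp : ∀ (n : ℕ) x, ((normSeminorm ℂ (X ⧸ Y)).comp (Y.mkQ.comp (T ^ n).toLinearMap)) x ≤
      M * ‖x‖ := by
    intro n x
    exact (Submodule.Quotient.norm_mk_le _ _).trans ((T ^ n).le_of_opNorm_le (hM n) _)
  obtain ⟨q, hq⟩ := aux_limsup_seminorm M _ hp
  have hq : ∀ x c, q x ≤ c ↔ ∀ ε > 0, ∀ᶠ n in atTop, ‖Y.mkQ ((T ^ n) x)‖ ≤ c + ε := hq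
  refine ⟨q, ?_, ?_, ?_, ?_, ?_⟩
  · intro x
    have hs : ∀ n : ℕ, (T ^ n) (T x) = (T ^ (n + 1)) x := fun n => by
      rw [pow_succ, mul_apply_eq_comp]
    apply le_antisymm
    · rw [hq]
      intro ε hε
      have := (tendsto_add_atTop_nat 1).eventually ((hq x _).1 le_rfl ε hε)
      simpa only [hs] using this
    · rw [hq]
      intro ε hε
      obtain ⟨n0, h0⟩ := eventually_atTop.1 ((hq (T x) _).1 le_rfl ε hε)
      filter_upwards [eventually_ge_atTop (n0 + 1)] with n hn
      have := h0 (n - 1) (by omega)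
      rw [hs, Nat.sub_add_cancel (by omega)] at this
      exact this
  · intro A hA
    refine ⟨‖A‖, fun x => ?_⟩
    rw [hq]
    intro ε hε
    filter_upwards [(hq x _).1 le_rfl (ε / (‖A‖ + 1)) (by positivity)] with n hn
    have e : (T ^ n) (A x) = A ((T ^ n) x) := by
      have := DFunLike.congr_fun (hA.pow_right n).eq x
      exact this.symm
    rw [e]
    calc _ ≤ ‖A‖ * ‖Y.mkQ ((T ^ n) x)‖ := aux_quot Y A (auxY_inv T A hA) _
      _ ≤ ‖A‖ * (q x + ε / (‖A‖ + 1)) := by gcongr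
      _ = ‖A‖ * q x + ε * (‖A‖ / (‖A‖ + 1)) := by ring
      _ ≤ _ := by
        gcongr
        have : ‖A‖ / (‖A‖ + 1) ≤ 1 := by rw [div_le_one (by positivity)]; linarith
        nlinarith
  · intro x
    rw [hq]
    intro ε hε
    exact Eventually.of_forall fun n => (hp n x).trans (by linarith)
  · intro y hy
    refine le_antisymm ?_ (apply_nonneg _ _)
    rw [hq]
    intro ε hε
    refine Eventually.of_forall fun n => ?_
    have : Y.mkQ ((T ^ n) y) = 0 := by
      rw [Submodule.mkQ_apply, Submodule.Quotient.mk_eq_zero]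
      exact auxY_inv T (T ^ n) ((Commute.refl T).pow_left n) y hy
    rw [this, norm_zero]
    linarith
  · intro x hx ε hε
    obtain ⟨n, hn⟩ := ((hq x 0).1 hx.le (ε / 2) (by linarith)).exists
    exact ⟨n, by linarith⟩

theorem aux_span_onto (T : X →L[ℂ] X) (n : ℕ)
    (s : X) (hs : s ∈ Submodule.span ℂ {y : X | ∃ lam : ℂ, ‖lam‖ = 1 ∧ T y = lam • y}) :
    ∃ s' ∈ auxY T, (T ^ n) s' = s := by
  induction hs using Submodule.span_induction with
  | mem y hy =>
    obtain ⟨l, hl, hy'⟩ := id hy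
    have hl0 : l ≠ 0 := by intro h; simp [h] at hl
    refine ⟨(l⁻¹) ^ n • y, Submodule.smul_mem _ _
      (Submodule.le_topologicalClosure _ (Submodule.subset_span hy)), ?_⟩
    rw [map_smul, aux_eig_pow T l y hy' n, smul_smul, ← mul_pow, inv_mul_cancel₀ hl0]
    simp
  | zero => exact ⟨0, Submodule.zero_mem _, map_zero _⟩
  | add x y _ _ hx hy =>
    obtain ⟨a, ha, rfl⟩ := hx
    obtain ⟨b, hb, rfl⟩ := hy
    exact ⟨a + b, Submodule.add_mem _ ha hb, map_add _ _ _⟩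
  | smul c x _ hx =>
    obtain ⟨a, ha, rfl⟩ := hx
    exact ⟨c • a, Submodule.smul_mem _ _ ha, map_smul _ _ _⟩

theorem aux_split [CompleteSpace X] (T : X →L[ℂ] X) (M : ℝ) (hM : ∀ n : ℕ, ‖T ^ n‖ ≤ M)
    (𝓛 : Filter ℕ) [𝓛.NeBot] (h𝓛t : 𝓛 ≤ atTop)
    (h𝓛 : ∀ l : ℂ, ‖l‖ = 1 → Tendsto (fun n => l ^ n) 𝓛 (nhds 1)) (x : X)
    (hx : ∀ ε > 0, ∃ n, ‖(auxY T).mkQ ((T ^ n) x)‖ < ε) :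
    ∃ y ∈ auxY T, Tendsto (fun n : ℕ => ‖(T ^ n) (x - y)‖) atTop (nhds 0) := by
  have hM0 : 0 ≤ M := (norm_nonneg _).trans (hM 0)
  have step : ∀ ε > 0, ∃ y ∈ auxY T, ∀ᶠ m in atTop, ‖(T ^ m) (x - y)‖ ≤ ε := by
    intro ε hε
    set δ := ε / (3 * (M + 1)) with hδ
    have hδ0 : 0 < δ := by positivity
    obtain ⟨n, hn⟩ := hx δ hδ0
    obtain ⟨v, hv, hv2⟩ := Submodule.Quotient.norm_mk_lt ((auxY T).mkQ ((T ^ n) x)) hδ0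
    have hy : (T ^ n) x - v ∈ auxY T := by
      rw [← Submodule.Quotient.eq, hv]
      rfl
    rw [← SetLike.mem_coe, Submodule.topologicalClosure_coe, Metric.mem_closure_iff] at hy
    obtain ⟨s, hs, hsd⟩ := hy δ hδ0
    obtain ⟨y, hyY, rfl⟩ := aux_span_onto T n s hs
    refine ⟨y, hyY, ?_⟩
    have h1 : ‖(T ^ n) (x - y)‖ ≤ 3 * δ := by
      rw [dist_eq_norm] at hsd
      have : (T ^ n) (x - y) = ((T ^ n) x - v - (T ^ n) y) + v := by rw [map_sub]; abel
      rw [this]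
      refine (norm_add_le _ _).trans ?_
      linarith
    filter_upwards [eventually_ge_atTop n] with m hm
    have e : (T ^ m) (x - y) = (T ^ (m - n)) ((T ^ n) (x - y)) := by
      rw [← mul_apply_eq_comp, ← pow_add, Nat.sub_add_cancel hm]
    rw [e]
    calc _ ≤ M * ‖(T ^ n) (x - y)‖ := (T ^ (m - n)).le_of_opNorm_le (hM _) _
      _ ≤ (M + 1) * (3 * δ) := by gcongr; linarith
      _ = ε := by rw [hδ]; field_simp
  have hpos : ∀ k : ℕ, (0 : ℝ) < 1 / ((k : ℝ) + 1) := fun k => by positivity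
  choose y hyY hy using fun k : ℕ => step (1 / ((k : ℝ) + 1)) (hpos k)
  have hdist : ∀ j k, ‖y j - y k‖ ≤ 1 / ((j : ℝ) + 1) + 1 / ((k : ℝ) + 1) := by
    intro j k
    have h1 := (auxY_rec T M hM 𝓛 h𝓛 _ (Submodule.sub_mem _ (hyY j) (hyY k))).norm
    refine le_of_tendsto h1 ?_
    filter_upwards [h𝓛t (hy j), h𝓛t (hy k)] with n hj hk
    have e : (T ^ n) (y j - y k) = (T ^ n) (x - y k) - (T ^ n) (x - y j) := by
      rw [← map_sub]; congr 1; abel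
    rw [e]
    refine (norm_sub_le _ _).trans ?_
    have hj : ‖(T ^ n) (x - y j)‖ ≤ 1 / ((j : ℝ) + 1) := hj
    have hk : ‖(T ^ n) (x - y k)‖ ≤ 1 / ((k : ℝ) + 1) := hk
    linarith
  have hz := tendsto_one_div_add_atTop_nhds_zero_nat (𝕜 := ℝ)
  have hc : CauchySeq y := by
    refine cauchySeq_of_le_tendsto_0 (fun k : ℕ => 2 * (1 / ((k : ℝ) + 1))) ?_ (by
      simpa using hz.const_mul 2)
    intro n m N hn hm
    rw [dist_eq_norm]
    refine (hdist n m).trans ?_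
    have h1 := Nat.one_div_le_one_div (α := ℝ) hn
    have h2 := Nat.one_div_le_one_div (α := ℝ) hm
    linarith
  obtain ⟨y₀, hy₀⟩ := cauchySeq_tendsto_of_complete hc
  refine ⟨y₀, (Submodule.isClosed_topologicalClosure _).mem_of_tendsto hy₀
    (Eventually.of_forall hyY), ?_⟩
  rw [Metric.tendsto_nhds]
  intro ε hε
  have e1 := (tendsto_order.1 hz).2 (ε / 2) (by linarith)
  have e2 := (Metric.tendsto_nhds.1 hy₀) (ε / (2 * (M + 1))) (by positivity)
  obtain ⟨k, hk1, hk2⟩ := (e1.and e2).exists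
  filter_upwards [hy k] with n hn
  rw [dist_zero_right, norm_norm]
  rw [dist_eq_norm] at hk2
  have e : (T ^ n) (x - y₀) = (T ^ n) (x - y k) + (T ^ n) (y k - y₀) := by
    rw [← map_add]; congr 1; abel
  have h2 : ‖(T ^ n) (y k - y₀)‖ ≤ M * ‖y k - y₀‖ := (T ^ n).le_of_opNorm_le (hM n) _
  have h3 : M * ‖y k - y₀‖ ≤ (M + 1) * (ε / (2 * (M + 1))) := by gcongr; linarith
  have h4 : (M + 1) * (ε / (2 * (M + 1))) = ε / 2 := by field_simp
  rw [e]
  refine (norm_add_le _ _).trans_lt ?_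
  linarith

end final


/-- Let `T` be a weakly almost periodic operator on a complex Banach
space `X` with `σ(T) ∩ 𝕋` countable. Then `X = Y ⊕ X₀`, where `Y` is the closed linear
span of the eigenvectors of `T` with unimodular eigenvalues and
`X₀ = {z : ‖Tⁿ z‖ → 0}`: both are closed `T`-invariant subspaces, `Y ∩ X₀ = {0}`,
and `Y + X₀ = X`. -/
theorem jdg_decomposition_of_countable_unimodular_spectrum
    {X : Type*} [NormedAddCommGroup X] [NormedSpace ℂ X] [CompleteSpace X]
    (T : X →L[ℂ] X)
    (hwap : ∀ x : X, IsCompact (closure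
      (toWeakSpace ℂ X '' Set.range (fun n : ℕ => (T ^ n) x))))
    (hσ : (spectrum ℂ T ∩ {lam : ℂ | ‖lam‖ = 1}).Countable) :
    ∀ Y : Submodule ℂ X,
      Y = (Submodule.span ℂ {y : X | ∃ lam : ℂ, ‖lam‖ = 1 ∧ T y = lam • y}).topologicalClosure →
    ∀ X₀ : Set X, X₀ = {z : X | Tendsto (fun n : ℕ => ‖(T ^ n) z‖) atTop (nhds 0)} →
      IsClosed (Y : Set X) ∧ IsClosed X₀ ∧
      (∀ y ∈ Y, T y ∈ Y) ∧ (∀ z ∈ X₀, T z ∈ X₀) ∧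
      (Y : Set X) ∩ X₀ = {0} ∧
      (∀ x : X, ∃ y ∈ Y, ∃ z ∈ X₀, x = y + z) := by
  rintro Y rfl X₀ rfl
  obtain ⟨M, hM⟩ := aux_powbdd T hwap
  have hM0 : 0 ≤ M := (norm_nonneg _).trans (hM 0)
  obtain ⟨𝓛, h𝓛n, h𝓛t, h𝓛⟩ := aux_rec
  refine ⟨Submodule.isClosed_topologicalClosure _, ?_, auxY_inv T T (Commute.refl T), ?_, ?_, ?_⟩
  · rw [← isSeqClosed_iff_isClosed]
    intro u z hu hz
    change Tendsto (fun n : ℕ => ‖(T ^ n) z‖) atTop (nhds 0)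
    rw [Metric.tendsto_nhds]
    intro ε hε
    obtain ⟨k, hk⟩ := ((Metric.tendsto_nhds.1 hz) (ε / (2 * (M + 1))) (by positivity)).exists
    have huk : Tendsto (fun n : ℕ => ‖(T ^ n) (u k)‖) atTop (nhds 0) := hu k
    filter_upwards [(tendsto_order.1 huk).2 (ε / 2) (by linarith)] with n hn
    rw [dist_zero_right, norm_norm]
    rw [dist_comm, dist_eq_norm] at hk
    have e : (T ^ n) z = (T ^ n) (u k) + (T ^ n) (z - u k) := by
      rw [← map_add]; congr 1; abel
    have h2 : ‖(T ^ n) (z - u k)‖ ≤ M * ‖z - u k‖ := (T ^ n).le_of_opNorm_le (hM n) _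
    have h3 : M * ‖z - u k‖ ≤ (M + 1) * (ε / (2 * (M + 1))) := by gcongr; linarith
    have h4 : (M + 1) * (ε / (2 * (M + 1))) = ε / 2 := by field_simp
    rw [e]
    refine (norm_add_le _ _).trans_lt ?_
    linarith
  · intro z hz
    have hz : Tendsto (fun n : ℕ => ‖(T ^ n) z‖) atTop (nhds 0) := hz
    have := hz.comp (tendsto_add_atTop_nat 1)
    refine this.congr fun n => ?_
    simp only [Function.comp_apply, pow_succ, mul_apply_eq_comp]
  · ext y
    constructor
    · rintro ⟨hy, h0⟩
      have h0 : Tendsto (fun n : ℕ => ‖(T ^ n) y‖) atTop (nhds 0) := h0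
      have h1 := (auxY_rec T M hM 𝓛 h𝓛 y hy).norm
      have := tendsto_nhds_unique h1 (h0.mono_left h𝓛t)
      simpa using this
    · rintro rfl
      refine ⟨Submodule.zero_mem _, ?_⟩
      change Tendsto (fun n : ℕ => ‖(T ^ n) (0 : X)‖) atTop (nhds 0)
      simp
  · obtain ⟨q, hqT, hqA, hqM, hqY, hq0⟩ := aux_seminorm T M hM
    intro x
    have hq : q x = 0 := by
      by_contra hne
      obtain ⟨l, ψ, C, hl, hψC, hψ0, hψT⟩ := aux_functional T hσ q hqT hqA x hne
      have hb : ∀ z, ‖ψ z‖ ≤ |C| * M * ‖z‖ := by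
        intro z
        calc _ ≤ C * q z := hψC z
          _ ≤ |C| * q z := by
            have := apply_nonneg q z
            gcongr
            exact le_abs_self C
          _ ≤ |C| * (M * ‖z‖) := by gcongr; exact hqM z
          _ = _ := by ring
      obtain ⟨w, hw⟩ : ∃ w, ψ w ≠ 0 := by
        by_contra hcon
        push Not at hcon
        exact hψ0 (LinearMap.ext hcon)
      obtain ⟨y, hy1, hy2⟩ := aux_ergodic T w (hwap w) l hl (ψ.mkContinuous _ hb) hψT
      have hy2 : ψ y = ψ w := hy2
      have hyY : y ∈ auxY T :=
        Submodule.le_topologicalClosure _ (Submodule.subset_span ⟨l, hl, hy1⟩)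
      have h1 := hψC y
      rw [hqY y hyY, mul_zero] at h1
      exact hw (hy2 ▸ norm_le_zero_iff.1 h1)
    obtain ⟨y, hy, hz⟩ := aux_split T M hM 𝓛 h𝓛t h𝓛 x (hq0 x hq)
    exact ⟨y, hy, x - y, hz, by abel⟩
end

section
/- Let T be a power-bounded operator on a reflexive complex Banach space X. If σ(T) ∩ 𝕋 is countable, where 𝕋 = {λ ∈ ℂ : |λ| = 1}, then T is almost periodic: for every x ∈ X the orbit {Tⁿ x : n ≥ 0} is relatively compact in the norm topology. -/
open Set Filter Topology Metric

lemma aux_isUnit_lower {Z : Type*} [NormedAddCommGroup Z] [NormedSpace ℂ Z]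
    (V : Z →L[ℂ] Z) (hV : ∀ x, ‖V x‖ = ‖x‖) (z : ℂ) (x : Z) :
    |‖z‖ - 1| * ‖x‖ ≤ ‖(algebraMap ℂ (Z →L[ℂ] Z) z - V) x‖ := by
  have h := abs_norm_sub_norm_le (z • x) (V x)
  rw [norm_smul, hV, ← sub_one_mul, abs_mul, abs_norm] at h
  simpa [Algebra.algebraMap_eq_smul_one] using h

lemma aux_resolvent_norm {Z : Type*} [NormedAddCommGroup Z] [NormedSpace ℂ Z]
    (V : Z →L[ℂ] Z) (hV : ∀ x, ‖V x‖ = ‖x‖) (z : ℂ) :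
    |‖z‖ - 1| * ‖resolvent V z‖ ≤ 1 := by
  by_cases hz : z ∈ resolventSet ℂ V
  · rw [← abs_norm (resolvent V z), ← abs_mul, mul_comm, abs_mul, abs_norm, ]
    rcases eq_or_ne (‖z‖ - 1) 0 with h0 | h0
    · simp [h0]
    have hpos : 0 < |‖z‖ - 1| := abs_pos.mpr h0
    rw [← le_div_iff₀ hpos]
    refine ContinuousLinearMap.opNorm_le_bound _ (by positivity) fun x => ?_
    have h := aux_isUnit_lower V hV z (resolvent V z x)
    have h2 : (algebraMap ℂ (Z →L[ℂ] Z) z - V) (resolvent V z x) = x := by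
      have h3 : (algebraMap ℂ (Z →L[ℂ] Z) z - V) * resolvent V z = 1 :=
        Ring.mul_inverse_cancel _ hz
      have := congrArg (fun A : Z →L[ℂ] Z => A x) h3
      simpa using this
    rw [h2] at h
    rw [div_mul_eq_mul_div, le_div_iff₀ hpos]
    linarith
  · have : resolvent V z = 0 := spectrum.resolvent_zero_of_mem_spectrum hz
    simp [this]

lemma aux_circle_uncountable : ¬ ({lam : ℂ | ‖lam‖ = 1}).Countable := by
  intro h
  have h1 := h.image Complex.re
  have h2 : Icc (0:ℝ) 1 ⊆ Complex.re '' {lam : ℂ | ‖lam‖ = 1} := by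
    intro x hx
    refine ⟨⟨x, √(1 - x^2)⟩, ?_, rfl⟩
    have : 0 ≤ 1 - x^2 := by nlinarith [hx.1, hx.2]
    have h3 : ‖(⟨x, √(1 - x^2)⟩ : ℂ)‖ ^ 2 = 1 := by
      rw [← Complex.normSq_eq_norm_sq, Complex.normSq_mk, Real.mul_self_sqrt this]; ring
    exact (pow_eq_one_iff_of_nonneg (norm_nonneg _) two_ne_zero).1 h3
  have h3 := h1.mono h2
  rw [Cardinal.Real.Icc_countable_iff] at h3
  linarith

lemma aux_spec_circle_s11 {Z : Type*} [NormedAddCommGroup Z] [NormedSpace ℂ Z] [CompleteSpace Z]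
    [Nontrivial Z] (V : Z →L[ℂ] Z) (hV : ∀ x, ‖V x‖ = ‖x‖)
    (hσ : (spectrum ℂ V ∩ {lam : ℂ | ‖lam‖ = 1}).Countable) (z : ℂ) (hz : z ∈ spectrum ℂ V) :
    ‖z‖ = 1 := by
  have hn : ‖V‖ ≤ 1 := V.opNorm_le_bound zero_le_one fun x => by simp [hV]
  have hle : ‖z‖ ≤ 1 := (spectrum.norm_le_norm_of_mem hz).trans hn
  refine hle.antisymm (not_lt.1 fun hlt => ?_)
  have hne : ∃ μ ∈ resolventSet ℂ V, ‖μ‖ = 1 := by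
    by_contra! hcon
    apply aux_circle_uncountable
    refine hσ.mono fun μ hμ => Set.mem_inter (fun h => hcon μ h hμ) hμ
  obtain ⟨μ, hμ, hμ1⟩ := hne
  have hopen := spectrum.isOpen_resolventSet (𝕜 := ℂ) V
  have hμc : μ ∈ closure (ball (0:ℂ) 1) := by
    rw [closure_ball _ one_ne_zero]; simp [hμ1]
  have hne2 := mem_closure_iff.1 hμc _ hopen hμ
  have key : ∀ w ∈ resolventSet ℂ V, ‖w‖ < 1 → ∀ z, ‖z - w‖ < 1 - ‖w‖ → z ∈ resolventSet ℂ V := by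
    intro w hw hw1 z hzw
    have hb := aux_resolvent_norm V hV w
    rw [spectrum.resolvent_eq hw, abs_sub_comm, abs_of_pos (by linarith)] at hb
    rw [spectrum.mem_resolventSet_iff]
    have hpos : 0 < ‖((IsUnit.unit hw)⁻¹ : (Z →L[ℂ] Z)ˣ).val‖ := Units.norm_pos _
    refine (Units.ofNearby (IsUnit.unit hw) (algebraMap ℂ (Z →L[ℂ] Z) z - V) ?_).isUnit
    change ‖_ - (algebraMap ℂ (Z →L[ℂ] Z) w - V)‖ < _
    rw [sub_sub_sub_cancel_right, ← map_sub, norm_algebraMap']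
    refine hzw.trans_le ?_
    rw [← one_div, le_div_iff₀ hpos]
    exact hb
  have hsub : ball (0:ℂ) 1 ⊆ resolventSet ℂ V ∩ ball 0 1 := by
    refine IsPreconnected.subset_of_closure_inter_subset (convex_ball _ _).isPreconnected
      (hopen.inter isOpen_ball) ?_ ?_
    · obtain ⟨w, hw1, hw2⟩ := hne2
      exact ⟨w, hw2, hw1, hw2⟩
    · rintro y ⟨hy, hy1⟩
      refine ⟨?_, hy1⟩
      have hy2 : ‖y‖ < 1 := by simpa using hy1
      obtain ⟨w, ⟨hw, hw1⟩, hd⟩ := Metric.mem_closure_iff.1 hy ((1 - ‖y‖)/2) (by linarith)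
      rw [dist_eq_norm] at hd
      have : ‖w‖ ≤ ‖y‖ + ‖y - w‖ := by
        have := norm_sub_le y (y - w); simpa using this
      exact key w hw (by linarith) y (by linarith)
  exact hz (hsub (by simpa using hlt)).1

lemma aux_ci_mul_left {A : Type*} [NormedRing A] [NormedAlgebra ℂ A] [CompleteSpace A]
    (a : A) (f : ℂ → A) (c : ℂ) (R : ℝ) (hf : CircleIntegrable f c R) :
    a * (∮ z in C(c, R), f z) = ∮ z in C(c, R), a * f z := by
  simp only [circleIntegral]
  have := (ContinuousLinearMap.mul ℂ A a).intervalIntegral_comp_comm hf.out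
  simp only [ContinuousLinearMap.mul_apply'] at this
  rw [← this]
  simp

lemma aux_ci_mul_right {A : Type*} [NormedRing A] [NormedAlgebra ℂ A] [CompleteSpace A]
    (a : A) (f : ℂ → A) (c : ℂ) (R : ℝ) (hf : CircleIntegrable f c R) :
    (∮ z in C(c, R), f z) * a = ∮ z in C(c, R), f z * a := by
  simp only [circleIntegral]
  have := ((ContinuousLinearMap.mul ℂ A).flip a).intervalIntegral_comp_comm hf.out
  simp only [ContinuousLinearMap.flip_apply, ContinuousLinearMap.mul_apply'] at this
  rw [← this]
  simp

lemma aux_ci_resolvent {A : Type*} [NormedRing A] [NormedAlgebra ℂ A] [CompleteSpace A]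
    (a : A) (c : ℂ) (r : ℝ) (hr : 0 < r) (hs : sphere c r ⊆ resolventSet ℂ a)
    (g : ℂ → ℂ) (hg : ContinuousOn g (sphere c r)) :
    a * (∮ z in C(c, r), g z • resolvent a z) = c • (∮ z in C(c, r), g z • resolvent a z)
      + (∮ z in C(c, r), ((z - c) * g z) • resolvent a z) - (∮ z in C(c, r), g z) • (1 : A) ∧
    (∮ z in C(c, r), g z • resolvent a z) * a = c • (∮ z in C(c, r), g z • resolvent a z)
      + (∮ z in C(c, r), ((z - c) * g z) • resolvent a z) - (∮ z in C(c, r), g z) • (1 : A) := by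
  have hR : ContinuousOn (resolvent a) (sphere c r) := fun z hz =>
    (spectrum.hasDerivAt_resolvent_const_left (hs hz)).continuousAt.continuousWithinAt
  have h1 : CircleIntegrable (fun z => g z • resolvent a z) c r :=
    (hg.smul hR).circleIntegrable hr.le
  have h2 : CircleIntegrable (fun z => ((z - c) * g z) • resolvent a z) c r :=
    (((continuousOn_id.sub continuousOn_const).mul hg).smul hR).circleIntegrable hr.le
  have h3 : CircleIntegrable (fun z => g z • (1 : A)) c r :=
    (hg.smul continuousOn_const).circleIntegrable hr.le
  have h4 : CircleIntegrable (fun z => c • g z • resolvent a z) c r :=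
    ((hg.smul hR).const_smul c).circleIntegrable hr.le
  have e : c • (∮ z in C(c, r), g z • resolvent a z)
      + (∮ z in C(c, r), ((z - c) * g z) • resolvent a z) - (∮ z in C(c, r), g z) • (1 : A)
      = ∮ z in C(c, r), (c • g z • resolvent a z + ((z - c) * g z) • resolvent a z
          - g z • (1 : A)) := by
    rw [circleIntegral.integral_sub (f := fun z => c • g z • resolvent a z + ((z - c) * g z) • resolvent a z)
      (h4.add h2) h3, circleIntegral.integral_add h4 h2,
      circleIntegral.integral_smul, circleIntegral.integral_smul_const]
  rw [e, aux_ci_mul_left _ _ _ _ h1, aux_ci_mul_right _ _ _ _ h1]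
  constructor
  · refine circleIntegral.integral_congr hr.le fun z hz => ?_
    have h : (algebraMap ℂ A z - a) * resolvent a z = 1 := Ring.mul_inverse_cancel _ (hs hz)
    change a * (g z • resolvent a z) = _
    rw [← h, sub_mul (algebraMap ℂ A z), ← Algebra.smul_def, mul_smul_comm]
    module
  · refine circleIntegral.integral_congr hr.le fun z hz => ?_
    have h : resolvent a z * (algebraMap ℂ A z - a) = 1 := Ring.inverse_mul_cancel _ (hs hz)
    change (g z • resolvent a z) * a = _
    rw [← h, mul_sub, ← Algebra.commutes, ← Algebra.smul_def, smul_mul_assoc]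
    module

lemma aux_ci_indep {A : Type*} [NormedRing A] [NormedAlgebra ℂ A] [CompleteSpace A]
    (a : A) (c : ℂ) (r₀ : ℝ) (hs : closedBall c r₀ \ {c} ⊆ resolventSet ℂ a)
    (g : ℂ → ℂ) (hg : ∀ z, z ≠ c → DifferentiableAt ℂ g z) (r : ℝ) (hr : 0 < r) (hrr : r ≤ r₀) :
    (∮ z in C(c, r), g z • resolvent a z) = ∮ z in C(c, r₀), g z • resolvent a z := by
  have hd : ∀ z ∈ closedBall c r₀ \ {c}, DifferentiableAt ℂ (fun z => g z • resolvent a z) z :=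
    fun z hz => (hg z hz.2).smul (spectrum.hasDerivAt_resolvent_const_left (hs hz)).differentiableAt
  symm
  refine Complex.circleIntegral_eq_of_differentiable_on_annulus_off_countable hr hrr
    countable_empty ?_ ?_
  · rintro z ⟨hz1, hz2⟩
    refine (hd z ⟨hz1, ?_⟩).continuousAt.continuousWithinAt
    rintro rfl
    exact hz2 (mem_ball_self hr)
  · rintro z ⟨⟨hz1, hz2⟩, -⟩
    refine hd z ⟨ball_subset_closedBall hz1, ?_⟩
    rintro rfl
    exact hz2 (mem_closedBall_self hr.le)

lemma aux_weight (c z : ℂ) (r : ℝ) (hr : 0 < r) (hc : ‖c‖ = 1) (hz : ‖z - c‖ = r) :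
    (z - c) + r ^ 2 * c + r ^ 2 * c ^ 2 * (z - c)⁻¹ = c * ((‖z‖ ^ 2 - 1 : ℝ) : ℂ) := by
  have h0 : z - c ≠ 0 := by rw [← norm_pos_iff, hz]; exact hr
  have e1 := Complex.mul_conj' (z - c)
  have e2 := Complex.mul_conj' c
  have e3 := Complex.mul_conj' z
  rw [hz] at e1
  rw [hc] at e2
  push_cast
  rw [← e3, ← e1, map_sub]
  field_simp
  rw [map_sub] at e1
  simp only [Complex.ofReal_one, one_pow] at e2
  linear_combination (- z) * e2

lemma aux_pole {A : Type*} [NormedRing A] [NormedAlgebra ℂ A] [CompleteSpace A]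
    (a : A) (c : ℂ) (r₀ : ℝ) (hr₀ : 0 < r₀) (hc : ‖c‖ = 1)
    (hs : closedBall c r₀ \ {c} ⊆ resolventSet ℂ a) (hcs : c ∈ spectrum ℂ a)
    (hb : ∀ z : ℂ, |‖z‖ - 1| * ‖resolvent a z‖ ≤ 1) :
    ∃ P : A, P ≠ 0 ∧ P * a = c • P := by
  have hsph : ∀ r, 0 < r → r ≤ r₀ → sphere c r ⊆ resolventSet ℂ a := by
    intro r hr hrr z hz
    refine hs ⟨closedBall_subset_closedBall hrr (sphere_subset_closedBall hz), ?_⟩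
    rintro rfl
    simp at hz; linarith
  have ginv : ∀ z, z ≠ c → DifferentiableAt ℂ (fun z : ℂ => (z - c)⁻¹) z := by
    intro z hz
    exact (differentiableAt_id.sub_const c).inv (sub_ne_zero.2 hz)
  have gc : ∀ r, 0 < r → ContinuousOn (fun z : ℂ => (z - c)⁻¹) (sphere c r) := by
    intro r hr z hz
    refine (ginv z ?_).continuousAt.continuousWithinAt
    rintro rfl
    simp at hz; linarith
  set A0 := ∮ z in C(c, r₀), (1:ℂ) • resolvent a z with hA0
  set A1 := ∮ z in C(c, r₀), (z - c) • resolvent a z with hA1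
  set Am := ∮ z in C(c, r₀), (z - c)⁻¹ • resolvent a z with hAm
  have hA1z : A1 = 0 := by
    have hbd : ∀ r, 0 < r → r ≤ min r₀ 1 →
        ‖A1 + ((r:ℂ) ^ 2 * c) • A0 + ((r:ℂ) ^ 2 * c ^ 2) • Am‖ ≤ 2 * Real.pi * r * 3 := by
      intro r hr hrr
      have hrr0 := hrr.trans (min_le_left _ _)
      have hrr1 := hrr.trans (min_le_right _ _)
      have hR : ContinuousOn (resolvent a) (sphere c r) := fun z hz =>
        (spectrum.hasDerivAt_resolvent_const_left
          (hsph r hr hrr0 hz)).continuousAt.continuousWithinAt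
      rw [hA0, hA1, hAm, ← aux_ci_indep a c r₀ hs (fun _ => 1) (by fun_prop) r hr hrr0,
        ← aux_ci_indep a c r₀ hs (fun z => z - c) (by fun_prop) r hr hrr0,
        ← aux_ci_indep a c r₀ hs (fun z => (z - c)⁻¹) ginv r hr hrr0,
        ← circleIntegral.integral_smul, ← circleIntegral.integral_smul,
        ← circleIntegral.integral_add, ← circleIntegral.integral_add]
      · refine circleIntegral.norm_integral_le_of_norm_le_const hr.le fun z hz => ?_
        rw [smul_smul, smul_smul, ← add_smul, ← add_smul, mul_one,
          aux_weight c z r hr hc (by simpa [dist_eq_norm] using hz), norm_smul, norm_mul, hc,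
          one_mul, Complex.norm_real, Real.norm_eq_abs]
        have hz2 : ‖z‖ ≤ 2 := by
          have h1 := norm_add_le c (z - c)
          have h2 : ‖z - c‖ = r := by simpa [dist_eq_norm] using hz
          rw [add_sub_cancel, hc, h2] at h1
          linarith
        have : ‖z‖ ^ 2 - 1 = (‖z‖ + 1) * (‖z‖ - 1) := by ring
        rw [this, abs_mul, abs_of_nonneg (by positivity), mul_assoc]
        have := hb z
        have h0 : 0 ≤ |‖z‖ - 1| * ‖resolvent a z‖ := by positivity
        nlinarith [norm_nonneg z]
      · exact (((continuousOn_id.sub continuousOn_const).smul hR).add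
          ((continuousOn_const.smul hR).const_smul _)).circleIntegrable hr.le
      · exact (((gc r hr).smul hR).const_smul _).circleIntegrable hr.le
      · exact ((continuousOn_id.sub continuousOn_const).smul hR).circleIntegrable hr.le
      · exact ((continuousOn_const.smul hR).const_smul _).circleIntegrable hr.le
    have ht : Tendsto (fun r : ℝ => ‖A1 + ((r:ℂ) ^ 2 * c) • A0 + ((r:ℂ) ^ 2 * c ^ 2) • Am‖)
        (𝓝[>] 0) (𝓝 ‖A1‖) := by
      have : Continuous
          (fun r : ℝ => ‖A1 + ((r:ℂ) ^ 2 * c) • A0 + ((r:ℂ) ^ 2 * c ^ 2) • Am‖) := by fun_prop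
      have := this.tendsto 0
      simp only [Complex.ofReal_zero, ne_eq, OfNat.ofNat_ne_zero, not_false_eq_true, zero_pow,
        zero_mul, zero_smul, add_zero] at this
      exact this.mono_left nhdsWithin_le_nhds
    have ht2 : Tendsto (fun r : ℝ => 2 * Real.pi * r * 3) (𝓝[>] 0) (𝓝 0) := by
      have : Continuous (fun r : ℝ => 2 * Real.pi * r * 3) := by fun_prop
      have := this.tendsto 0
      simp only [mul_zero, zero_mul] at this
      exact this.mono_left nhdsWithin_le_nhds
    have hle := le_of_tendsto_of_tendsto ht ht2 (by
      filter_upwards [Ioc_mem_nhdsGT (lt_min hr₀ one_pos)] with r hr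
      exact hbd r hr.1 hr.2)
    simpa using hle
  obtain ⟨-, h1⟩ := aux_ci_resolvent a c r₀ hr₀ (hsph r₀ hr₀ le_rfl) (fun _ => 1)
    continuousOn_const
  obtain ⟨h2, h3⟩ := aux_ci_resolvent a c r₀ hr₀ (hsph r₀ hr₀ le_rfl) (fun z => (z - c)⁻¹)
    (gc r₀ hr₀)
  have hone : (∮ z in C(c, r₀), ((z - c) * (z - c)⁻¹) • resolvent a z) = A0 := by
    refine circleIntegral.integral_congr hr₀.le fun z hz => ?_
    have : z - c ≠ 0 := by
      rw [← norm_pos_iff]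
      have h2 : ‖z - c‖ = r₀ := by simpa [dist_eq_norm] using hz
      linarith
    simp only [mul_inv_cancel₀ this]
  have hz1 : (∮ _ in C(c, r₀), (1:ℂ)) = 0 := by
    have := circleIntegral.integral_sub_zpow_of_ne (n := 0) (by norm_num) c c r₀
    simpa using this
  simp only [mul_one] at h1
  rw [← hA0, ← hA1, hA1z, hz1] at h1
  rw [hone, ← hAm, circleIntegral.integral_sub_center_inv _ hr₀.ne'] at h2 h3
  refine ⟨A0, fun h0 => hcs ?_, by simpa using h1⟩
  rw [h0, add_zero] at h2 h3
  have hpi : (2 * (Real.pi:ℂ) * Complex.I) ≠ 0 := by simp [Real.pi_ne_zero]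
  refine spectrum.mem_resolventSet_of_left_right_inverse
    (b := (2 * (Real.pi:ℂ) * Complex.I)⁻¹ • Am) (c := (2 * (Real.pi:ℂ) * Complex.I)⁻¹ • Am) ?_ ?_
  · rw [mul_smul_comm, sub_mul, h2, ← Algebra.smul_def, sub_sub_cancel, smul_smul,
      inv_mul_cancel₀ hpi, one_smul]
  · rw [smul_mul_assoc, mul_sub, h3, ← Algebra.commutes, ← Algebra.smul_def, sub_sub_cancel,
      smul_smul, inv_mul_cancel₀ hpi, one_smul]

lemma aux_isolated_s11 (S : Set ℂ) (hS : IsClosed S) (hc : S.Countable) (hne : S.Nonempty) :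
    ∃ c ∈ S, ∃ r > 0, closedBall c r \ {c} ⊆ Sᶜ := by
  have : Countable S := hc.to_subtype
  have : Nonempty S := hne.to_subtype
  have : LocallyCompactSpace S := hS.isClosedEmbedding_subtypeVal.locallyCompactSpace
  obtain ⟨c, hci⟩ := nonempty_interior_of_iUnion_of_closed (f := fun c : S => ({c} : Set S))
    (fun c => isClosed_singleton) (by ext x; simp)
  have hmem : c ∈ interior ({c} : Set S) := by
    obtain ⟨y, hy⟩ := hci
    have := interior_subset hy
    rw [mem_singleton_iff] at this
    rwa [this] at hy
  have hn : ({c} : Set S) ∈ 𝓝 c := mem_interior_iff_mem_nhds.1 hmem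
  obtain ⟨ε, hε, hb⟩ := Metric.mem_nhds_iff.1 hn
  refine ⟨c, c.2, ε / 2, by positivity, ?_⟩
  rintro z ⟨hz, hzc⟩ hzS
  apply hzc
  have : (⟨z, hzS⟩ : S) ∈ ball c ε := by
    rw [mem_ball, Subtype.dist_eq]
    rw [mem_closedBall] at hz
    have : dist z c < ε := by linarith
    exact this
  have := hb this
  rw [mem_singleton_iff] at this
  simp [← this]

lemma aux_eigenfunctional {Z : Type*} [NormedAddCommGroup Z] [NormedSpace ℂ Z] [CompleteSpace Z]
    [Nontrivial Z] (V : Z →L[ℂ] Z) (hV : ∀ x, ‖V x‖ = ‖x‖)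
    (hσ : (spectrum ℂ V ∩ {lam : ℂ | ‖lam‖ = 1}).Countable) :
    ∃ (c : ℂ) (ψ : StrongDual ℂ Z), ‖c‖ = 1 ∧ ψ ≠ 0 ∧ ∀ x, ψ (V x) = c * ψ x := by
  have h1 := aux_spec_circle_s11 V hV hσ
  have hcount : (spectrum ℂ V).Countable := hσ.mono fun z hz => Set.mem_inter hz (h1 z hz)
  obtain ⟨c, hc, r, hr, hs⟩ := aux_isolated_s11 _ (spectrum.isClosed (𝕜 := ℂ) V) hcount
    (spectrum.nonempty V)
  obtain ⟨P, hP, hPV⟩ := aux_pole V c r hr (h1 c hc) (fun z hz => by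
    have := hs hz; simpa [spectrum] using this) hc (aux_resolvent_norm V hV)
  obtain ⟨x, hx⟩ : ∃ x, P x ≠ 0 := by
    by_contra! h
    exact hP (ContinuousLinearMap.ext h)
  obtain ⟨f, hf1, hf⟩ := exists_dual_vector ℂ (P x) (norm_ne_zero_iff.2 hx)
  refine ⟨c, f.comp P, h1 c hc, fun h => ?_, fun y => ?_⟩
  · have := congrArg (fun g : StrongDual ℂ Z => g x) h
    simp [hf, hx] at this
  · have := congrArg (fun A : Z →L[ℂ] Z => f (A y)) hPV
    simpa using this

lemma aux_ergodic_s11 {X : Type*} [NormedAddCommGroup X] [NormedSpace ℂ X]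
    (hrefl : Function.Surjective (NormedSpace.inclusionInDoubleDual ℂ X))
    (T : X →L[ℂ] X) (C : ℝ) (hC : ∀ n : ℕ, ‖T ^ n‖ ≤ C) (c : ℂ) (hc : ‖c‖ = 1)
    (φ : StrongDual ℂ X) (hφ : ∀ x, φ (T x) = c * φ x) (x : X) :
    ∃ y, T y = c • y ∧ φ y = φ x := by
  have hc0 : c ≠ 0 := by rw [← norm_pos_iff, hc]; exact one_pos
  have hC0 : 0 ≤ C := (norm_nonneg _).trans (hC 0)
  set s : ℕ → X := fun n => ∑ k ∈ Finset.range n, (c⁻¹) ^ k • (T ^ k) x with hs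
  set a : ℕ → X := fun n => ((n : ℂ) + 1)⁻¹ • s (n + 1) with ha
  have hn0 : ∀ n : ℕ, (n : ℂ) + 1 ≠ 0 := fun n => by exact_mod_cast n.succ_ne_zero
  have hnn : ∀ n : ℕ, ‖((n : ℂ) + 1)⁻¹‖ = ((n : ℝ) + 1)⁻¹ := fun n => by
    rw [norm_inv]; congr 1
    have : ((n : ℂ) + 1) = ((n + 1 : ℕ) : ℂ) := by push_cast; rfl
    rw [this, Complex.norm_natCast]; push_cast; rfl
  have hterm : ∀ k, ‖(c⁻¹) ^ k • (T ^ k) x‖ ≤ C * ‖x‖ := fun k => by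
    rw [norm_smul, norm_pow, norm_inv, hc, inv_one, one_pow, one_mul]
    exact (T ^ k).le_of_opNorm_le (hC k) x
  have hbd : ∀ n, ‖a n‖ ≤ C * ‖x‖ := fun n => by
    rw [ha]; simp only
    rw [norm_smul, hnn]
    have : ‖s (n + 1)‖ ≤ ((n : ℝ) + 1) * (C * ‖x‖) := by
      refine (norm_sum_le_of_le _ fun k _ => hterm k).trans ?_
      simp
    rw [inv_mul_le_iff₀ (by positivity)]
    exact this
  have hφa : ∀ n, φ (a n) = φ x := fun n => by
    have hk : ∀ k : ℕ, φ ((T ^ k) x) = c ^ k * φ x := by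
      intro k
      induction k with
      | zero => simp
      | succ k ih => rw [pow_succ', mul_apply_eq_comp, hφ, ih]; ring
    simp only [ha, hs, map_smul, map_sum, hk, smul_eq_mul]
    have : ∀ k ∈ Finset.range (n + 1), c⁻¹ ^ k * (c ^ k * φ x) = φ x := fun k _ => by
      rw [← mul_assoc, ← mul_pow, inv_mul_cancel₀ hc0, one_pow, one_mul]
    rw [Finset.sum_congr rfl this, Finset.sum_const, Finset.card_range, nsmul_eq_mul]
    push_cast
    rw [← mul_assoc, inv_mul_cancel₀ (hn0 n), one_mul]
  have hdiff : ∀ n, ‖T (a n) - c • a n‖ ≤ ((n : ℝ) + 1)⁻¹ * (2 * (C * ‖x‖)) := fun n => by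
    have e : ∀ m, T (s m) - c • s m = c • ((c⁻¹) ^ m • (T ^ m) x - x) := by
      intro m
      induction m with
      | zero => simp [hs]
      | succ m ih =>
        have : s (m + 1) = s m + (c⁻¹) ^ m • (T ^ m) x := Finset.sum_range_succ _ _
        rw [this, map_add, smul_add, add_sub_add_comm, ih, map_smul, pow_succ' T,
          mul_apply_eq_comp, pow_succ (c⁻¹), mul_smul, smul_sub, smul_sub]
        have : c • c⁻¹ ^ m • c⁻¹ • T ((T ^ m) x) = c⁻¹ ^ m • T ((T ^ m) x) := by
          rw [smul_comm (c⁻¹ ^ m), smul_smul c, mul_inv_cancel₀ hc0, one_smul]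
        rw [this]; abel
    have : T (a n) - c • a n = ((n : ℂ) + 1)⁻¹ • (T (s (n + 1)) - c • s (n + 1)) := by
      simp only [ha, map_smul, smul_sub]
      rw [smul_comm c]
    rw [this, norm_smul, hnn, e, norm_smul, hc, one_mul]
    gcongr
    refine (norm_sub_le _ _).trans ?_
    have h0 := hterm 0
    simp only [pow_zero, one_smul, one_apply_eq_self] at h0
    linarith [hterm (n + 1)]
  -- weak limit
  set U : Ultrafilter ℕ := Filter.hyperfilter ℕ with hU
  have hUle : (U : Filter ℕ) ≤ atTop := by
    rw [← Nat.cofinite_eq_atTop]; exact Filter.hyperfilter_le_cofinite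
  have hlim : ∃ y : X, ∀ f : StrongDual ℂ X, Tendsto (fun n => f (a n)) U (𝓝 (f y)) := by
    let F : ℕ → WeakDual ℂ (StrongDual ℂ X) := fun n =>
      StrongDual.toWeakDual (NormedSpace.inclusionInDoubleDual ℂ X (a n))
    have hK := WeakDual.isCompact_closedBall (𝕜 := ℂ) (E := StrongDual ℂ X) 0 (C * ‖x‖)
    obtain ⟨ξ, -, hξ⟩ := hK.ultrafilter_le_nhds (U.map F) (by
      rw [le_principal_iff]
      refine Filter.mem_map.2 (Filter.univ_mem' fun n => ?_)
      simp only [mem_preimage, mem_closedBall, dist_zero_right]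
      exact (NormedSpace.double_dual_bound ℂ X (a n)).trans (hbd n))
    obtain ⟨y, hy⟩ := hrefl (WeakDual.toStrongDual ξ)
    refine ⟨y, fun f => ?_⟩
    have h1 : Tendsto F U (𝓝 ξ) := hξ
    have h2 := ((WeakDual.eval_continuous f).tendsto ξ).comp h1
    have h3 : ξ f = f y := by
      have := congrArg (fun g => g f) hy
      simpa using this.symm
    rw [h3] at h2
    exact h2
  obtain ⟨y, hy⟩ := hlim
  refine ⟨y, ?_, ?_⟩
  · rw [← sub_eq_zero]
    refine SeparatingDual.eq_zero_of_forall_dual_eq_zero (R := ℂ) ?_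
    intro f
    have h1 := hy (f.comp T - c • f)
    have e1 : (f.comp T - c • f) y = f (T y - c • y) := by simp
    rw [e1] at h1
    refine tendsto_nhds_unique h1 ?_
    have h2 : Tendsto (fun n => T (a n) - c • a n) atTop (𝓝 0) := by
      refine squeeze_zero_norm hdiff ?_
      have := tendsto_one_div_add_atTop_nhds_zero_nat (𝕜 := ℝ)
      simpa using this.mul_const (2 * (C * ‖x‖))
    have h3 := (f.continuous.tendsto 0).comp (h2.mono_left hUle)
    simpa [Function.comp_def] using h3
  · refine tendsto_nhds_unique (hy φ) ?_
    simp only [hφa]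
    exact tendsto_const_nhds

open scoped BoundedContinuousFunction Pointwise

/-- Bounded sequences with values in a compact set. -/
def auxK (X : Type*) [NormedAddCommGroup X] [NormedSpace ℂ X] : Submodule ℂ (ℕ →ᵇ X) where
  carrier := {f | ∃ S : Set X, IsCompact S ∧ ∀ n, f n ∈ S}
  add_mem' := by
    rintro f g ⟨S, hS, hf⟩ ⟨S', hS', hg⟩
    exact ⟨S + S', hS.add hS', fun n => Set.add_mem_add (hf n) (hg n)⟩
  zero_mem' := ⟨{0}, isCompact_singleton, fun n => by simp⟩
  smul_mem' := by
    rintro c f ⟨S, hS, hf⟩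
    exact ⟨c • S, hS.smul c, fun n => Set.smul_mem_smul_set (hf n)⟩

lemma auxK_mem {X : Type*} [NormedAddCommGroup X] [NormedSpace ℂ X] (f : ℕ →ᵇ X) :
    f ∈ auxK X ↔ ∃ S : Set X, IsCompact S ∧ ∀ n, f n ∈ S := Iff.rfl

lemma auxK_closed (X : Type*) [NormedAddCommGroup X] [NormedSpace ℂ X] [CompleteSpace X] :
    IsClosed (auxK X : Set (ℕ →ᵇ X)) := by
  refine isClosed_of_closure_subset fun f hf => ?_
  have htb : TotallyBounded (range f) := by
    rw [Metric.totallyBounded_iff]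
    intro ε hε
    obtain ⟨g, ⟨S, hS, hg⟩, hd⟩ := Metric.mem_closure_iff.1 hf (ε / 2) (by positivity)
    obtain ⟨t, ht, hSt⟩ := Metric.totallyBounded_iff.1 hS.totallyBounded (ε / 2) (by positivity)
    refine ⟨t, ht, ?_⟩
    rintro _ ⟨n, rfl⟩
    have h1 := hSt (hg n)
    simp only [mem_iUnion, mem_ball, exists_prop] at h1 ⊢
    obtain ⟨y, hy, hdy⟩ := h1
    refine ⟨y, hy, ?_⟩
    have h2 := BoundedContinuousFunction.dist_coe_le_dist (f := f) (g := g) n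
    linarith [dist_triangle (f n) (g n) y]
  exact ⟨closure (range f), htb.closure.isCompact_of_isClosed isClosed_closure, fun n => subset_closure ⟨n, rfl⟩⟩

lemma aux_space {X : Type*} [NormedAddCommGroup X] [NormedSpace ℂ X] [CompleteSpace X]
    (T : X →L[ℂ] X) (C : ℝ) (hC : ∀ n : ℕ, ‖T ^ n‖ ≤ C) :
    ∃ J : X →L[ℂ] ((ℕ →ᵇ X) ⧸ auxK X),
      (∀ x, ‖J (T x)‖ = ‖J x‖) ∧
      (∀ B : X →L[ℂ] X, B * T = T * B → ∀ x, ‖J (B x)‖ ≤ ‖B‖ * ‖J x‖) ∧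
      ∀ x, J x = 0 ↔ ∃ S : Set X, IsCompact S ∧ ∀ n : ℕ, (T ^ n) x ∈ S := by
  have hb : ∀ x n, ‖(T ^ n) x‖ ≤ C * ‖x‖ := fun x n => (T ^ n).le_of_opNorm_le (hC n) x
  have hC0 : 0 ≤ C := (norm_nonneg _).trans (hC 0)
  let orbL : X →ₗ[ℂ] (ℕ →ᵇ X) :=
    { toFun := fun x => BoundedContinuousFunction.ofNormedAddCommGroupDiscrete
        (fun n : ℕ => (T ^ n) x) (C * ‖x‖) (hb x)
      map_add' := fun x y => by ext n; simp
      map_smul' := fun c x => by ext n; simp }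
  let orb : X →L[ℂ] (ℕ →ᵇ X) := orbL.mkContinuous C fun x =>
    (BoundedContinuousFunction.norm_le (by positivity)).2 (hb x)
  have horb : ∀ x n, orb x n = (T ^ n) x := fun x n => rfl
  let Q : (ℕ →ᵇ X) →L[ℂ] ((ℕ →ᵇ X) ⧸ auxK X) := (auxK X).mkQ.mkContinuous 1 fun f => by
    rw [one_mul]; exact Submodule.Quotient.norm_mk_le _ f
  have hQ : ∀ f, Q f = Submodule.Quotient.mk f := fun f => rfl
  have hTn : ∀ n x, (T ^ n) (T x) = (T ^ (n + 1)) x := fun n x => by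
    rw [pow_succ, mul_apply_eq_comp]
  -- comparison principle
  have comp : ∀ (x y : X) (c : ℝ), 0 ≤ c →
      (∀ m : ℕ →ᵇ X, m - orb x ∈ auxK X → ∃ m' : ℕ →ᵇ X, m' - orb y ∈ auxK X ∧ ‖m'‖ ≤ c * ‖m‖) →
      ‖Q (orb y)‖ ≤ c * ‖Q (orb x)‖ := by
    intro x y c hc h
    have key : ∀ ε > 0, ‖Q (orb y)‖ ≤ c * (‖Q (orb x)‖ + ε) := by
      intro ε hε
      obtain ⟨m, hm, hlt⟩ := Submodule.Quotient.norm_mk_lt (Q (orb x)) hε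
      rw [hQ, Submodule.Quotient.eq] at hm
      obtain ⟨m', hm', hle⟩ := h m hm
      rw [← Submodule.Quotient.eq, ← hQ, ← hQ] at hm'
      rw [← hm']
      calc ‖Q m'‖ ≤ ‖m'‖ := Submodule.Quotient.norm_mk_le _ m'
        _ ≤ c * ‖m‖ := hle
        _ ≤ _ := by gcongr
    have ht : Tendsto (fun ε : ℝ => c * (‖Q (orb x)‖ + ε)) (𝓝[>] 0) (𝓝 (c * ‖Q (orb x)‖)) := by
      have : Continuous (fun ε : ℝ => c * (‖Q (orb x)‖ + ε)) := by fun_prop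
      have := this.tendsto 0
      rw [add_zero] at this
      exact this.mono_left nhdsWithin_le_nhds
    exact ge_of_tendsto ht (by
      filter_upwards [self_mem_nhdsWithin] with ε hε using key ε hε)
  refine ⟨Q.comp orb, fun x => ?_, fun B hB x => ?_, fun x => ?_⟩
  · apply le_antisymm
    · have := comp x (T x) 1 zero_le_one (by
        rintro m ⟨S, hS, hm⟩
        refine ⟨BoundedContinuousFunction.ofNormedAddCommGroupDiscrete
          (fun n : ℕ => m (n + 1)) ‖m‖ (fun n => m.norm_coe_le_norm _), ⟨S, hS, fun n => ?_⟩, ?_⟩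
        · have := hm (n + 1)
          simpa [horb, hTn] using this
        · rw [one_mul]
          exact (BoundedContinuousFunction.norm_le (norm_nonneg _)).2
            fun n => m.norm_coe_le_norm _)
      simpa using this
    · have := comp (T x) x 1 zero_le_one (by
        rintro m ⟨S, hS, hm⟩
        have hbd : ∀ n : ℕ, ‖(Nat.casesOn n 0 (fun k => m k) : X)‖ ≤ ‖m‖ := by
          rintro (_ | n)
          · simp
          · exact m.norm_coe_le_norm _
        refine ⟨BoundedContinuousFunction.ofNormedAddCommGroupDiscrete
          (fun n : ℕ => (Nat.casesOn n 0 (fun k => m k) : X)) ‖m‖ hbd,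
          ⟨insert (-x) S, hS.insert _, fun n => ?_⟩, ?_⟩
        · rcases n with _ | n
          · left; simp [horb]
          · right
            have := hm n
            simpa [horb, hTn] using this
        · rw [one_mul]
          exact (BoundedContinuousFunction.norm_le (norm_nonneg _)).2 hbd)
      simpa using this
  · refine comp x (B x) ‖B‖ (norm_nonneg _) ?_
    rintro m ⟨S, hS, hm⟩
    refine ⟨B.compLeftContinuousBounded ℕ m, ⟨B '' S, hS.image B.continuous, fun n => ?_⟩, ?_⟩
    · refine ⟨_, hm n, ?_⟩
      have : B * T ^ n = T ^ n * B := (Commute.pow_right hB n : _)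
      have := congrArg (fun A : X →L[ℂ] X => A x) this
      simp only [mul_apply_eq_comp] at this
      simpa [horb] using this
    · refine (BoundedContinuousFunction.norm_le (by positivity)).2 fun n => ?_
      exact B.le_opNorm_of_le (m.norm_coe_le_norm n)
  · change Q (orb x) = 0 ↔ _
    rw [hQ, Submodule.Quotient.mk_eq_zero]
    rfl

lemma aux_main {X W : Type*} [NormedAddCommGroup X] [NormedSpace ℂ X]
    [NormedAddCommGroup W] [NormedSpace ℂ W] [CompleteSpace W]
    (hrefl : Function.Surjective (NormedSpace.inclusionInDoubleDual ℂ X))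
    (T : X →L[ℂ] X) (C : ℝ) (hC : ∀ n : ℕ, ‖T ^ n‖ ≤ C)
    (hσ : (spectrum ℂ T ∩ {lam : ℂ | ‖lam‖ = 1}).Countable)
    (J : X →L[ℂ] W) (hd : DenseRange J) (h1 : ∀ x, ‖J (T x)‖ = ‖J x‖)
    (h2 : ∀ B : X →L[ℂ] X, B * T = T * B → ∀ x, ‖J (B x)‖ ≤ ‖B‖ * ‖J x‖)
    (h3 : ∀ x (c : ℂ), ‖c‖ = 1 → T x = c • x → J x = 0) : ∀ x, J x = 0 := by
  by_contra! hcon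
  obtain ⟨x₀, hx₀⟩ := hcon
  have : Nontrivial W := ⟨J x₀, 0, hx₀⟩
  have hext : ∀ B : X →L[ℂ] X, B * T = T * B → ∃ B' : W →L[ℂ] W, ∀ x, B' (J x) = J (B x) := by
    intro B hB
    refine ⟨LinearMap.extendOfNorm (J.comp B).toLinearMap J.toLinearMap, fun x => ?_⟩
    exact LinearMap.extendOfNorm_eq (f := (J.comp B).toLinearMap) (e := J.toLinearMap) hd
      ⟨‖B‖, h2 B hB⟩ x
  obtain ⟨V, hV⟩ := hext T rfl
  have hVi : ∀ w, ‖V w‖ = ‖w‖ := by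
    intro w
    refine hd.induction_on (p := fun w => ‖V w‖ = ‖w‖) w
      (isClosed_eq (by fun_prop) (by fun_prop)) fun x => ?_
    rw [hV, h1]
  have hspec : spectrum ℂ V ⊆ spectrum ℂ T := by
    intro z hz hzT
    apply hz
    have e1 : (algebraMap ℂ (X →L[ℂ] X) z - T) * resolvent T z = 1 :=
      Ring.mul_inverse_cancel _ hzT
    have e2 : resolvent T z * (algebraMap ℂ (X →L[ℂ] X) z - T) = 1 :=
      Ring.inverse_mul_cancel _ hzT
    have hcomm : resolvent T z * T = T * resolvent T z := by
      have := e1.trans e2.symm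
      rw [sub_mul, mul_sub, ← Algebra.commutes] at this
      exact (sub_right_injective this).symm
    obtain ⟨B, hB⟩ := hext _ hcomm
    refine spectrum.mem_resolventSet_of_left_right_inverse (b := B) (c := B) ?_ ?_
    · ext w
      refine hd.induction_on (p := fun w => ((algebraMap ℂ (W →L[ℂ] W) z - V) * B) w
        = (1 : W →L[ℂ] W) w) w (isClosed_eq (by fun_prop) (by fun_prop)) fun x => ?_
      have := congrArg (fun A : X →L[ℂ] X => J (A x)) e1
      simpa [Algebra.algebraMap_eq_smul_one, hB, hV] using this
    · ext w
      refine hd.induction_on (p := fun w => (B * (algebraMap ℂ (W →L[ℂ] W) z - V)) w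
        = (1 : W →L[ℂ] W) w) w (isClosed_eq (by fun_prop) (by fun_prop)) fun x => ?_
      have := congrArg (fun A : X →L[ℂ] X => J (A x)) e2
      simpa [Algebra.algebraMap_eq_smul_one, hB, hV] using this
  obtain ⟨c, ψ, hc, hψ, hψV⟩ := aux_eigenfunctional V hVi
    (hσ.mono (Set.inter_subset_inter_left _ hspec))
  apply hψ
  ext w
  refine hd.induction_on (p := fun w => ψ w = (0 : StrongDual ℂ W) w) w
    (isClosed_eq (by fun_prop) (by fun_prop)) fun x => ?_
  obtain ⟨y, hy1, hy2⟩ := aux_ergodic_s11 hrefl T C hC c hc (ψ.comp J)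
    (fun x => by simp [← hV, hψV]) x
  simp only [ContinuousLinearMap.comp_apply] at hy2
  rw [← hy2, h3 y c hc hy1]
  simp

lemma aux_main2 {X W : Type*} [NormedAddCommGroup X] [NormedSpace ℂ X]
    [NormedAddCommGroup W] [NormedSpace ℂ W] [CompleteSpace W]
    (hrefl : Function.Surjective (NormedSpace.inclusionInDoubleDual ℂ X))
    (T : X →L[ℂ] X) (C : ℝ) (hC : ∀ n : ℕ, ‖T ^ n‖ ≤ C)
    (hσ : (spectrum ℂ T ∩ {lam : ℂ | ‖lam‖ = 1}).Countable)
    (J : X →L[ℂ] W) (h1 : ∀ x, ‖J (T x)‖ = ‖J x‖)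
    (h2 : ∀ B : X →L[ℂ] X, B * T = T * B → ∀ x, ‖J (B x)‖ ≤ ‖B‖ * ‖J x‖)
    (h3 : ∀ x (c : ℂ), ‖c‖ = 1 → T x = c • x → J x = 0) : ∀ x, J x = 0 := by
  let M : Submodule ℂ W := J.range.topologicalClosure
  have hMcl : IsClosed (M : Set W) := Submodule.isClosed_topologicalClosure _
  have : CompleteSpace M := hMcl.completeSpace_coe
  let J' : X →L[ℂ] M := J.codRestrict M fun x =>
    Submodule.le_topologicalClosure _ (LinearMap.mem_range_self _ x)
  have hn : ∀ x, ‖J' x‖ = ‖J x‖ := fun x => rfl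
  have hd : DenseRange J' := by
    intro w
    rw [closure_subtype]
    have hw : (w : W) ∈ closure (range J) := w.2
    convert hw using 2
    ext y
    constructor
    · rintro ⟨_, ⟨x, rfl⟩, rfl⟩
      exact ⟨x, rfl⟩
    · rintro ⟨x, rfl⟩
      exact ⟨J' x, ⟨x, rfl⟩, rfl⟩
  have hz := aux_main hrefl T C hC hσ J' hd (fun x => by rw [hn, hn, h1])
    (fun B hB x => by rw [hn, hn]; exact h2 B hB x)
    (fun x c hc hx => Subtype.ext (h3 x c hc hx))
  intro x
  exact congrArg Subtype.val (hz x)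

/-- A power-bounded operator on a reflexive complex Banach space whose
spectrum meets the unit circle in a countable set is almost periodic: every orbit is
relatively compact in the norm topology. -/
theorem almostPeriodic_of_powerBounded_reflexive_countable_unimodular_spectrum
    {X : Type*} [NormedAddCommGroup X] [NormedSpace ℂ X] [CompleteSpace X]
    (hrefl : Function.Bijective (NormedSpace.inclusionInDoubleDual ℂ X))
    (T : X →L[ℂ] X) (hpb : ∃ C : ℝ, ∀ n : ℕ, ‖T ^ n‖ ≤ C)
    (hσ : (spectrum ℂ T ∩ {lam : ℂ | ‖lam‖ = 1}).Countable) :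
    ∀ x : X, IsCompact (closure (Set.range (fun n : ℕ => (T ^ n) x))) := by
  obtain ⟨C, hC⟩ := hpb
  have hcl := auxK_closed X
  obtain ⟨J, h1, h2, h3⟩ := aux_space T C hC
  have hz := aux_main2 (W := (ℕ →ᵇ X) ⧸ auxK X) hrefl.2 T C hC hσ J h1 h2 (fun x c hc hx => by
    rw [h3]
    refine ⟨(fun a : ℂ => a • x) '' sphere 0 1,
      (isCompact_sphere _ _).image (by fun_prop), fun n => ⟨c ^ n, by simp [hc], ?_⟩⟩
    induction n with
    | zero => simp
    | succ n ih =>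
      simp only at ih ⊢
      rw [pow_succ T, mul_apply_eq_comp, hx, map_smul, ← ih, smul_smul, pow_succ'])
  intro x
  obtain ⟨S, hS, hm⟩ := (h3 x).1 (hz x)
  exact hS.closure_of_subset (by rintro _ ⟨n, rfl⟩; exact hm n)
end

section
/- Let X be a reflexive Banach space over 𝕜 (𝕜 = ℝ or ℂ), and let T be a power-bounded operator on X of the form T = α·I + S with α ∈ 𝕜 and S^k compact for some k ≥ 1. Then T is almost periodic: for every x ∈ X the orbit {Tⁿ x : n ≥ 0} is relatively compact in the norm topology; moreover the adjoint T* is almost periodic on X*. -/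
/-- The Banach-space adjoint of `T`, acting on the dual space: `T* f = f ∘ T`. -/
noncomputable def banachAdjoint {𝕜 : Type*} [RCLike 𝕜] {X : Type*} [NormedAddCommGroup X]
    [NormedSpace 𝕜 X] (T : X →L[𝕜] X) :
    StrongDual 𝕜 X →L[𝕜] StrongDual 𝕜 X :=
  (ContinuousLinearMap.compL 𝕜 X X 𝕜).flip T

open Filter Topology
open scoped Pointwise

namespace APaux

theorem approx {X : Type*} [NormedAddCommGroup X] [CompleteSpace X] (u : ℕ → X)
    (h : ∀ ε > 0, ∃ n : ℕ, ∃ K : Set X, IsCompact K ∧ ∀ m, ∃ z ∈ K, dist (u (m + n)) z ≤ ε) :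
    ∃ K : Set X, IsCompact K ∧ ∀ n, u n ∈ K := by
  have tb : TotallyBounded (Set.range u) := by
    rw [Metric.totallyBounded_iff]
    intro ε hε
    obtain ⟨n, K, hK, hm⟩ := h (ε / 3) (by positivity)
    obtain ⟨t, ht, hcov⟩ := Metric.totallyBounded_iff.1 hK.totallyBounded (ε / 3) (by positivity)
    refine ⟨t ∪ u '' (Set.Iio n), ht.union ((Set.finite_Iio n).image u), ?_⟩
    rintro _ ⟨i, rfl⟩
    simp only [Set.mem_iUnion, Metric.mem_ball]
    by_cases hi : i < n
    · exact ⟨u i, Or.inr ⟨i, hi, rfl⟩, by simpa using hε⟩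
    · obtain ⟨z, hz, hd⟩ := hm (i - n)
      rw [Nat.sub_add_cancel (not_lt.1 hi)] at hd
      have := hcov hz
      simp only [Set.mem_iUnion, Metric.mem_ball] at this
      obtain ⟨y, hy, hyd⟩ := this
      refine ⟨y, Or.inl hy, ?_⟩
      have := dist_triangle (u i) z y
      linarith
  exact ⟨closure (Set.range u), 
    isCompact_iff_totallyBounded_isComplete.2 ⟨tb.closure, isClosed_closure.isComplete⟩, fun n => subset_closure ⟨n, rfl⟩⟩

variable {𝕜 : Type*} [RCLike 𝕜] {X : Type*} [NormedAddCommGroup X] [NormedSpace 𝕜 X]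

/-- almost periodic vectors -/
def AP (T : X →L[𝕜] X) : Submodule 𝕜 X where
  carrier := {x | ∃ K : Set X, IsCompact K ∧ ∀ n : ℕ, (T ^ n) x ∈ K}
  zero_mem' := ⟨{0}, isCompact_singleton, by simp⟩
  add_mem' := by
    rintro x y ⟨K, hK, hx⟩ ⟨L, hL, hy⟩
    refine ⟨K + L, hK.add hL, fun n => ?_⟩
    rw [map_add]
    exact Set.add_mem_add (hx n) (hy n)
  smul_mem' := by
    rintro c x ⟨K, hK, hx⟩
    refine ⟨(fun z => c • z) '' K, hK.image (continuous_const_smul c), fun n => ?_⟩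
    rw [map_smul]
    exact ⟨_, hx n, rfl⟩

theorem mem_AP {T : X →L[𝕜] X} {x : X} :
    x ∈ AP T ↔ ∃ K : Set X, IsCompact K ∧ ∀ n : ℕ, (T ^ n) x ∈ K := Iff.rfl

theorem AP_T {T : X →L[𝕜] X} {x : X} (hx : x ∈ AP T) : T x ∈ AP T := by
  obtain ⟨K, hK, h⟩ := hx
  refine ⟨K, hK, fun n => ?_⟩
  have := h (n + 1)
  rwa [pow_succ] at this

theorem AP_closed [CompleteSpace X] {T : X →L[𝕜] X} {C : ℝ} (hC : ∀ n : ℕ, ‖T ^ n‖ ≤ C) :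
    IsClosed (AP T : Set X) := by
  have hC0 : 0 ≤ C := (norm_nonneg _).trans (hC 0)
  rw [← closure_subset_iff_isClosed]
  intro x hx
  refine approx _ fun ε hε => ?_
  obtain ⟨y, hy, hd⟩ := Metric.mem_closure_iff.1 hx (ε / (C + 1)) (by positivity)
  obtain ⟨K, hK, h⟩ := hy
  refine ⟨0, K, hK, fun m => ⟨_, h m, ?_⟩⟩
  rw [add_zero, dist_eq_norm, ← map_sub]
  refine ((T ^ m).le_of_opNorm_le (hC m) _).trans ?_
  rw [dist_eq_norm, lt_div_iff₀ (by positivity)] at hd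
  nlinarith [norm_nonneg (x - y)]

/-- iterates modulo AP -/
theorem iter_mod {T : X →L[𝕜] X} {α : 𝕜} {y : X} (h : T y - α • y ∈ AP T) (n : ℕ) :
    (T ^ n) y - α ^ n • y ∈ AP T := by
  induction n with
  | zero => simp
  | succ n ih =>
    have h1 := AP_T ih
    have h2 := (AP T).smul_mem (α ^ n) h
    have := (AP T).add_mem h1 h2
    convert this using 1
    rw [pow_succ' T, map_sub, map_smul, smul_sub, smul_smul, ← pow_succ]
    simp

theorem step [CompleteSpace X]
    (hrefl : Function.Surjective (NormedSpace.inclusionInDoubleDual 𝕜 X))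
    {T : X →L[𝕜] X} {C : ℝ} (hC : ∀ n : ℕ, ‖T ^ n‖ ≤ C) {α : 𝕜} {y : X}
    (h : T y - α • y ∈ AP T) : y ∈ AP T := by
  have hC0 : 0 ≤ C := (norm_nonneg _).trans (hC 0)
  have hbd : ∀ n, ‖(T ^ n) y‖ ≤ C * ‖y‖ := fun n => (T ^ n).le_of_opNorm_le (hC n) _
  rcases lt_trichotomy ‖α‖ 1 with ha | ha | ha
  · refine approx _ fun ε hε => ?_
    have : Tendsto (fun n : ℕ => ‖α‖ ^ n * (C * ‖y‖)) atTop (𝓝 (0 * (C * ‖y‖))) :=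
      (tendsto_pow_atTop_nhds_zero_of_lt_one (norm_nonneg _) ha).mul_const _
    rw [zero_mul] at this
    obtain ⟨n, hn⟩ := (this.eventually (gt_mem_nhds hε)).exists
    obtain ⟨K, hK, hz⟩ := iter_mod h n
    refine ⟨n, K, hK, fun m => ⟨_, hz m, ?_⟩⟩
    have : (T ^ (m + n)) y - (T ^ m) ((T ^ n) y - α ^ n • y) = α ^ n • (T ^ m) y := by
      rw [map_sub, map_smul, pow_add]; simp
    rw [dist_eq_norm, this, norm_smul, norm_pow]
    refine le_trans ?_ hn.le
    gcongr
    exact hbd m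
  · have hα : α ≠ 0 := by rintro rfl; simp at ha
    -- averages
    let N : ℕ → X := fun n => ((n : 𝕜) + 1)⁻¹ • ∑ i ∈ Finset.range (n + 1), (α⁻¹) ^ i • (T ^ i) y
    have hn0 : ∀ n : ℕ, ((n : 𝕜) + 1) ≠ 0 := fun n => by exact_mod_cast n.succ_ne_zero
    have hnn : ∀ n : ℕ, ‖((n : 𝕜) + 1)‖ = (n : ℝ) + 1 := fun n => by
      have : ((n : 𝕜) + 1) = ((n + 1 : ℕ) : 𝕜) := by push_cast; rfl
      rw [this, RCLike.norm_natCast]; push_cast; rfl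
    have hterm : ∀ i : ℕ, ‖(α⁻¹) ^ i • (T ^ i) y‖ ≤ C * ‖y‖ := fun i => by
      rw [norm_smul, norm_pow, norm_inv, ha]; simpa using hbd i
    have hN : ∀ n, ‖N n‖ ≤ C * ‖y‖ := by
      intro n
      simp only [N]
      rw [norm_smul, norm_inv, hnn, inv_mul_le_iff₀ (by positivity)]
      refine (norm_sum_le_of_le _ (fun i _ => hterm i)).trans ?_
      simp
    have hNA : ∀ n, N n - y ∈ AP T := by
      intro n
      have : N n - y = ((n : 𝕜) + 1)⁻¹ • ∑ i ∈ Finset.range (n + 1),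
          (α⁻¹) ^ i • ((T ^ i) y - α ^ i • y) := by
        have e : ∀ i : ℕ, (α⁻¹) ^ i • ((T ^ i) y - α ^ i • y) = (α⁻¹) ^ i • (T ^ i) y - y := by
          intro i
          rw [smul_sub, smul_smul, ← mul_pow, inv_mul_cancel₀ hα, one_pow, one_smul]
        simp only [e, Finset.sum_sub_distrib, smul_sub, N]
        congr 1
        rw [Finset.sum_const, Finset.card_range, ← Nat.cast_smul_eq_nsmul 𝕜, smul_smul]
        push_cast
        rw [inv_mul_cancel₀ (hn0 n), one_smul]
      rw [this]
      exact (AP T).smul_mem _ (Submodule.sum_mem _ fun i _ =>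
        (AP T).smul_mem _ (iter_mod h i))
    have hNT : ∀ n, T (N n) - α • N n
        = ((n : 𝕜) + 1)⁻¹ • (α • ((α⁻¹) ^ (n + 1) • (T ^ (n + 1)) y - y)) := by
      intro n
      have key : T (∑ i ∈ Finset.range (n + 1), (α⁻¹) ^ i • (T ^ i) y) -
          α • ∑ i ∈ Finset.range (n + 1), (α⁻¹) ^ i • (T ^ i) y
          = α • ((α⁻¹) ^ (n + 1) • (T ^ (n + 1)) y - y) := by
        have := Finset.sum_range_sub (fun i : ℕ => (α⁻¹) ^ i • (T ^ i) y) (n + 1)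
        simp only [pow_zero, one_smul, ContinuousLinearMap.one_apply] at this
        rw [← this, Finset.smul_sum, Finset.smul_sum, map_sum, ← Finset.sum_sub_distrib]
        refine Finset.sum_congr rfl fun i _ => ?_
        rw [smul_sub, map_smul, pow_succ' α⁻¹, smul_smul α (α⁻¹ * α⁻¹ ^ i), ← mul_assoc, mul_inv_cancel₀ hα, one_mul,
          pow_succ' T]
        simp
      simp only [N]
      rw [map_smul, smul_comm α, ← smul_sub, key]
    have hNT0 : Tendsto (fun n => T (N n) - α • N n) atTop (𝓝 0) := by
      refine squeeze_zero_norm (a := fun n : ℕ => (1 / ((n : ℝ) + 1)) * (C * ‖y‖ + ‖y‖)) ?_ ?_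
      · intro n
        rw [hNT, norm_smul, norm_inv, hnn, norm_smul, ha, one_mul, one_div]
        gcongr
        exact (norm_sub_le _ _).trans (by gcongr; exact hterm _)
      · simpa using (tendsto_one_div_add_atTop_nhds_zero_nat (𝕜 := ℝ)).mul_const (C * ‖y‖ + ‖y‖)
    -- weak cluster point
    obtain ⟨w, U, hU, hw⟩ : ∃ w : X, ∃ U : Ultrafilter ℕ, (U : Filter ℕ) ≤ atTop ∧
        ∀ f : StrongDual 𝕜 X, Tendsto (fun n => f (N n)) U (𝓝 (f w)) := by
      let U : Ultrafilter ℕ := Ultrafilter.of atTop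
      have hc := WeakDual.isCompact_closedBall (𝕜 := 𝕜) (E := StrongDual 𝕜 X) 0 (C * ‖y‖)
      let J : ℕ → WeakDual 𝕜 (StrongDual 𝕜 X) := fun n =>
        StrongDual.toWeakDual (NormedSpace.inclusionInDoubleDual 𝕜 X (N n))
      obtain ⟨F, hF, hUF⟩ := hc.ultrafilter_le_nhds' (U.map J) (by
        refine Filter.mem_map.2 (Filter.univ_mem' fun n => ?_)
        simp only [J, Set.mem_preimage]
        have : ‖NormedSpace.inclusionInDoubleDual 𝕜 X (N n)‖ ≤ C * ‖y‖ :=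
          (NormedSpace.double_dual_bound 𝕜 X _).trans (hN n)
        simpa using this)
      obtain ⟨w, hw⟩ := hrefl (WeakDual.toStrongDual F)
      refine ⟨w, U, Ultrafilter.of_le _, fun f => ?_⟩
      have hc : Tendsto (fun n => J n f) U (𝓝 (F f)) :=
        ((WeakDual.eval_continuous f).tendsto F).comp hUF
      have e : F f = f w := by
        have := congrArg (fun G => G f) hw
        exact this.symm
      rw [e] at hc
      exact hc
    have hwker : T w - α • w = 0 := by
      by_contra hne
      obtain ⟨f, hf⟩ := SeparatingDual.exists_ne_zero (R := 𝕜) hne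
      apply hf
      have h1 := hw (f.comp (T - α • (1 : X →L[𝕜] X)))
      have h2 : Tendsto (fun n => f (T (N n) - α • N n)) U (𝓝 (f 0)) :=
        (f.continuous.tendsto 0).comp (hNT0.mono_left hU)
      rw [map_zero] at h2
      exact tendsto_nhds_unique h1 h2
    have hwA : w ∈ AP T := by
      have hit : ∀ n : ℕ, (T ^ n) w = α ^ n • w := by
        intro n
        induction n with
        | zero => simp
        | succ n ih =>
          rw [pow_succ' T, ContinuousLinearMap.mul_apply, ih, map_smul, sub_eq_zero.1 hwker,
            smul_smul, ← pow_succ]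
      refine ⟨(fun c : 𝕜 => c • w) '' Metric.closedBall 0 1,
        (isCompact_closedBall _ _).image (by fun_prop), fun n => ⟨α ^ n, ?_, (hit n).symm⟩⟩
      simp [ha]
    have hcl : IsClosed (AP T : Set X) := AP_closed hC
    have : w - y ∈ AP T := by
      by_contra hne
      haveI := hcl
      have hq : (AP T).mkQL (w - y) ≠ 0 := by
        intro h0
        exact hne ((Submodule.Quotient.mk_eq_zero (AP T)).1 h0)
      obtain ⟨f, hf⟩ := SeparatingDual.exists_ne_zero (R := 𝕜) hq
      apply hf
      let g : StrongDual 𝕜 X := f.comp (AP T).mkQL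
      have hg : ∀ z ∈ AP T, g z = 0 := fun z hz => by
        have : (AP T).mkQL z = 0 := (Submodule.Quotient.mk_eq_zero (AP T)).2 hz
        simp only [g, ContinuousLinearMap.comp_apply, this, map_zero]
      have h1 := hw g
      have h2 : ∀ n, g (N n) = g y := fun n => by
        have := hg _ (hNA n)
        rwa [map_sub, sub_eq_zero] at this
      simp only [h2] at h1
      have h3 : g y = g w := tendsto_nhds_unique tendsto_const_nhds h1
      change g (w - y) = 0
      rw [map_sub, h3, sub_self]
    have := (AP T).sub_mem hwA this
    simpa using this
  · have hα : α ≠ 0 := by rintro rfl; norm_num at ha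
    have hcl : IsClosed (AP T : Set X) := AP_closed hC
    have hmem : ∀ n : ℕ, y - (α⁻¹) ^ n • (T ^ n) y ∈ AP T := by
      intro n
      have := (AP T).smul_mem (-(α⁻¹) ^ n) (iter_mod h n)
      convert this using 1
      rw [smul_sub, smul_smul, neg_mul, ← mul_pow, inv_mul_cancel₀ hα]
      simp [neg_smul]
      abel
    have hlim : Tendsto (fun n : ℕ => y - (α⁻¹) ^ n • (T ^ n) y) atTop (𝓝 (y - 0)) := by
      refine tendsto_const_nhds.sub (squeeze_zero_norm
        (a := fun n : ℕ => (‖α‖⁻¹) ^ n * (C * ‖y‖)) ?_ ?_)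
      · intro n
        rw [norm_smul, norm_pow, norm_inv]
        gcongr
        exact hbd n
      · simpa using (tendsto_pow_atTop_nhds_zero_of_lt_one (by positivity)
          (inv_lt_one_of_one_lt₀ ha)).mul_const (C * ‖y‖)
    rw [sub_zero] at hlim
    exact hcl.mem_of_tendsto hlim (Filter.Eventually.of_forall hmem)

theorem core [CompleteSpace X]
    (hrefl : Function.Surjective (NormedSpace.inclusionInDoubleDual 𝕜 X))
    {T S : X →L[𝕜] X} {C : ℝ} (hC : ∀ n : ℕ, ‖T ^ n‖ ≤ C) {α : 𝕜}
    (hT : T = α • (1 : X →L[𝕜] X) + S) (k : ℕ) (x : X) (h : (S ^ k) x ∈ AP T) : x ∈ AP T := by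
  induction k generalizing x with
  | zero => simpa using h
  | succ k ih =>
    refine step hrefl hC (α := α) ?_
    have : T x - α • x = S x := by rw [hT]; simp
    rw [this]
    apply ih
    rwa [pow_succ] at h

theorem AP_compact {T : X →L[𝕜] X} {x : X} (h : x ∈ AP T) :
    IsCompact (closure (Set.range (fun n : ℕ => (T ^ n) x))) := by
  obtain ⟨K, hK, h⟩ := h
  exact hK.closure_of_subset (by rintro _ ⟨n, rfl⟩; exact h n)

/-- Schauder-type statement -/
theorem schauder (S : X →L[𝕜] X) (hS : IsCompactOperator S) (g : ℕ → StrongDual 𝕜 X) (C : ℝ)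
    (hg : ∀ n, ‖g n‖ ≤ C) :
    ∃ K : Set (StrongDual 𝕜 X), IsCompact K ∧ ∀ n, (g n).comp S ∈ K := by
  have hC0 : 0 ≤ C := (norm_nonneg _).trans (hg 0)
  suffices tb : TotallyBounded (Set.range fun n => (g n).comp S) from
    ⟨_, isCompact_iff_totallyBounded_isComplete.2 ⟨tb.closure, isClosed_closure.isComplete⟩,
      fun n => subset_closure ⟨n, rfl⟩⟩
  rw [Metric.totallyBounded_iff]
  intro ε hε
  obtain ⟨L, hL, hsub⟩ := hS.image_closedBall_subset_compact (f := (S : X →ₗ[𝕜] X)) 1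
  set δ := ε / (4 * (C + 1)) with hδ
  have hδ0 : 0 < δ := by positivity
  obtain ⟨t, ht, hcov⟩ := Metric.totallyBounded_iff.1 hL.totallyBounded δ hδ0
  haveI := ht.fintype
  let Φ : ℕ → (t → 𝕜) := fun n y => g n y
  have hΦ : TotallyBounded (Set.range Φ) := by
    refine TotallyBounded.subset (s₂ := Set.pi Set.univ fun y : t => Metric.closedBall 0 (C * ‖(y : X)‖)) ?_
      (isCompact_univ_pi fun y => isCompact_closedBall _ _).totallyBounded
    rintro _ ⟨n, rfl⟩ y _
    simpa [Φ] using (g n).le_of_opNorm_le (hg n) y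
  obtain ⟨s, hs, hsf, hscov⟩ := Metric.finite_approx_of_totallyBounded hΦ (ε / 4) (by positivity)
  have hs' : ∀ v ∈ s, ∃ n, Φ n = v := fun v hv => hs hv
  choose! j hj using hs'
  refine ⟨(fun v => (g (j v)).comp S) '' s, hsf.image _, ?_⟩
  rintro _ ⟨n, rfl⟩
  have := hscov ⟨n, rfl⟩
  simp only [Set.mem_iUnion, Metric.mem_ball] at this
  obtain ⟨v, hv, hd⟩ := this
  simp only [Set.mem_iUnion, Metric.mem_ball]
  refine ⟨_, ⟨v, hv, rfl⟩, ?_⟩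
  rw [dist_eq_norm]
  have hδC : C * δ ≤ ε / 4 := by
    rw [hδ, mul_div_assoc', div_le_div_iff₀ (by positivity) (by positivity)]
    nlinarith
  refine lt_of_le_of_lt (ContinuousLinearMap.opNorm_le_of_unit_norm (C := 3 * (ε / 4)) (by positivity) ?_) (by linarith)
  intro x hx
  have hxL : S x ∈ L := hsub ⟨x, by simp [hx], rfl⟩
  have := hcov hxL
  simp only [Set.mem_iUnion, Metric.mem_ball] at this
  obtain ⟨z, hz, hzd⟩ := this
  have e1 : ‖g n (S x - z)‖ ≤ ε / 4 := by
    refine ((g n).le_of_opNorm_le (hg n) _).trans (le_trans ?_ hδC)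
    gcongr
    rw [← dist_eq_norm]; exact hzd.le
  have e2 : ‖g (j v) (S x - z)‖ ≤ ε / 4 := by
    refine ((g (j v)).le_of_opNorm_le (hg _) _).trans (le_trans ?_ hδC)
    gcongr
    rw [← dist_eq_norm]; exact hzd.le
  have e3 : ‖g n z - g (j v) z‖ ≤ ε / 4 := by
    rw [← hj v hv] at hd
    have := (dist_le_pi_dist (Φ n) (Φ (j v)) ⟨z, hz⟩).trans hd.le
    rwa [dist_eq_norm] at this
  have e : ((g n).comp S - (g (j v)).comp S) x
      = g n (S x - z) - g (j v) (S x - z) + (g n z - g (j v) z) := by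
    simp only [ContinuousLinearMap.sub_apply, ContinuousLinearMap.comp_apply, map_sub]; ring
  rw [e]
  have := norm_add_le (g n (S x - z) - g (j v) (S x - z)) (g n z - g (j v) z)
  have := norm_sub_le (g n (S x - z)) (g (j v) (S x - z))
  linarith

theorem adj_apply (T : X →L[𝕜] X) (f : StrongDual 𝕜 X) : banachAdjoint T f = f.comp T := rfl

theorem adj_pow (T : X →L[𝕜] X) (n : ℕ) (f : StrongDual 𝕜 X) :
    (banachAdjoint T ^ n) f = f.comp (T ^ n) := by
  induction n generalizing f with
  | zero => ext; simp
  | succ n ih =>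
    rw [pow_succ, ContinuousLinearMap.mul_apply, ih, adj_apply, pow_succ']
    rfl

end APaux

/-- Let `X` be a reflexive Banach space over `𝕜` (`ℝ` or `ℂ`) and let
`T = α·I + S` be power-bounded with `S^k` compact for some `k ≥ 1`. Then `T` and its
adjoint `T*` are almost periodic (all orbits relatively norm-compact). -/
theorem almostPeriodic_scalar_plus_compact_power_reflexive {𝕜 : Type*} [RCLike 𝕜]
    {X : Type*} [NormedAddCommGroup X] [NormedSpace 𝕜 X] [CompleteSpace X]
    (hrefl : Function.Bijective (NormedSpace.inclusionInDoubleDual 𝕜 X))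
    (α : 𝕜) (S : X →L[𝕜] X) (k : ℕ) (hk : 1 ≤ k)
    (hS : IsCompactOperator (S ^ k : X →L[𝕜] X))
    (T : X →L[𝕜] X) (hT : T = α • (1 : X →L[𝕜] X) + S)
    (hpb : ∃ C : ℝ, ∀ n : ℕ, ‖T ^ n‖ ≤ C) :
    (∀ x : X, IsCompact (closure (Set.range (fun n : ℕ => (T ^ n) x)))) ∧
    (∀ f : StrongDual 𝕜 X,
      IsCompact (closure (Set.range (fun n : ℕ => (banachAdjoint T ^ n) f)))) := by
  obtain ⟨C, hC⟩ := hpb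
  have hcomm : ∀ n : ℕ, (T ^ n) * (S ^ k) = (S ^ k) * (T ^ n) := by
    intro n
    have : Commute T S := by
      rw [hT]
      exact ((Commute.one_left S).smul_left α).add_left (Commute.refl S)
    exact this.pow_pow n k
  refine ⟨fun x => APaux.AP_compact (APaux.core hrefl.2 hC hT k x ?_),
    fun f => APaux.AP_compact (APaux.core (S := banachAdjoint S) (C := C) (α := α)
      ?_ ?_ ?_ k f ?_)⟩
  · obtain ⟨L, hL, hsub⟩ :=
      hS.image_closedBall_subset_compact (f := ((S ^ k : X →L[𝕜] X) : X →ₗ[𝕜] X)) (C * ‖x‖)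
    refine ⟨L, hL, fun n => ?_⟩
    rw [← ContinuousLinearMap.mul_apply, hcomm]
    refine hsub ⟨(T ^ n) x, ?_, rfl⟩
    simpa using (T ^ n).le_of_opNorm_le (hC n) x
  · intro G
    refine ⟨G.comp (NormedSpace.inclusionInDoubleDual 𝕜 X), ?_⟩
    ext F
    obtain ⟨x, rfl⟩ := hrefl.2 F
    rfl
  · intro n
    refine ContinuousLinearMap.opNorm_le_bound _ ((norm_nonneg _).trans (hC 0)) fun f => ?_
    rw [APaux.adj_pow]
    refine (ContinuousLinearMap.opNorm_comp_le _ _).trans ?_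
    rw [mul_comm]
    gcongr
    exact hC n
  · ext f x
    simp [APaux.adj_apply, hT]
  · obtain ⟨K, hK, h⟩ := APaux.schauder (S ^ k) hS (fun n => f.comp (T ^ n)) (C * ‖f‖) (fun n => by
      refine (ContinuousLinearMap.opNorm_comp_le _ _).trans ?_
      rw [mul_comm]
      gcongr
      exact hC n)
    refine ⟨K, hK, fun n => ?_⟩
    have := h n
    rw [APaux.adj_pow, APaux.adj_pow]
    have e : (f.comp (S ^ k)).comp (T ^ n) = (f.comp (T ^ n)).comp (S ^ k) := by
      have := hcomm n
      ext x
      exact congrArg f (congrArg (fun A : X →L[𝕜] X => A x) this.symm)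
    rw [e]
    exact this
end

section
/- Let X be a Banach space over 𝕜 (𝕜 = ℝ or ℂ), and let T be a weakly almost periodic operator on X of the form T = α·I + S with α ∈ 𝕜 and S^k compact for some k ≥ 1. Then T is almost periodic: for every x ∈ X the orbit {Tⁿ x : n ≥ 0} is relatively compact in the norm topology. -/
open Filter Topology MeasureTheory Set

lemma aux_meas {𝕜 : Type*} [RCLike 𝕜] {X : Type*} [NormedAddCommGroup X] [NormedSpace 𝕜 X]
    {K : Type*} [TopologicalSpace K] [MeasurableSpace K] [BorelSpace K]
    (g : K → X) (hg : ∀ f : X →L[𝕜] 𝕜, Continuous fun k => f (g k))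
    (hsep : TopologicalSpace.IsSeparable (range g)) : StronglyMeasurable g := by
  borelize X
  rw [stronglyMeasurable_iff_measurable_separable]
  refine ⟨?_, hsep⟩
  have hcl : ∀ y : X, ∀ r : ℝ, MeasurableSet (g ⁻¹' Metric.closedBall y r) := by
    intro y r
    have : g ⁻¹' Metric.closedBall y r =
        ⋂ f : {f : X →L[𝕜] 𝕜 // ‖f‖ ≤ 1}, {k | ‖f.1 (g k) - f.1 y‖ ≤ r} := by
      ext k
      simp only [mem_preimage, Metric.mem_closedBall, dist_eq_norm, mem_iInter, mem_ofPred_eq]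
      constructor
      · rintro h ⟨f, hf⟩
        rw [← map_sub]
        refine (f.le_opNorm _).trans ?_
        nlinarith [norm_nonneg (g k - y)]
      · intro h
        obtain ⟨f, hf, hfe⟩ := exists_dual_vector'' 𝕜 (g k - y)
        have := h ⟨f, hf⟩
        rw [← map_sub, hfe] at this
        simpa using this
    rw [this]
    refine (isClosed_iInter fun f => ?_).measurableSet
    exact isClosed_le ((hg f.1).sub continuous_const).norm continuous_const
  refine measurable_of_isOpen fun U hU => ?_
  obtain ⟨c, hc, hsc⟩ := hsep
  have : g ⁻¹' U = ⋃ y ∈ c, ⋃ q : ℚ, ⋃ _ : Metric.closedBall y (q : ℝ) ⊆ U,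
      g ⁻¹' Metric.closedBall y (q : ℝ) := by
    ext k
    simp only [mem_preimage, mem_iUnion, exists_prop]
    constructor
    · intro hk
      obtain ⟨ε, hε, hb⟩ := Metric.isOpen_iff.1 hU _ hk
      obtain ⟨q, hq1, hq2⟩ := exists_rat_btwn (show (0:ℝ) < ε / 2 by linarith)
      obtain ⟨y, hy, hyd⟩ := Metric.mem_closure_iff.1 (hsc ⟨k, rfl⟩) q hq1
      refine ⟨y, hy, q, ?_, hyd.le⟩
      intro z hz
      apply hb
      rw [Metric.mem_closedBall] at hz
      rw [Metric.mem_ball]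
      have := dist_triangle z y (g k)
      rw [dist_comm y] at this
      linarith
    · rintro ⟨y, hy, q, hq, hk⟩
      exact hq hk
  rw [this]
  exact MeasurableSet.biUnion hc fun y _ => MeasurableSet.iUnion fun q =>
    MeasurableSet.iUnion fun _ => hcl y q

lemma aux_bdd {𝕜 : Type*} [RCLike 𝕜] {X : Type*} [NormedAddCommGroup X] [NormedSpace 𝕜 X]
    {K : Type*} (g : K → X) (hg : ∀ f : X →L[𝕜] 𝕜, ∃ C, ∀ k, ‖f (g k)‖ ≤ C) :
    ∃ C, ∀ k, ‖g k‖ ≤ C := by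
  obtain ⟨C, hC⟩ := banach_steinhaus
    (g := fun k => NormedSpace.inclusionInDoubleDual 𝕜 X (g k)) (fun f => by simpa using hg f)
  refine ⟨C, fun k => ?_⟩
  have := hC k
  rwa [← (NormedSpace.inclusionInDoubleDualLi (𝕜 := 𝕜) (E := X)).norm_map (g k)]

lemma aux_mean {𝕜 : Type*} [RCLike 𝕜] {X : Type*} [NormedAddCommGroup X] [NormedSpace 𝕜 X]
    [CompleteSpace X]
    {K : Type*} [TopologicalSpace K] [CompactSpace K] [T2Space K]
    (g : K → X) (hg : ∀ f : X →L[𝕜] 𝕜, Continuous fun k => f (g k))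
    (hsep : TopologicalSpace.IsSeparable (range g)) (v : ℕ → K) :
    ∃ p : X, ∀ (f : X →L[𝕜] 𝕜) (c : 𝕜),
      Tendsto (fun n : ℕ => ((n : 𝕜) + 1)⁻¹ * ∑ i ∈ Finset.range (n + 1), f (g (v i)))
        atTop (𝓝 c) → f p = c := by
  borelize K
  let _ : NormedSpace ℝ X := NormedSpace.restrictScalars ℝ 𝕜 X
  have hm := aux_meas g hg hsep
  obtain ⟨C, hC⟩ := aux_bdd (𝕜 := 𝕜) g (fun f => by
    obtain ⟨C, hC⟩ := (isCompact_range (hg f)).isBounded.exists_norm_le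
    exact ⟨C, fun k => hC _ ⟨k, rfl⟩⟩)
  let m : ℕ → Measure K := fun n =>
    (((n + 1 : ℕ) : ENNReal)⁻¹) • ∑ i ∈ Finset.range (n + 1), Measure.dirac (v i)
  have hprob : ∀ n, IsProbabilityMeasure (m n) := by
    intro n
    constructor
    simp only [m, Measure.smul_apply, Measure.finsetSum_apply, measure_univ]
    simp only [Finset.sum_const, Finset.card_range, smul_eq_mul, nsmul_eq_mul, mul_one]
    exact ENNReal.inv_mul_cancel (by simp) (by simp)
  let P : ℕ → ProbabilityMeasure K := fun n => ⟨m n, hprob n⟩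
  let U : Ultrafilter ℕ := hyperfilter ℕ
  obtain ⟨μ, -, hμ⟩ := isCompact_univ.ultrafilter_le_nhds (U.map P) (by simp)
  have hμ' : Tendsto P U (𝓝 μ) := hμ
  have hint : Integrable g (μ : Measure K) :=
    Integrable.of_bound hm.aestronglyMeasurable C (Eventually.of_forall hC)
  refine ⟨∫ k, g k ∂(μ : Measure K), fun f c hc => ?_⟩
  rw [← ContinuousLinearMap.integral_comp_comm f hint]
  have h1 := (ProbabilityMeasure.tendsto_iff_forall_integral_rclike_tendsto 𝕜).1 hμ'
    (BoundedContinuousFunction.mkOfCompact ⟨_, hg f⟩)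
  have h2 : Tendsto (fun n : ℕ => ((n : 𝕜) + 1)⁻¹ * ∑ i ∈ Finset.range (n + 1), f (g (v i)))
      U (𝓝 c) := hc.mono_left Nat.hyperfilter_le_atTop
  refine tendsto_nhds_unique (h1.congr fun n => ?_) h2
  simp only [P, m, ProbabilityMeasure.coe_mk, BoundedContinuousFunction.mkOfCompact_apply,
    ContinuousMap.coe_mk]
  rw [integral_smul_measure, integral_finsetSum_measure]
  · simp_rw [integral_dirac]
    rw [RCLike.real_smul_eq_coe_mul, ENNReal.toReal_inv, ENNReal.toReal_natCast]
    simp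
  · intro i _
    have hc : Continuous fun k => f (g k) := hg f
    exact (integrable_dirac' hc.stronglyMeasurable (by simp))

lemma aux_tb {X : Type*} [PseudoMetricSpace X] (A : Set X)
    (h : ∀ ε > 0, ∃ t : Set X, TotallyBounded t ∧ ∀ s ∈ A, ∃ y ∈ t, dist s y < ε) :
    TotallyBounded A := by
  rw [Metric.totallyBounded_iff]
  intro ε hε
  obtain ⟨t, ht, hA⟩ := h (ε / 2) (by linarith)
  obtain ⟨c, hc, htc⟩ := Metric.totallyBounded_iff.1 ht (ε / 2) (by linarith)
  refine ⟨c, hc, fun s hs => ?_⟩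
  obtain ⟨y, hy, hsy⟩ := hA s hs
  have := htc hy
  simp only [mem_iUnion, Metric.mem_ball, exists_prop] at this ⊢
  obtain ⟨z, hz, hyz⟩ := this
  exact ⟨z, hz, by linarith [dist_triangle s y z]⟩

lemma aux_hb {𝕜 : Type*} [RCLike 𝕜] {X : Type*} [NormedAddCommGroup X] [NormedSpace 𝕜 X]
    (N : Submodule 𝕜 X) (hN : IsClosed (N : Set X)) (x : X)
    (h : ∀ f : X →L[𝕜] 𝕜, (∀ y ∈ N, f y = 0) → f x = 0) : x ∈ N := by
  have := hN
  by_contra hx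
  have hne : (Submodule.Quotient.mk x : X ⧸ N) ≠ 0 := by
    rwa [Ne, Submodule.Quotient.mk_eq_zero]
  obtain ⟨f, hf⟩ := SeparatingDual.exists_ne_zero (R := 𝕜) hne
  apply hf
  refine h (f.comp N.mkQL) fun y hy => ?_
  have : (Submodule.Quotient.mk y : X ⧸ N) = 0 := by
    rwa [Submodule.Quotient.mk_eq_zero]
  change f (Submodule.Quotient.mk y : X ⧸ N) = 0
  rw [this, map_zero]

section
variable {𝕜 : Type*} [RCLike 𝕜] {X : Type*} [NormedAddCommGroup X] [NormedSpace 𝕜 X]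

/-- vectors with totally bounded orbit -/
def apSub [CompleteSpace X] (T : X →L[𝕜] X) : Submodule 𝕜 X where
  carrier := {x | TotallyBounded (range fun n : ℕ => (T ^ n) x)}
  zero_mem' := by
    have : (range fun n : ℕ => (T ^ n) (0 : X)) ⊆ {0} := by
      rintro _ ⟨n, rfl⟩; simp
    exact (totallyBounded_singleton _).subset this
  add_mem' := by
    intro a b ha hb
    have h := ((ha.closure.isCompact_of_isClosed isClosed_closure).prod
      (hb.closure.isCompact_of_isClosed isClosed_closure)).image continuous_add
    refine h.totallyBounded.subset ?_
    rintro _ ⟨n, rfl⟩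
    exact ⟨((T ^ n) a, (T ^ n) b), ⟨subset_closure ⟨n, rfl⟩, subset_closure ⟨n, rfl⟩⟩,
      by simp⟩
  smul_mem' := by
    intro c a ha
    refine (ha.image (f := fun y => c • y) (uniformContinuous_const_smul c)).subset ?_
    rintro _ ⟨n, rfl⟩
    exact ⟨(T ^ n) a, ⟨n, rfl⟩, by simp⟩

lemma mem_apSub [CompleteSpace X] (T : X →L[𝕜] X) (x : X) :
    x ∈ apSub T ↔ TotallyBounded (range fun n : ℕ => (T ^ n) x) := Iff.rfl

lemma isClosed_apSub [CompleteSpace X] (T : X →L[𝕜] X) (M : ℝ) (hM : ∀ n : ℕ, ‖T ^ n‖ ≤ M) :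
    IsClosed (apSub T : Set X) := by
  refine isClosed_of_closure_subset fun x hx => ?_
  refine aux_tb _ fun ε hε => ?_
  have hM0 : 0 ≤ M := (norm_nonneg _).trans (hM 0)
  obtain ⟨y, hy, hxy⟩ := Metric.mem_closure_iff.1 hx (ε / (M + 1)) (by positivity)
  refine ⟨_, hy, ?_⟩
  rintro _ ⟨n, rfl⟩
  refine ⟨_, ⟨n, rfl⟩, ?_⟩
  rw [dist_eq_norm] at hxy ⊢
  simp only
  rw [← map_sub]
  calc ‖(T ^ n) (x - y)‖ ≤ ‖T ^ n‖ * ‖x - y‖ := (T ^ n).le_opNorm _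
    _ ≤ M * ‖x - y‖ := by gcongr; exact hM n
    _ ≤ (M + 1) * ‖x - y‖ := by gcongr; linarith
    _ < (M + 1) * (ε / (M + 1)) := by gcongr
    _ = ε := by field_simp

lemma range_apSub [CompleteSpace X] (T Q : X →L[𝕜] X) (hQ : IsCompactOperator Q)
    (hc : Commute T Q)
    (M : ℝ) (hM : ∀ n : ℕ, ‖T ^ n‖ ≤ M) (x : X) : Q x ∈ apSub T := by
  have hM0 : 0 ≤ M := (norm_nonneg _).trans (hM 0)
  have h := hQ.isCompact_closure_image_closedBall (𝕜₁ := 𝕜) (M * ‖x‖)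
  refine h.totallyBounded.subset ?_
  rintro _ ⟨n, rfl⟩
  refine subset_closure ⟨(T ^ n) x, ?_, ?_⟩
  · rw [mem_closedBall_zero_iff]
    exact ((T ^ n).le_opNorm _).trans (by gcongr; exact hM n)
  · have := (hc.pow_left n).eq
    exact (congrArg (fun A : X →L[𝕜] X => A x) this).symm

lemma small_apSub [CompleteSpace X] (α : 𝕜) (S T : X →L[𝕜] X)
    (hT : T = α • (1 : X →L[𝕜] X) + S) (hα : ‖α‖ < 1)
    (M : ℝ) (hM : ∀ n : ℕ, ‖T ^ n‖ ≤ M) (y : X) (hy : S y ∈ apSub T) : y ∈ apSub T := by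
  have hM0 : 0 ≤ M := (norm_nonneg _).trans (hM 0)
  rw [mem_apSub] at hy ⊢
  refine aux_tb _ fun ε hε => ?_
  obtain ⟨m, hm⟩ := exists_pow_lt_of_lt_one (show 0 < ε / (M * ‖y‖ + 1) by positivity) hα
  have hcomm : Commute T (α • (1 : X →L[𝕜] X)) := (Commute.one_right T).smul_right α
  obtain ⟨P, hP1, hP2⟩ : ∃ P : X →L[𝕜] X, P * S = T ^ m - (α • (1 : X →L[𝕜] X)) ^ m ∧
      Commute T P := by
    refine ⟨∑ i ∈ Finset.range m, T ^ i * (α • (1 : X →L[𝕜] X)) ^ (m - 1 - i), ?_, ?_⟩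
    · rw [← hcomm.geom_sum₂_mul, hT]
      simp
    · refine Commute.sum_right _ _ _ fun i _ => ?_
      exact ((Commute.refl T).pow_right i).mul_right (hcomm.pow_right _)
  refine ⟨_, ((Set.finite_Iio m).image fun n => (T ^ n) y).totallyBounded.union
    (hy.image P.uniformContinuous), ?_⟩
  rintro _ ⟨n, rfl⟩
  by_cases hn : n < m
  · exact ⟨(T ^ n) y, Or.inl ⟨n, hn, rfl⟩, by simpa using hε⟩
  · obtain ⟨l, rfl⟩ := Nat.exists_eq_add_of_le (not_lt.1 hn)
    refine ⟨P ((T ^ l) (S y)), Or.inr ⟨_, ⟨l, rfl⟩, rfl⟩, ?_⟩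
    have e1 : P ((T ^ l) (S y)) = (T ^ l) ((P * S) y) :=
      (congrArg (fun A : X →L[𝕜] X => A (S y)) (hP2.pow_left l).eq).symm
    have e2 : (T ^ (m + l)) y = (T ^ l) ((T ^ m) y) := by
      rw [add_comm, pow_add]; rfl
    have e3 : ((α • (1 : X →L[𝕜] X)) ^ m) y = α ^ m • y := by
      rw [smul_pow, one_pow]; rfl
    simp only
    rw [e1, e2, hP1, dist_eq_norm, ← map_sub, sub_apply, sub_sub_cancel,
      e3, map_smul, norm_smul, norm_pow]
    calc ‖α‖ ^ m * ‖(T ^ l) y‖ ≤ ‖α‖ ^ m * (M * ‖y‖) := by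
          gcongr
          exact ((T ^ l).le_opNorm _).trans (by gcongr; exact hM l)
      _ ≤ ‖α‖ ^ m * (M * ‖y‖ + 1) := by gcongr; linarith
      _ < ε / (M * ‖y‖ + 1) * (M * ‖y‖ + 1) := by gcongr
      _ = ε := by field_simp

lemma fun_zero (α : 𝕜) (S T : X →L[𝕜] X)
    (hT : T = α • (1 : X →L[𝕜] X) + S) (f : X →L[𝕜] 𝕜) (hf : ∀ x, f (S x) = 0)
    (n : ℕ) (x : X) : f ((T ^ n) x) = α ^ n * f x := by
  induction n with
  | zero => simp
  | succ n ih =>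
    have : (T ^ (n + 1)) x = α • (T ^ n) x + S ((T ^ n) x) := by
      rw [pow_succ']
      change T ((T ^ n) x) = _
      exact (congrArg (fun A : X →L[𝕜] X => A ((T ^ n) x)) hT).trans rfl
    rw [this, map_add, hf, map_smul, ih, smul_eq_mul, pow_succ]
    ring

lemma fun_one (α : 𝕜) (S T : X →L[𝕜] X)
    (hT : T = α • (1 : X →L[𝕜] X) + S) (f : X →L[𝕜] 𝕜) (hf : ∀ x, f (S (S x)) = 0)
    (n : ℕ) (x : X) : α * f ((T ^ n) x) = α ^ (n + 1) * f x + n * α ^ n * f (S x) := by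
  induction n with
  | zero => simp
  | succ n ih =>
    have : (T ^ (n + 1)) x = α • (T ^ n) x + S ((T ^ n) x) := by
      rw [pow_succ']
      change T ((T ^ n) x) = _
      exact (congrArg (fun A : X →L[𝕜] X => A ((T ^ n) x)) hT).trans rfl
    have h2 := fun_zero α S T hT (f.comp S) (fun x => hf x) n x
    simp only [ContinuousLinearMap.comp_apply] at h2
    rw [this, map_add, h2, map_smul, smul_eq_mul, mul_add, ih]
    push_cast
    ring

lemma kill_big (α : 𝕜) (S T : X →L[𝕜] X)
    (hT : T = α • (1 : X →L[𝕜] X) + S) (hα : 1 < ‖α‖)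
    (M : ℝ) (hM : ∀ n : ℕ, ‖T ^ n‖ ≤ M)
    (f : X →L[𝕜] 𝕜) (hf : ∀ x, f (S x) = 0) (x : X) : f x = 0 := by
  by_contra hne
  have hpos : 0 < ‖f x‖ := norm_pos_iff.2 hne
  obtain ⟨n, hn⟩ := pow_unbounded_of_one_lt (‖f‖ * (M * ‖x‖) / ‖f x‖) hα
  have h1 : ‖f ((T ^ n) x)‖ ≤ ‖f‖ * (M * ‖x‖) := by
    refine (f.le_opNorm _).trans ?_
    gcongr
    exact ((T ^ n).le_opNorm _).trans (by gcongr; exact hM n)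
  rw [fun_zero α S T hT f hf, norm_mul, norm_pow] at h1
  rw [div_lt_iff₀ hpos] at hn
  linarith

lemma kill_one (α : 𝕜) (S T : X →L[𝕜] X)
    (hT : T = α • (1 : X →L[𝕜] X) + S) (hα : ‖α‖ = 1)
    (M : ℝ) (hM : ∀ n : ℕ, ‖T ^ n‖ ≤ M)
    (f : X →L[𝕜] 𝕜) (hf : ∀ x, f (S (S x)) = 0) (x : X) : f (S x) = 0 := by
  by_contra hne
  have hpos : 0 < ‖f (S x)‖ := norm_pos_iff.2 hne
  obtain ⟨n, hn⟩ := exists_nat_gt ((‖f‖ * (M * ‖x‖) + ‖f x‖) / ‖f (S x)‖)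
  have h1 : ‖f ((T ^ n) x)‖ ≤ ‖f‖ * (M * ‖x‖) := by
    refine (f.le_opNorm _).trans ?_
    gcongr
    exact ((T ^ n).le_opNorm _).trans (by gcongr; exact hM n)
  have h2 := fun_one α S T hT f hf n x
  have h3 : (n : 𝕜) * α ^ n * f (S x) = α * f ((T ^ n) x) - α ^ (n + 1) * f x := by
    rw [h2]; ring
  have h4 : (n : ℝ) * ‖f (S x)‖ ≤ ‖f ((T ^ n) x)‖ + ‖f x‖ := by
    have := norm_sub_le (α * f ((T ^ n) x)) (α ^ (n + 1) * f x)
    rw [← h3] at this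
    simpa [hα] using this
  rw [div_lt_iff₀ hpos] at hn
  linarith

lemma pow_bdd [CompleteSpace X] (T : X →L[𝕜] X)
    (hwap : ∀ x : X, IsCompact (closure
      (toWeakSpace 𝕜 X '' Set.range (fun n : ℕ => (T ^ n) x)))) :
    ∃ M, ∀ n : ℕ, ‖T ^ n‖ ≤ M := by
  refine banach_steinhaus fun x => ?_
  refine aux_bdd (𝕜 := 𝕜) _ fun f => ?_
  have hf : Continuous (fun y : WeakSpace 𝕜 X => f ((toWeakSpace 𝕜 X).symm y)) :=
    WeakBilin.eval_continuous (topDualPairing 𝕜 X).flip f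
  obtain ⟨C, hC⟩ := ((hwap x).image hf).isBounded.exists_norm_le
  refine ⟨C, fun n => hC _ ⟨toWeakSpace 𝕜 X ((T ^ n) x), subset_closure ⟨_, ⟨n, rfl⟩, rfl⟩, ?_⟩⟩
  simp

lemma weak_mean [CompleteSpace X] (K : Set (WeakSpace 𝕜 X)) (hK : IsCompact K)
    (u : ℕ → X) (hu : ∀ n, toWeakSpace 𝕜 X (u n) ∈ K) :
    ∃ p : X, ∀ (f : X →L[𝕜] 𝕜) (c : 𝕜),
      Tendsto (fun n : ℕ => ((n : 𝕜) + 1)⁻¹ * ∑ i ∈ Finset.range (n + 1), f (u i))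
        atTop (𝓝 c) → f p = c := by
  let _ : NormedSpace ℝ X := NormedSpace.restrictScalars ℝ 𝕜 X
  have hf : ∀ f : X →L[𝕜] 𝕜,
      Continuous (fun y : WeakSpace 𝕜 X => f ((toWeakSpace 𝕜 X).symm y)) := fun f =>
    WeakBilin.eval_continuous (topDualPairing 𝕜 X).flip f
  have : T2Space (WeakSpace 𝕜 X) :=
    (NormedSpace.isEmbedding_inclusionInDoubleDualWeak 𝕜 X).t2Space
  let N : Submodule 𝕜 X := Submodule.span 𝕜 (range u)
  have hconv : Convex ℝ (N : Set X) := (N.restrictScalars ℝ).convex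
  have hcl : IsClosed (toWeakSpace 𝕜 X '' closure (N : Set X)) := by
    rw [hconv.toWeakSpace_closure 𝕜]
    exact isClosed_closure
  let K' : Set (WeakSpace 𝕜 X) := K ∩ toWeakSpace 𝕜 X '' closure (N : Set X)
  have hK' : IsCompact K' := hK.inter_right hcl
  have : CompactSpace K' := isCompact_iff_compactSpace.1 hK'
  refine aux_mean (K := K') (fun k => (toWeakSpace 𝕜 X).symm k.1)
    (fun f => (hf f).comp continuous_subtype_val) ?_
    (fun n => ⟨toWeakSpace 𝕜 X (u n), hu n, _,
      subset_closure (Submodule.subset_span ⟨n, rfl⟩), rfl⟩)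
  have hs : TopologicalSpace.IsSeparable (closure (N : Set X)) :=
    ((countable_range u).isSeparable.span (R := 𝕜)).closure
  refine hs.mono ?_
  rintro _ ⟨⟨k, hk, y, hy, rfl⟩, rfl⟩
  simpa using hy

lemma one_case [CompleteSpace X] (α : 𝕜) (S T : X →L[𝕜] X)
    (hT : T = α • (1 : X →L[𝕜] X) + S) (hα : ‖α‖ = 1)
    (hwap : ∀ x : X, IsCompact (closure
      (toWeakSpace 𝕜 X '' Set.range (fun n : ℕ => (T ^ n) x))))
    (f : X →L[𝕜] 𝕜) (hf : ∀ x, f (S x) = 0) (hf' : ∀ x ∈ apSub T, f x = 0) (x : X) :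
    f x = 0 := by
  have hα0 : α ≠ 0 := by rintro rfl; simp at hα
  let u : ℕ → X := fun n => (α⁻¹) ^ n • (T ^ n) x
  have hK := ((isCompact_closedBall (0 : 𝕜) 1).prod (hwap x)).image
    (continuous_smul (M := 𝕜) (X := WeakSpace 𝕜 X))
  have hu : ∀ n, toWeakSpace 𝕜 X (u n) ∈ (fun p : 𝕜 × WeakSpace 𝕜 X => p.1 • p.2) ''
      (Metric.closedBall (0 : 𝕜) 1 ×ˢ closure
      (toWeakSpace 𝕜 X '' Set.range (fun n : ℕ => (T ^ n) x))) := fun n =>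
    ⟨((α⁻¹) ^ n, toWeakSpace 𝕜 X ((T ^ n) x)),
      ⟨by simp [hα], subset_closure ⟨_, ⟨n, rfl⟩, rfl⟩⟩, by simp [u]⟩
  obtain ⟨p, hp⟩ := weak_mean _ hK u hu
  obtain ⟨C, hC⟩ := aux_bdd (𝕜 := 𝕜) u fun h => by
    have hh : Continuous (fun y : WeakSpace 𝕜 X => h ((toWeakSpace 𝕜 X).symm y)) :=
      WeakBilin.eval_continuous (topDualPairing 𝕜 X).flip h
    obtain ⟨C, hC⟩ := (hK.image hh).isBounded.exists_norm_le
    exact ⟨C, fun n => hC _ ⟨_, hu n, by simp⟩⟩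
  have hSu : ∀ n, S (u n) = α • (u (n + 1) - u n) := by
    intro n
    have h1 : (T ^ (n + 1)) x = α • (T ^ n) x + S ((T ^ n) x) := by
      rw [pow_succ']
      change T ((T ^ n) x) = _
      exact (congrArg (fun A : X →L[𝕜] X => A ((T ^ n) x)) hT).trans rfl
    simp only [u, h1, map_smul, smul_sub, smul_add, smul_smul]
    have e1 : α * (α⁻¹ ^ (n + 1) * α) = α * α⁻¹ ^ n := by
      rw [pow_succ]; field_simp
    have e2 : α * α⁻¹ ^ (n + 1) = α⁻¹ ^ n := by
      rw [pow_succ]; field_simp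
    rw [e1, e2]
    abel
  have hSp : S p = 0 := by
    rw [SeparatingDual.eq_zero_iff_forall_dual_eq_zero (R := 𝕜)]
    intro h
    refine hp (h.comp S) 0 ?_
    have hsum : ∀ n : ℕ, ∑ i ∈ Finset.range (n + 1), (h.comp S) (u i)
        = α * (h (u (n + 1)) - h (u 0)) := by
      intro n
      rw [← Finset.sum_range_sub (fun i => h (u i)), Finset.mul_sum]
      refine Finset.sum_congr rfl fun i _ => ?_
      simp [hSu]
    simp_rw [hsum]
    have hlim : Tendsto (fun n : ℕ => ((n : ℝ) + 1)⁻¹ * (‖h‖ * C + ‖h‖ * C)) atTop (𝓝 0) := by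
      have := (tendsto_one_div_add_atTop_nhds_zero_nat (𝕜 := ℝ)).mul_const (‖h‖ * C + ‖h‖ * C)
      simpa using this
    refine squeeze_zero_norm (fun n => ?_) hlim
    have hb : ∀ i, ‖h (u i)‖ ≤ ‖h‖ * C := fun i =>
      (h.le_opNorm _).trans (by gcongr; exact hC i)
    have hn : ‖((n : 𝕜) + 1)⁻¹‖ = ((n : ℝ) + 1)⁻¹ := by
      rw [norm_inv]
      congr 1
      exact_mod_cast RCLike.norm_natCast (K := 𝕜) (n + 1)
    rw [norm_mul, norm_mul, hα, one_mul, hn]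
    gcongr
    exact (norm_sub_le _ _).trans (add_le_add (hb _) (hb _))
  have hTp : ∀ n : ℕ, (T ^ n) p = α ^ n • p := by
    intro n
    induction n with
    | zero => simp
    | succ n ih =>
      rw [pow_succ']
      change T ((T ^ n) p) = _
      rw [ih, map_smul, hT]
      simp [hSp, smul_smul, pow_succ]
  have hpA : p ∈ apSub T := by
    rw [mem_apSub]
    refine ((isCompact_closedBall (0 : 𝕜) 1).image
      (f := fun c : 𝕜 => c • p) (by fun_prop)).totallyBounded.subset ?_
    rintro _ ⟨n, rfl⟩
    exact ⟨α ^ n, by simp [hα], (hTp n).symm⟩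
  have hfx : f p = f x := by
    refine hp f _ (tendsto_const_nhds.congr fun n => ?_)
    have : ∀ i, f (u i) = f x := by
      intro i
      simp only [u, map_smul, fun_zero α S T hT f hf, smul_eq_mul]
      rw [← mul_assoc, ← mul_pow, inv_mul_cancel₀ hα0, one_pow, one_mul]
    have hn : (n : 𝕜) + 1 ≠ 0 := by exact_mod_cast Nat.succ_ne_zero n
    simp only [this, Finset.sum_const, Finset.card_range, nsmul_eq_mul]
    push_cast
    field_simp
  rw [← hfx, hf' p hpA]

end


/-- Let `X` be a Banach space over `𝕜` (`ℝ` or `ℂ`) and let `T = α·I + S`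
be weakly almost periodic with `S^k` compact for some `k ≥ 1`. Then `T` is almost periodic:
every orbit `{Tⁿ x : n ≥ 0}` is relatively compact in the norm topology. -/
theorem almostPeriodic_of_weaklyAlmostPeriodic_scalar_plus_compact_power
    {𝕜 : Type*} [RCLike 𝕜] {X : Type*} [NormedAddCommGroup X] [NormedSpace 𝕜 X]
    [CompleteSpace X]
    (α : 𝕜) (S : X →L[𝕜] X) (k : ℕ) (hk : 1 ≤ k)
    (hS : IsCompactOperator (S ^ k : X →L[𝕜] X))
    (T : X →L[𝕜] X) (hT : T = α • (1 : X →L[𝕜] X) + S)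
    (hwap : ∀ x : X, IsCompact (closure
      (toWeakSpace 𝕜 X '' Set.range (fun n : ℕ => (T ^ n) x)))) :
    ∀ x : X, IsCompact (closure (Set.range (fun n : ℕ => (T ^ n) x))) := by
  obtain ⟨M, hM⟩ := pow_bdd T hwap
  have hTS : Commute T S := by
    rw [hT]
    exact (((Commute.one_left S).smul_left α)).add_left (Commute.refl S)
  have hSk : ∀ x, (S ^ k) x ∈ apSub T := fun x =>
    range_apSub T (S ^ k) hS (hTS.pow_right k) M hM x
  have hcl := isClosed_apSub T M hM
  suffices H : ∀ x, x ∈ apSub T from fun x =>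
    (TotallyBounded.closure (H x)).isCompact_of_isClosed isClosed_closure
  have hpow : ∀ (j : ℕ) (x : X), (S ^ (j + 1)) x = S ((S ^ j) x) := fun j x => by
    rw [pow_succ']; rfl
  have hpow' : ∀ (j : ℕ) (x : X), (S ^ (j + 1)) x = (S ^ j) (S x) := fun j x => by
    rw [pow_succ]; rfl
  rcases lt_trichotomy ‖α‖ 1 with hα | hα | hα
  · clear hS hk
    induction k with
    | zero => simpa using hSk
    | succ j ih =>
      refine ih fun x => small_apSub α S T hT hα M hM _ ?_
      rw [← hpow]
      exact hSk x
  · intro x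
    refine aux_hb _ hcl x fun f hf => ?_
    refine one_case α S T hT hα hwap f ?_ hf x
    have h0 : ∀ x, f ((S ^ k) x) = 0 := fun x => hf _ (hSk x)
    clear hS hSk
    induction k, hk using Nat.le_induction with
    | base => simpa using h0
    | succ j hj ih =>
      refine ih fun x => ?_
      obtain ⟨i, rfl⟩ := Nat.exists_eq_add_of_le' hj
      rw [hpow']
      refine kill_one α S T hT hα M hM (f.comp (S ^ i)) (fun z => ?_) x
      have := h0 z
      rwa [hpow', hpow'] at this
  · intro x
    refine aux_hb _ hcl x fun f hf => ?_
    have h0 : ∀ x, f ((S ^ k) x) = 0 := fun x => hf _ (hSk x)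
    clear hS hSk hk
    induction k with
    | zero => simpa using h0 x
    | succ j ih =>
      refine ih fun x => ?_
      refine kill_big α S T hT hα M hM (f.comp (S ^ j)) (fun z => ?_) x
      have := h0 z
      rwa [hpow'] at this
end

section
/- Let X be a Banach space over 𝕜 (𝕜 = ℝ or ℂ), and let T be a weakly almost periodic operator on X of the form T = α·I + S with α ∈ 𝕜 and S^k compact for some k ≥ 1. Suppose that inf_{n ≥ 0} ‖Tⁿ x‖ > 0 for every x ≠ 0. Then T is invertible (bijective with bounded inverse), the inverse T⁻¹ is power-bounded (sup_{n ≥ 0} ‖T⁻ⁿ‖ < ∞), and T⁻¹ is almost periodic. -/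
open Set Filter Topology

/-- Pointwise closure of the iterates of a map. -/
def orbSG {W : Type*} [TopologicalSpace W] (L : W → W) : Set (W → W) :=
  closure (Set.range (fun n : ℕ => L^[n]))

lemma orbSG_iter_mem {W : Type*} [TopologicalSpace W] (L : W → W) (n : ℕ) :
    L^[n] ∈ orbSG L := subset_closure ⟨n, rfl⟩

lemma orbSG_iter_comp {W : Type*} [TopologicalSpace W] {L : W → W} (hL : Continuous L)
    (n : ℕ) {g : W → W} (hg : g ∈ orbSG L) : L^[n] ∘ g ∈ orbSG L := by
  have hc : Continuous (fun g : W → W => L^[n] ∘ g) :=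
    continuous_pi fun w => (hL.iterate n).comp (continuous_apply w)
  refine map_mem_closure hc hg ?_
  rintro _ ⟨m, rfl⟩
  exact ⟨n + m, by simp only [Function.iterate_add]⟩

lemma orbSG_comp {W : Type*} [TopologicalSpace W] {L : W → W} (hL : Continuous L)
    {f g : W → W} (hf : f ∈ orbSG L) (hg : g ∈ orbSG L) : f ∘ g ∈ orbSG L := by
  have hc : Continuous (fun f : W → W => f ∘ g) :=
    continuous_pi fun w => continuous_apply (g w)
  have : f ∘ g ∈ closure (orbSG L) := by
    refine map_mem_closure (f := fun f : W → W => f ∘ g) hc hf ?_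
    rintro _ ⟨m, rfl⟩
    exact orbSG_iter_comp hL m hg
  rwa [orbSG, closure_closure] at this

lemma orbSG_apply {W : Type*} [TopologicalSpace W] {L : W → W}
    {f : W → W} (hf : f ∈ orbSG L) (w : W) :
    f w ∈ closure (Set.range (fun n : ℕ => L^[n] w)) := by
  refine map_mem_closure (f := fun f : W → W => f w) (continuous_apply w) hf ?_
  rintro _ ⟨m, rfl⟩
  exact ⟨m, rfl⟩

lemma orbSG_compact {W : Type*} [TopologicalSpace W] {L : W → W}
    (hc : ∀ w, IsCompact (closure (Set.range (fun n : ℕ => L^[n] w)))) :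
    IsCompact (orbSG L) :=
  (isCompact_univ_pi hc).of_isClosed_subset isClosed_closure
    fun _ hf w _ => orbSG_apply hf w

lemma orbSG_left_inv {W : Type*} [TopologicalSpace W] [T2Space W] {L : W → W} (hL : Continuous L)
    (hc : ∀ w, IsCompact (closure (Set.range (fun n : ℕ => L^[n] w))))
    (hid : ∀ p ∈ orbSG L, p ∘ p = p → p = id) {f : W → W} (hf : f ∈ orbSG L) :
    ∃ g ∈ orbSG L, g ∘ f = id := by
  have hcf : ∀ r : W → W, Continuous (fun h : W → W => h ∘ r) := fun r =>
    continuous_pi fun w => continuous_apply (r w)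
  let _ : Semigroup (W → W) :=
    { mul := fun a b => a ∘ b
      mul_assoc := fun _ _ _ => rfl }
  obtain ⟨p, ⟨g, hg, rfl⟩, hp⟩ := exists_idempotent_in_compact_subsemigroup (M := W → W)
    hcf ((fun h => h ∘ f) '' orbSG L) ⟨_, f, hf, rfl⟩
    ((orbSG_compact hc).image (hcf f)) (by
      rintro _ ⟨a, ha, rfl⟩ _ ⟨b, hb, rfl⟩
      exact ⟨a ∘ f ∘ b, orbSG_comp hL ha (orbSG_comp hL hf hb), rfl⟩)
  exact ⟨g, hg, hid _ (orbSG_comp hL hg hf) hp⟩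

section weak
variable {𝕜 : Type*} [RCLike 𝕜] {X : Type*} [NormedAddCommGroup X] [NormedSpace 𝕜 X]

lemma wk_cont (φ : StrongDual 𝕜 X) :
    Continuous (fun w : WeakSpace 𝕜 X => φ ((toWeakSpace 𝕜 X).symm w)) :=
  WeakBilin.eval_continuous (topDualPairing 𝕜 X).flip φ

lemma wk_ball_closed (z : X) (r : ℝ) (hr : 0 ≤ r) :
    IsClosed {w : WeakSpace 𝕜 X | ‖(toWeakSpace 𝕜 X).symm w - z‖ ≤ r} := by
  have : {w : WeakSpace 𝕜 X | ‖(toWeakSpace 𝕜 X).symm w - z‖ ≤ r} =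
      ⋂ φ : StrongDual 𝕜 X, {w | ‖φ ((toWeakSpace 𝕜 X).symm w) - φ z‖ ≤ r * ‖φ‖} := by
    ext w
    simp only [mem_ofPred_eq, mem_iInter]
    constructor
    · intro h φ
      rw [← map_sub]
      refine (φ.le_opNorm _).trans ?_
      rw [mul_comm]
      gcongr
    · intro h
      refine NormedSpace.norm_le_dual_bound 𝕜 _ hr fun φ => ?_
      rw [map_sub]
      exact h φ
  rw [this]
  exact isClosed_iInter fun φ => isClosed_le ((wk_cont φ).sub continuous_const).norm
    continuous_const

lemma map_iter (T : X →L[𝕜] X) (n : ℕ) (w : WeakSpace 𝕜 X) :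
    (WeakSpace.map T)^[n] w = toWeakSpace 𝕜 X ((T ^ n) ((toWeakSpace 𝕜 X).symm w)) := by
  induction n with
  | zero => rfl
  | succ n ih =>
    rw [Function.iterate_succ_apply', ih, pow_succ']
    rfl

lemma power_bdd [CompleteSpace X] (T : X →L[𝕜] X)
    (hwap : ∀ x : X, IsCompact (closure
      (toWeakSpace 𝕜 X '' Set.range (fun n : ℕ => (T ^ n) x)))) :
    ∃ C : ℝ, ∀ n : ℕ, ‖T ^ n‖ ≤ C := by
  apply banach_steinhaus
  intro x
  obtain ⟨C, hC⟩ := banach_steinhaus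
    (g := fun n : ℕ => NormedSpace.inclusionInDoubleDual 𝕜 X ((T ^ n) x)) (by
      intro φ
      obtain ⟨C, hC⟩ := ((hwap x).image (wk_cont φ)).isBounded.exists_norm_le
      refine ⟨C, fun n => hC _ ⟨toWeakSpace 𝕜 X ((T ^ n) x), subset_closure ⟨_, ⟨n, rfl⟩, rfl⟩, ?_⟩⟩
      simp)
  refine ⟨C, fun n => ?_⟩
  have := hC n
  exact ((NormedSpace.inclusionInDoubleDualLi 𝕜 (E := X)).norm_map _).symm.le.trans this

/-- zero lies in the weak closure of the orbit -/
def wkZero (T : X →L[𝕜] X) (x : X) : Prop :=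
  (0 : WeakSpace 𝕜 X) ∈ closure (toWeakSpace 𝕜 X '' Set.range (fun n : ℕ => (T ^ n) x))

lemma wkZero_map {T S : X →L[𝕜] X} (h : Commute S T) {x : X} (hx : wkZero T x) :
    wkZero T (S x) := by
  have h0 : WeakSpace.map S (0 : WeakSpace 𝕜 X) = 0 := map_zero _
  unfold wkZero
  rw [← h0]
  refine map_mem_closure (WeakSpace.map S).continuous hx ?_
  rintro _ ⟨_, ⟨n, rfl⟩, rfl⟩
  refine ⟨_, ⟨n, rfl⟩, ?_⟩
  have := congrArg (fun A : X →L[𝕜] X => A x) (h.pow_right n).eq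
  exact congrArg (toWeakSpace 𝕜 X) this.symm

lemma hinf_ne {T : X →L[𝕜] X} {x : X} (hinf : x ≠ 0 → 0 < ⨅ n : ℕ, ‖(T ^ n) x‖)
    (h : ∀ ε > 0, ∃ n : ℕ, ‖(T ^ n) x‖ < ε) : x = 0 := by
  by_contra hx
  obtain ⟨n, hn⟩ := h _ (hinf hx)
  exact absurd (ciInf_le ⟨0, by rintro _ ⟨n, rfl⟩; exact norm_nonneg _⟩ n) (not_le.2 hn)

lemma wkZero_eigen {T : X →L[𝕜] X} (hinf : ∀ x : X, x ≠ 0 → 0 < ⨅ n : ℕ, ‖(T ^ n) x‖)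
    {α : 𝕜} {x : X} (hx : T x = α • x) (h : wkZero T x) : x = 0 := by
  by_contra hne
  have hT : ∀ n : ℕ, (T ^ n) x = α ^ n • x := by
    intro n
    induction n with
    | zero => simp
    | succ n ih => rw [pow_succ', mul_apply_eq_comp, ih, map_smul, hx, smul_smul,
        pow_succ]
  obtain ⟨φ, hφ⟩ := SeparatingDual.exists_ne_zero (R := 𝕜) hne
  apply hne
  refine hinf_ne (hinf x) fun ε hε => ?_
  have hn : 0 < ‖x‖ := norm_pos_iff.2 hne
  have hp : 0 < ‖φ x‖ := norm_pos_iff.2 hφ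
  have := map_mem_closure (wk_cont φ) h (t := Set.range fun n : ℕ => φ ((T ^ n) x)) (by
    rintro _ ⟨_, ⟨n, rfl⟩, rfl⟩
    exact ⟨n, by simp⟩)
  rw [map_zero, map_zero, Metric.mem_closure_range_iff] at this
  obtain ⟨n, hn'⟩ := this (ε * ‖φ x‖ / ‖x‖) (by positivity)
  refine ⟨n, ?_⟩
  rw [hT, norm_smul]
  rw [hT, dist_zero_left, map_smul, smul_eq_mul, norm_mul, lt_div_iff₀ hn] at hn'
  nlinarith

lemma wkZero_zero [CompleteSpace X] {α : 𝕜} {S : X →L[𝕜] X} {k : ℕ}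
    (hS : IsCompactOperator (S ^ k : X →L[𝕜] X))
    {T : X →L[𝕜] X} (hT : T = α • (1 : X →L[𝕜] X) + S)
    {C : ℝ} (hC : ∀ n : ℕ, ‖T ^ n‖ ≤ C)
    (hinf : ∀ x : X, x ≠ 0 → 0 < ⨅ n : ℕ, ‖(T ^ n) x‖)
    {x : X} (hx : wkZero T x) : x = 0 := by
  have hcomm : Commute S T := by
    rw [hT]
    exact (((Commute.one_right S).smul_right α)).add_right (Commute.refl S)
  have key : (S ^ k) x = 0 := by
    refine hinf_ne (hinf _) fun ε hε => ?_
    have h1 : IsCompact (closure ((S ^ k) '' Metric.closedBall 0 (C * ‖x‖))) :=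
      hS.isCompact_closure_image_closedBall (f := (S ^ k : X →L[𝕜] X).toLinearMap) _
    have hcl : IsCompact (closure (Set.range fun n : ℕ => (T ^ n) ((S ^ k) x))) := by
      refine h1.of_isClosed_subset isClosed_closure (closure_mono ?_)
      rintro _ ⟨n, rfl⟩
      refine ⟨(T ^ n) x, ?_, ?_⟩
      · rw [mem_closedBall_zero_iff]
        exact ((T ^ n).le_opNorm x).trans (by gcongr; exact hC n)
      · exact congrArg (fun A : X →L[𝕜] X => A x) (hcomm.pow_pow k n).eq
    have h2 := (hcl.image (toWeakSpaceCLM 𝕜 X).continuous).isClosed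
    have h3 : wkZero T ((S ^ k) x) := wkZero_map (hcomm.pow_left k) hx
    obtain ⟨y, hy, hy0⟩ := closure_minimal (by
      rintro _ ⟨y, hy, rfl⟩
      exact ⟨y, subset_closure hy, rfl⟩) h2 h3
    have : y = 0 := (toWeakSpace 𝕜 X).injective (by rw [map_zero]; exact hy0)
    subst this
    rw [Metric.mem_closure_range_iff] at hy
    simpa using hy ε hε
  have step : ∀ j : ℕ, (S ^ j) x = 0 → x = 0 := by
    intro j
    induction j with
    | zero => intro h; simpa using h
    | succ j ih =>
      intro h
      refine ih (wkZero_eigen hinf (α := α) ?_ (wkZero_map (hcomm.pow_left j) hx))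
      rw [pow_succ'] at h
      have h' : S ((S ^ j) x) = 0 := h
      rw [hT]
      rw [add_apply, h', add_zero]
      rfl
  exact step k key

end weak

section weak2
variable {𝕜 : Type*} [RCLike 𝕜] {X : Type*} [NormedAddCommGroup X] [NormedSpace 𝕜 X]

lemma sg_add {T : X →L[𝕜] X} {f : WeakSpace 𝕜 X → WeakSpace 𝕜 X}
    (hf : f ∈ orbSG (WeakSpace.map T)) (v w : WeakSpace 𝕜 X) : f (v + w) = f v + f w := by
  have : IsClosed {f : WeakSpace 𝕜 X → WeakSpace 𝕜 X | f (v + w) = f v + f w} :=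
    isClosed_eq (continuous_apply _) (Continuous.add (continuous_apply v) (continuous_apply w))
  refine closure_minimal ?_ this hf
  rintro _ ⟨n, rfl⟩
  simp only [mem_ofPred_eq, map_iter, map_add]

lemma sg_smul {T : X →L[𝕜] X} {f : WeakSpace 𝕜 X → WeakSpace 𝕜 X}
    (hf : f ∈ orbSG (WeakSpace.map T)) (c : 𝕜) (w : WeakSpace 𝕜 X) : f (c • w) = c • f w := by
  have : IsClosed {f : WeakSpace 𝕜 X → WeakSpace 𝕜 X | f (c • w) = c • f w} :=
    isClosed_eq (continuous_apply _) ((continuous_apply _).const_smul c)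
  refine closure_minimal ?_ this hf
  rintro _ ⟨n, rfl⟩
  simp only [mem_ofPred_eq, map_iter, map_smul]

lemma sg_norm {T : X →L[𝕜] X} {C : ℝ} (hC : ∀ n : ℕ, ‖T ^ n‖ ≤ C)
    {f : WeakSpace 𝕜 X → WeakSpace 𝕜 X}
    (hf : f ∈ orbSG (WeakSpace.map T)) (x : X) :
    ‖(toWeakSpace 𝕜 X).symm (f (toWeakSpace 𝕜 X x))‖ ≤ C * ‖x‖ := by
  have hC0 : 0 ≤ C := (norm_nonneg _).trans (hC 0)
  have := (wk_ball_closed (𝕜 := 𝕜) (0 : X) (C * ‖x‖) (by positivity)).preimage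
    (continuous_apply (A := fun _ : WeakSpace 𝕜 X => WeakSpace 𝕜 X) (toWeakSpace 𝕜 X x))
  have h2 := closure_minimal ?_ this hf
  · simpa using h2
  rintro _ ⟨n, rfl⟩
  simp only [mem_preimage, mem_ofPred_eq, map_iter, sub_zero, LinearEquiv.symm_apply_apply]
  exact ((T ^ n).le_opNorm x).trans (by gcongr; exact hC n)

lemma wk_sep (T : X →L[𝕜] X) (x : X) : ∃ c : Set X, c.Countable ∧
    ∀ w ∈ closure (toWeakSpace 𝕜 X '' Set.range (fun n : ℕ => (T ^ n) x)),
      (toWeakSpace 𝕜 X).symm w ∈ closure c := by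
  letI : NormedSpace ℝ X := NormedSpace.restrictScalars ℝ 𝕜 X
  haveI : IsScalarTower ℝ 𝕜 X := ⟨fun a b c => by
    rw [RCLike.real_smul_eq_coe_mul, mul_smul]; rfl⟩
  have hs : TopologicalSpace.IsSeparable (Set.range (fun n : ℕ => (T ^ n) x)) :=
    (Set.countable_range _).isSeparable
  obtain ⟨c, hc, hsub⟩ := hs.span (R := ℝ)
  refine ⟨c, hc, fun w hw => ?_⟩
  have h1 := Convex.toWeakSpace_closure 𝕜
    (Submodule.span ℝ (Set.range (fun n : ℕ => (T ^ n) x))).convex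
  have h2 := closure_mono (Set.image_mono (f := toWeakSpace 𝕜 X)
    (Submodule.subset_span (R := ℝ) (s := Set.range (fun n : ℕ => (T ^ n) x)))) hw
  rw [← h1] at h2
  obtain ⟨y, hy, rfl⟩ := h2
  rw [LinearEquiv.symm_apply_apply]
  exact closure_minimal hsub isClosed_closure hy

lemma orbit_eq (T : X →L[𝕜] X) (w : WeakSpace 𝕜 X) :
    Set.range (fun n : ℕ => (WeakSpace.map T)^[n] w) =
      toWeakSpace 𝕜 X '' Set.range (fun n : ℕ => (T ^ n) ((toWeakSpace 𝕜 X).symm w)) := by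
  rw [← Set.range_comp]
  congr 1
  ext n
  exact map_iter T n w

end weak2

theorem invertible_of_weaklyAlmostPeriodic_scalar_plus_compact_power
    {𝕜 : Type*} [RCLike 𝕜] {X : Type*} [NormedAddCommGroup X] [NormedSpace 𝕜 X]
    [CompleteSpace X]
    (α : 𝕜) (S : X →L[𝕜] X) (k : ℕ) (hk : 1 ≤ k)
    (hS : IsCompactOperator (S ^ k : X →L[𝕜] X))
    (T : X →L[𝕜] X) (hT : T = α • (1 : X →L[𝕜] X) + S)
    (hwap : ∀ x : X, IsCompact (closure
      (toWeakSpace 𝕜 X '' Set.range (fun n : ℕ => (T ^ n) x))))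
    (hinf : ∀ x : X, x ≠ 0 → 0 < ⨅ n : ℕ, ‖(T ^ n) x‖) :
    ∃ Tinv : X →L[𝕜] X,
      T.comp Tinv = ContinuousLinearMap.id 𝕜 X ∧
      Tinv.comp T = ContinuousLinearMap.id 𝕜 X ∧
      (∃ C : ℝ, ∀ n : ℕ, ‖Tinv ^ n‖ ≤ C) ∧
      (∀ x : X, IsCompact (closure (Set.range (fun n : ℕ => (Tinv ^ n) x)))) := by
  obtain ⟨C, hC⟩ := power_bdd T hwap
  have hC0 : 0 ≤ C := (norm_nonneg _).trans (hC 0)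
  have hL : Continuous (WeakSpace.map T) := (WeakSpace.map T).continuous
  have hc : ∀ w, IsCompact (closure (Set.range (fun n : ℕ => (WeakSpace.map T)^[n] w))) := by
    intro w
    rw [orbit_eq]
    exact hwap _
  have gz : ∀ a b : X, a + (-1 : 𝕜) • b = 0 ↔ a = b := fun a b => by
    rw [neg_one_smul, ← sub_eq_add_neg, sub_eq_zero]
  have hid : ∀ p ∈ orbSG (WeakSpace.map T), p ∘ p = p → p = id := by
    intro p hp hpp
    funext w
    have h1 : p (p w + (-1 : 𝕜) • w) = 0 := by
      rw [sg_add hp, sg_smul hp]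
      have : p (p w) = p w := congrFun hpp w
      rw [this]
      exact (gz _ _).2 rfl
    have h2 := orbSG_apply hp (p w + (-1 : 𝕜) • w)
    rw [h1, orbit_eq] at h2
    have h3 := wkZero_zero hS hT hC hinf h2
    have h4 : p w + (-1 : 𝕜) • w = 0 := (toWeakSpace 𝕜 X).symm.injective (by rw [h3, map_zero])
    exact (gz _ _).1 h4
  have hinv := fun {f} hf => orbSG_left_inv hL hc hid (f := f) hf
  obtain ⟨R, hR, hRL⟩ := hinv (orbSG_iter_mem (WeakSpace.map T) 1)
  obtain ⟨R2, hR2, hR2R⟩ := hinv hR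
  rw [Function.iterate_one] at hRL
  have hLR : WeakSpace.map T ∘ R = id := by
    have : R2 = WeakSpace.map T := by
      calc R2 = R2 ∘ (R ∘ WeakSpace.map T) := by rw [hRL]; rfl
        _ = (R2 ∘ R) ∘ WeakSpace.map T := rfl
        _ = _ := by rw [hR2R]; rfl
    rw [← this, hR2R]
  let e := toWeakSpace 𝕜 X
  let Ti : X →L[𝕜] X := LinearMap.mkContinuous
    { toFun := fun x => e.symm (R (e x))
      map_add' := fun x y => by rw [map_add, sg_add hR, map_add]
      map_smul' := fun c x => by rw [map_smul, sg_smul hR, map_smul]; rfl } C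
    (fun x => sg_norm hC hR x)
  have hTi : ∀ x, Ti x = e.symm (R (e x)) := fun x => rfl
  have hTin : ∀ (n : ℕ) x, (Ti ^ n) x = e.symm (R^[n] (e x)) := by
    intro n x
    induction n with
    | zero => simp
    | succ n ih =>
      rw [pow_succ', mul_apply_eq_comp, ih, hTi, Function.iterate_succ_apply',
        LinearEquiv.apply_symm_apply]
  have hRn : ∀ n : ℕ, R^[n] ∈ orbSG (WeakSpace.map T) := by
    intro n
    induction n with
    | zero => exact orbSG_iter_mem (WeakSpace.map T) 0
    | succ n ih =>
      rw [Function.iterate_succ']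
      exact orbSG_comp hL hR ih
  have hTT : T.comp Ti = ContinuousLinearMap.id 𝕜 X := by
    ext x
    exact congrFun hLR (e x)
  have hTT' : Ti.comp T = ContinuousLinearMap.id 𝕜 X := by
    ext x
    exact congrFun hRL (e x)
  have hbd : ∀ n : ℕ, ‖Ti ^ n‖ ≤ C := fun n =>
    ContinuousLinearMap.opNorm_le_bound _ hC0 fun x => by
      rw [hTin]; exact sg_norm hC (hRn n) x
  have hcancel : ∀ (n : ℕ) x, (Ti ^ n) ((T ^ n) x) = x := by
    intro n x
    have h1 : Ti * T = 1 := hTT'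
    have h2 : T * Ti = 1 := hTT
    have hcm : Commute Ti T := h1.trans h2.symm
    have : Ti ^ n * T ^ n = 1 := by rw [← hcm.mul_pow, h1, one_pow]
    exact congrArg (fun A : X →L[𝕜] X => A x) this
  refine ⟨Ti, hTT, hTT', ⟨C, hbd⟩, fun x => ?_⟩
  let O : Set (WeakSpace 𝕜 X) := (fun f : WeakSpace 𝕜 X → WeakSpace 𝕜 X => f (e x)) ''
    orbSG (WeakSpace.map T)
  have hOc : IsCompact O := (orbSG_compact hc).image (continuous_apply _)
  have hOT : ∀ (n : ℕ), ∀ w ∈ O, (WeakSpace.map T)^[n] w ∈ O := by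
    rintro n _ ⟨f, hf, rfl⟩
    exact ⟨_, orbSG_iter_comp hL n hf, rfl⟩
  have hmin : ∀ w ∈ O, ∀ v ∈ O, v ∈ closure (Set.range (fun n : ℕ => (WeakSpace.map T)^[n] w)) := by
    rintro _ ⟨f, hf, rfl⟩ _ ⟨h, hh, rfl⟩
    obtain ⟨g, hg, hgf⟩ := hinv hf
    have := orbSG_apply (orbSG_comp hL hh hg) (f (e x))
    have h2 : g (f (e x)) = e x := congrFun hgf (e x)
    simpa only [Function.comp_apply, h2] using this
  have hOtb : TotallyBounded (e.symm '' O) := by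
    rw [Metric.totallyBounded_iff]
    intro ε hε
    let δ : ℝ := ε / (2 * (C + 1))
    have hδ : 0 < δ := by positivity
    have hCδ : C * δ < ε := by
      have : (C + 1) * δ = ε / 2 := by simp only [δ]; field_simp
      nlinarith
    obtain ⟨c, hcc, hcl⟩ := wk_sep T x
    have hne : O.Nonempty := ⟨_, _, orbSG_iter_mem (WeakSpace.map T) 0, rfl⟩
    haveI : Nonempty O := hne.to_subtype
    haveI : CompactSpace O := isCompact_iff_compactSpace.mp hOc
    haveI : Countable c := hcc.to_subtype
    obtain ⟨z, y0, hy0⟩ := nonempty_interior_of_iUnion_of_closed (X := O) (ι := c)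
      (f := fun z => Subtype.val ⁻¹' {w : WeakSpace 𝕜 X | ‖e.symm w - z‖ ≤ δ})
      (fun z => (wk_ball_closed (𝕜 := 𝕜) (z : X) δ hδ.le).preimage continuous_subtype_val)
      (by
        refine eq_univ_of_forall fun y => ?_
        obtain ⟨y, f, hf, rfl⟩ := y
        have h1 := orbSG_apply hf (e x)
        rw [orbit_eq] at h1
        have h2 := hcl _ (by simpa only [e, LinearEquiv.symm_apply_apply] using h1)
        obtain ⟨z, hz, hzd⟩ := Metric.mem_closure_iff.1 h2 δ hδ
        rw [mem_iUnion]
        refine ⟨⟨z, hz⟩, ?_⟩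
        rw [dist_eq_norm] at hzd
        exact hzd.le)
    obtain ⟨U, hUsub, hUo, hy0U⟩ := mem_interior.1 hy0
    obtain ⟨V, hV, rfl⟩ := isOpen_induced_iff.1 hUo
    obtain ⟨t, ht⟩ := hOc.elim_finite_subcover (fun n : ℕ => (WeakSpace.map T)^[n] ⁻¹' V)
      (fun n => hV.preimage (hL.iterate n)) (by
        intro w hw
        obtain ⟨_, hv, n, rfl⟩ := mem_closure_iff.1 (hmin w hw y0 y0.2) V hV hy0U
        exact mem_iUnion.2 ⟨n, hv⟩)
    refine ⟨(fun n : ℕ => (Ti ^ n) z) '' (t : Set ℕ), t.finite_toSet.image _, ?_⟩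
    rintro _ ⟨w, hw, rfl⟩
    obtain ⟨n, hn, hwn⟩ := mem_iUnion₂.1 (ht hw)
    refine mem_iUnion₂.2 ⟨_, ⟨n, hn, rfl⟩, ?_⟩
    have h1 : ‖e.symm ((WeakSpace.map T)^[n] w) - z‖ ≤ δ :=
      hUsub (show (⟨_, hOT n w hw⟩ : O) ∈ Subtype.val ⁻¹' V from hwn)
    rw [map_iter, LinearEquiv.symm_apply_apply] at h1
    rw [Metric.mem_ball, dist_eq_norm]
    have h2 : e.symm w - (Ti ^ n) z = (Ti ^ n) ((T ^ n) (e.symm w) - z) := by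
      rw [map_sub, hcancel]
    rw [h2]
    calc _ ≤ ‖Ti ^ n‖ * ‖(T ^ n) (e.symm w) - z‖ := (Ti ^ n).le_opNorm _
      _ ≤ C * δ := by gcongr; exact hbd n
      _ < ε := hCδ
  refine (TotallyBounded.closure (hOtb.subset ?_)).isCompact_of_isClosed isClosed_closure
  rintro _ ⟨n, rfl⟩
  exact ⟨R^[n] (e x), ⟨_, hRn n, rfl⟩, (hTin n x).symm⟩
end
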